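/- arXiv:1103.5873 — 2 statements merged into one kernel-verified Lean document; each statement's English description precedes it below -/
import Mathlib

section
/- Let the setting be type B_N (N ≥ 2). Let (i_t,k_t), 1 ≤ t ≤ T, be a snake with all elements in X′ = {(i,k) ∈ X : i < N, 2i−k ≡ 2 (mod 4)}, and let D be the associated skew diagram, D = {(s,t) : 1 ≤ t ≤ T, t − k_t/4 − (i_t−1)/2 ≤ s ≤ t − k_t/4 + (i_t−1)/2}. Then there is a bijection between the set P̄_{(i_t,k_t)} of non-overlapping tuples of paths and the set of type B skew tableaux of shape D, under which a tuple (p_1,…,p_T) corresponds to a tableau 𝒯 satisfying ∏_{t=1}^T m(p_t) = M(𝒯) in the free abelian group M. -/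
namespace Paper

/-- The ambient setting: type `A N` (with `N ≥ 1`) or type `B N ε`
(with `N ≥ 2` and `0 < ε < 1/2`). -/
inductive Setting where
  | A (N : ℕ)
  | B (N : ℕ) (ε : ℝ)

namespace Setting

/-- The rank `N`. -/
def N : Setting → ℕ
  | A n => n
  | B n _ => n

/-- Validity of the parameters of the setting. -/
def valid : Setting → Prop
  | A n => 1 ≤ n
  | B n ε => 2 ≤ n ∧ 0 < ε ∧ ε < 1 / 2

end Setting

/-- The numbers `r_i` : in type A all equal `1`; in type B, `r_N = 1` and `r_i = 2` for `i < N`. -/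
def rr : Setting → ℕ → ℕ
  | .A _, _ => 1
  | .B n _, j => if j = n then 1 else 2

/-- The set `X` in type `A_N`. -/
def XA (n : ℕ) : Set (ℕ × ℤ) :=
  {ik | 1 ≤ ik.1 ∧ ik.1 ≤ n ∧ ((ik.1 : ℤ) - ik.2) % 2 = 1}

/-- The set `X` in type `B_N`. -/
def XB (n : ℕ) : Set (ℕ × ℤ) :=
  {ik | (ik.1 = n ∧ ik.2 % 2 = 1) ∨ (1 ≤ ik.1 ∧ ik.1 < n ∧ ik.2 % 2 = 0)}

/-- The set `X ⊆ I × ℤ`. -/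
def X : Setting → Set (ℕ × ℤ)
  | .A n => XA n
  | .B n _ => XB n

/-- The set `W = {(i,k) : (i, k - r_i) ∈ X}`. -/
def W (S : Setting) : Set (ℕ × ℤ) :=
  {ik | (ik.1, ik.2 - (rr S ik.1 : ℤ)) ∈ X S}

/-- The `r`-th point of a path (a finite list of points of the plane). -/
def pt (p : List (ℝ × ℝ)) (r : ℕ) : ℝ × ℝ := p.getD r (0, 0)

/-- The set of paths `𝒫_{i,k}` in type `A_N`. -/
def pathsA (n : ℕ) (i : ℕ) (k : ℤ) : Set (List (ℝ × ℝ)) :=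
  {p | p.length = n + 2 ∧
    (∀ r, r < n + 2 → (pt p r).1 = (r : ℝ)) ∧
    (pt p 0).2 = (i : ℝ) + (k : ℝ) ∧
    (pt p (n + 1)).2 = (n : ℝ) + 1 - (i : ℝ) + (k : ℝ) ∧
    (∀ r, r ≤ n → (pt p (r + 1)).2 - (pt p r).2 = 1 ∨ (pt p (r + 1)).2 - (pt p r).2 = -1)}

/-- The set of paths `𝒫_{N,ℓ}` in type `B_N`. -/
def pathsBspin (n : ℕ) (ε : ℝ) (l : ℤ) : Set (List (ℝ × ℝ)) :=
  {p | p.length = n + 1 ∧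
    (if l % 4 = 3 then ∀ r, r < n → (pt p r).1 = 2 * (r : ℝ)
     else ∀ r, r < n → (pt p r).1 = 4 * (n : ℝ) - 2 - 2 * (r : ℝ)) ∧
    (pt p n).1 = 2 * (n : ℝ) - 1 ∧
    (pt p 0).2 = (l : ℝ) + 2 * (n : ℝ) - 1 ∧
    (∀ r, r + 2 ≤ n → (pt p (r + 1)).2 - (pt p r).2 = 2 ∨ (pt p (r + 1)).2 - (pt p r).2 = -2) ∧
    ((pt p n).2 - (pt p (n - 1)).2 = 1 + ε ∨ (pt p n).2 - (pt p (n - 1)).2 = -(1 + ε))}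

/-- The set of paths `𝒫_{i,k}` in type `B_N`. -/
def pathsB (n : ℕ) (ε : ℝ) (i : ℕ) (k : ℤ) : Set (List (ℝ × ℝ)) :=
  if i = n then pathsBspin n ε k
  else {p | ∃ a b : List (ℝ × ℝ),
    a ∈ pathsBspin n ε (k - (2 * (n : ℤ) - 2 * (i : ℤ) - 1)) ∧
    b ∈ pathsBspin n ε (k + (2 * (n : ℤ) - 2 * (i : ℤ) - 1)) ∧
    p = a ++ b.reverse ∧
    (pt a n).1 = (pt b n).1 ∧ 0 < (pt a n).2 - (pt b n).2}

/-- The set of paths `𝒫_{i,k}`. -/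
def P : Setting → ℕ → ℤ → Set (List (ℝ × ℝ))
  | .A n => pathsA n
  | .B n ε => pathsB n ε

/-- The map `ι : X → ℤ × ℤ` of type `B_N`. -/
def iotaB (n : ℕ) (ik : ℕ × ℤ) : ℤ × ℤ :=
  if ik.1 = n then (2 * (n : ℤ) - 1, ik.2)
  else if (2 * (n : ℤ) + ik.2 - 2 * (ik.1 : ℤ)) % 4 = 2 then (2 * (ik.1 : ℤ), ik.2)
  else (4 * (n : ℤ) - 2 - 2 * (ik.1 : ℤ), ik.2)

/-- The corners of a path: `Cp S p true` is the set `C_{p,+}` of upper corners, and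
`Cp S p false` is the set `C_{p,-}` of lower corners. -/
def Cp (S : Setting) (p : List (ℝ × ℝ)) (up : Bool) : Set (ℕ × ℤ) :=
  match S with
  | .A n =>
    {jl | 1 ≤ jl.1 ∧ jl.1 ≤ n ∧
      pt p jl.1 = ((jl.1 : ℝ), (jl.2 : ℝ)) ∧
      (pt p (jl.1 - 1)).2 = (jl.2 : ℝ) + (if up then 1 else -1) ∧
      (pt p (jl.1 + 1)).2 = (jl.2 : ℝ) + (if up then 1 else -1)}
  | .B n ε =>
    {jl | jl ∈ XB n ∧
      ((∃ r : ℕ, 1 ≤ r ∧ r + 1 < p.length ∧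
          pt p r = (((iotaB n jl).1 : ℝ), ((iotaB n jl).2 : ℝ)) ∧
          (iotaB n jl).1 ≠ 0 ∧ (iotaB n jl).1 ≠ 2 * (n : ℤ) - 1 ∧
          (iotaB n jl).1 ≠ 4 * (n : ℤ) - 2 ∧
          (if up then (pt p r).2 < (pt p (r - 1)).2 ∧ (pt p r).2 < (pt p (r + 1)).2
           else (pt p (r - 1)).2 < (pt p r).2 ∧ (pt p (r + 1)).2 < (pt p r).2))
       ∨ (jl.1 = n ∧
          (if up then (2 * (n : ℝ) - 1, (jl.2 : ℝ) - ε) ∈ p ∧ (2 * (n : ℝ) - 1, (jl.2 : ℝ) + ε) ∉ p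
           else (2 * (n : ℝ) - 1, (jl.2 : ℝ) + ε) ∈ p ∧ (2 * (n : ℝ) - 1, (jl.2 : ℝ) - ε) ∉ p)))}

/-- `p'` is obtained from `p` by replacing the point `q` by the point `q'`. -/
def Replace1 (p p' : List (ℝ × ℝ)) (q q' : ℝ × ℝ) : Prop :=
  ∃ r : ℕ, r < p.length ∧ pt p r = q ∧ p'.length = p.length ∧ pt p' r = q' ∧
    ∀ s, s < p.length → s ≠ r → pt p' s = pt p s

/-- `p'` is obtained from `p` by replacing the point `q1` by `q1'` and the point `q2` by `q2'`. -/
def Replace2 (p p' : List (ℝ × ℝ)) (q1 q1' q2 q2' : ℝ × ℝ) : Prop :=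
  ∃ r s : ℕ, r < p.length ∧ s < p.length ∧ r ≠ s ∧ pt p r = q1 ∧ pt p s = q2 ∧
    p'.length = p.length ∧ pt p' r = q1' ∧ pt p' s = q2' ∧
    ∀ u, u < p.length → u ≠ r → u ≠ s → pt p' u = pt p u

/-- The path `p` can be lowered at `(j, l)`: `(j, l - r_j) ∈ C_{p,+}` and
`(j, l + r_j) ∉ C_{p,+}`. -/
def CanLower (S : Setting) (p : List (ℝ × ℝ)) (j : ℕ) (l : ℤ) : Prop :=
  (j, l - (rr S j : ℤ)) ∈ Cp S p true ∧ (j, l + (rr S j : ℤ)) ∉ Cp S p true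

/-- `p'` is the result of the lowering move at `(j,l)` applied to the path `p ∈ 𝒫_{i,k}`;
written `p' = p 𝒜_{j,l}⁻¹`. -/
def LoweredTo (S : Setting) (i : ℕ) (k : ℤ) (j : ℕ) (l : ℤ)
    (p p' : List (ℝ × ℝ)) : Prop :=
  p ∈ P S i k ∧ p' ∈ P S i k ∧ CanLower S p j l ∧
  (match S with
   | .A _ => Replace1 p p' ((j : ℝ), (l : ℝ) - 1) ((j : ℝ), (l : ℝ) + 1)
   | .B n ε =>
     if j = n then
       Replace1 p p' (2 * (n : ℝ) - 1, (l : ℝ) - 1 - ε) (2 * (n : ℝ) - 1, (l : ℝ) + 1 + ε)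
     else if j = n - 1 then
       Replace2 p p'
         (((iotaB n (j, l - 2)).1 : ℝ), (l : ℝ) - 2) (((iotaB n (j, l - 2)).1 : ℝ), (l : ℝ) + 2)
         (2 * (n : ℝ) - 1, (l : ℝ) - 1 + ε) (2 * (n : ℝ) - 1, (l : ℝ) + 1 - ε)
     else
       Replace1 p p'
         (((iotaB n (j, l - 2)).1 : ℝ), (l : ℝ) - 2) (((iotaB n (j, l - 2)).1 : ℝ), (l : ℝ) + 2))

/-- The path `p` can be raised at `(j,l)`: it is of the form `p' 𝒜_{j,l}⁻¹`. -/
def CanRaise (S : Setting) (i : ℕ) (k : ℤ) (p : List (ℝ × ℝ)) (j : ℕ) (l : ℤ) : Prop :=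
  ∃ p', LoweredTo S i k j l p' p

/-- The monomial group `ℳ`, realised as exponent functions: the free abelian group on the
symbols `Y_{i,k}`, `(i,k) ∈ X`, is identified with finitely supported functions `(ℕ × ℤ) → ℤ`,
written additively. -/
def Y (x : ℕ × ℤ) : (ℕ × ℤ) → ℤ := fun z => if z = x then 1 else 0

noncomputable def ind (s : Prop) : ℤ := @ite ℤ s (Classical.propDecidable s) 1 0

/-- The monomial `m(p)` of a path: `∏ Y_{j,l}` over upper corners times `∏ Y_{j,l}⁻¹`
over lower corners. -/
noncomputable def mon (S : Setting) (p : List (ℝ × ℝ)) : (ℕ × ℤ) → ℤ :=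
  fun x => ind (x ∈ Cp S p true) - ind (x ∈ Cp S p false)

/-- The monomials `A_{j,l}`, with the conventions `Y_{0,·} = Y_{N+1,·} = 1`. -/
def Amon (S : Setting) (j : ℕ) (l : ℤ) : (ℕ × ℤ) → ℤ :=
  match S with
  | .A n =>
      Y (j, l + 1) + Y (j, l - 1) - (if j = 1 then 0 else Y (j - 1, l))
        - (if j = n then 0 else Y (j + 1, l))
  | .B n _ =>
      if j = n then Y (n, l + 1) + Y (n, l - 1) - Y (n - 1, l)
      else if j = n - 1 then
        Y (n - 1, l + 2) + Y (n - 1, l - 2) - (if j = 1 then 0 else Y (n - 2, l))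
          - Y (n, l + 1) - Y (n, l - 1)
      else
        Y (j, l + 2) + Y (j, l - 2) - (if j = 1 then 0 else Y (j - 1, l)) - Y (j + 1, l)

/-- A monomial is dominant iff all its exponents are nonnegative. -/
def Dominant (m : (ℕ × ℤ) → ℤ) : Prop := ∀ x, 0 ≤ m x

/-- A monomial is anti-dominant iff all its exponents are nonpositive. -/
def AntiDominant (m : (ℕ × ℤ) → ℤ) : Prop := ∀ x, m x ≤ 0

/-- `(i',k')` is in snake position with respect to `(i,k)`. -/
def SnakePos : Setting → ℕ × ℤ → ℕ × ℤ → Prop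
  | .A _, ik, ik' => |(ik'.1 : ℤ) - (ik.1 : ℤ)| + 2 ≤ ik'.2 - ik.2
  | .B n _, ik, ik' =>
      if ik.1 = n ∧ ik'.1 = n then
        2 ≤ ik'.2 - ik.2 ∧ (ik'.2 - ik.2) % 4 = 2
      else if ik.1 = n ∨ ik'.1 = n then
        2 * |(ik'.1 : ℤ) - (ik.1 : ℤ)| + 3 ≤ ik'.2 - ik.2 ∧
          (ik'.2 - ik.2) % 4 = (2 * |(ik'.1 : ℤ) - (ik.1 : ℤ)| - 1) % 4
      else
        2 * |(ik'.1 : ℤ) - (ik.1 : ℤ)| + 4 ≤ ik'.2 - ik.2 ∧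
          (ik'.2 - ik.2) % 4 = (2 * |(ik'.1 : ℤ) - (ik.1 : ℤ)|) % 4

/-- A snake: a sequence of points of `X`, each in snake position w.r.t. the previous one. -/
def IsSnake (S : Setting) {T : ℕ} (w : Fin T → ℕ × ℤ) : Prop :=
  (∀ t, w t ∈ X S) ∧
  ∀ (t : Fin T) (h : (t : ℕ) + 1 < T), SnakePos S (w t) (w ⟨(t : ℕ) + 1, h⟩)

/-- `p` is strictly above `p'`. -/
def StrictlyAbove (p p' : List (ℝ × ℝ)) : Prop :=
  ∀ a ∈ p, ∀ b ∈ p', a.1 = b.1 → a.2 < b.2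

/-- A tuple of paths is non-overlapping. -/
def NonOverlapping {T : ℕ} (ps : Fin T → List (ℝ × ℝ)) : Prop :=
  ∀ s t : Fin T, s < t → StrictlyAbove (ps s) (ps t)

/-- The set `𝒫̄` of non-overlapping tuples of paths attached to a snake. -/
def PBar (S : Setting) {T : ℕ} (w : Fin T → ℕ × ℤ) : Set (Fin T → List (ℝ × ℝ)) :=
  {ps | (∀ t, ps t ∈ P S (w t).1 (w t).2) ∧ NonOverlapping ps}

/-- The product `∏_t m(p_t)` of the monomials of a tuple of paths. -/
noncomputable def tmon (S : Setting) {T : ℕ} (ps : Fin T → List (ℝ × ℝ)) : (ℕ × ℤ) → ℤ :=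
  ∑ t, mon S (ps t)

/-- Lowering move at `jl` on a tuple of paths: one component is lowered, the others
are unchanged. -/
def TLoweredTo (S : Setting) {T : ℕ} (w : Fin T → ℕ × ℤ) (jl : ℕ × ℤ)
    (ps ps' : Fin T → List (ℝ × ℝ)) : Prop :=
  ∃ t, LoweredTo S (w t).1 (w t).2 jl.1 jl.2 (ps t) (ps' t) ∧ ∀ s, s ≠ t → ps' s = ps s

/-- Sequences of raising/lowering moves on a single path; the list records, for each move,
whether it was a lowering move (`true`) or a raising move (`false`), and its site. -/
inductive MoveSeq (S : Setting) (i : ℕ) (k : ℤ) :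
    List (ℝ × ℝ) → List (ℝ × ℝ) → List (Bool × (ℕ × ℤ)) → Prop where
  | nil (p : List (ℝ × ℝ)) : MoveSeq S i k p p []
  | lower {p q r : List (ℝ × ℝ)} {jl : ℕ × ℤ} {ms : List (Bool × (ℕ × ℤ))} :
      jl ∈ W S → LoweredTo S i k jl.1 jl.2 p q → MoveSeq S i k q r ms →
      MoveSeq S i k p r ((true, jl) :: ms)
  | raise {p q r : List (ℝ × ℝ)} {jl : ℕ × ℤ} {ms : List (Bool × (ℕ × ℤ))} :
      jl ∈ W S → LoweredTo S i k jl.1 jl.2 q p → MoveSeq S i k q r ms →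
      MoveSeq S i k p r ((false, jl) :: ms)

/-- Sequences of raising/lowering moves on tuples of paths, all of whose intermediate
tuples are non-overlapping. -/
inductive TMoveSeq (S : Setting) {T : ℕ} (w : Fin T → ℕ × ℤ) :
    (Fin T → List (ℝ × ℝ)) → (Fin T → List (ℝ × ℝ)) → List (Bool × (ℕ × ℤ)) → Prop where
  | nil (ps : Fin T → List (ℝ × ℝ)) : TMoveSeq S w ps ps []
  | lower {ps qs rs : Fin T → List (ℝ × ℝ)} {jl : ℕ × ℤ} {ms : List (Bool × (ℕ × ℤ))} :
      jl ∈ W S → TLoweredTo S w jl ps qs → NonOverlapping qs →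
      TMoveSeq S w qs rs ms → TMoveSeq S w ps rs ((true, jl) :: ms)
  | raise {ps qs rs : Fin T → List (ℝ × ℝ)} {jl : ℕ × ℤ} {ms : List (Bool × (ℕ × ℤ))} :
      jl ∈ W S → TLoweredTo S w jl qs ps → NonOverlapping qs →
      TMoveSeq S w qs rs ms → TMoveSeq S w ps rs ((false, jl) :: ms)

/-- Sequences of lowering moves on tuples of paths, all of whose intermediate tuples
are non-overlapping; the list records the sites, in order. -/
inductive TLowerSeq (S : Setting) {T : ℕ} (w : Fin T → ℕ × ℤ) :
    (Fin T → List (ℝ × ℝ)) → (Fin T → List (ℝ × ℝ)) → List (ℕ × ℤ) → Prop where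
  | nil (ps : Fin T → List (ℝ × ℝ)) : TLowerSeq S w ps ps []
  | cons {ps qs rs : Fin T → List (ℝ × ℝ)} {jl : ℕ × ℤ} {ms : List (ℕ × ℤ)} :
      jl ∈ W S → TLoweredTo S w jl ps qs → NonOverlapping qs →
      TLowerSeq S w qs rs ms → TLowerSeq S w ps rs (jl :: ms)

/-- Weak order on paths with the same x-coordinates: `p` is weakly above `p'`. -/
def WeaklyAbove (p p' : List (ℝ × ℝ)) : Prop :=
  p.length = p'.length ∧ ∀ r, r < p.length → (pt p r).2 ≤ (pt p' r).2

/-- `p` is weakly below `p'`. -/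
def WeaklyBelow (p p' : List (ℝ × ℝ)) : Prop :=
  p.length = p'.length ∧ ∀ r, r < p.length → (pt p' r).2 ≤ (pt p r).2

/-- The path `top(p, p')`. -/
def topPath (p p' : List (ℝ × ℝ)) : List (ℝ × ℝ) :=
  List.zipWith (fun a b => (a.1, min a.2 b.2)) p p'

/-- The distinguished point contained in the highest path `p⁺_{i,k}`. -/
def highPoint : Setting → ℕ → ℤ → ℝ × ℝ
  | .A _, i, k => ((i : ℝ), (k : ℝ))
  | .B n ε, i, k =>
      if i = n then (2 * (n : ℝ) - 1, (k : ℝ) - ε)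
      else (((iotaB n (i, k)).1 : ℝ), ((iotaB n (i, k)).2 : ℝ))

/-- The distinguished point contained in the lowest path `p⁻_{i,k}`. -/
def lowPoint : Setting → ℕ → ℤ → ℝ × ℝ
  | .A n, i, k => ((n : ℝ) + 1 - (i : ℝ), (k : ℝ) + (n : ℝ) + 1)
  | .B n ε, i, k =>
      if i = n then (2 * (n : ℝ) - 1, (k : ℝ) + 4 * (n : ℝ) - 2 + ε)
      else (((iotaB n (i, k + 4 * (n : ℤ) - 2)).1 : ℝ),
            ((iotaB n (i, k + 4 * (n : ℤ) - 2)).2 : ℝ))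

/-- The highest path `p⁺_{i,k}` : the path of `𝒫_{i,k}` with no lower corners. -/
noncomputable def highestPath (S : Setting) (i : ℕ) (k : ℤ) : List (ℝ × ℝ) :=
  Classical.epsilon fun p => p ∈ P S i k ∧ Cp S p false = ∅

/-- The lowest path `p⁻_{i,k}` : the path of `𝒫_{i,k}` with no upper corners. -/
noncomputable def lowestPath (S : Setting) (i : ℕ) (k : ℤ) : List (ℝ × ℝ) :=
  Classical.epsilon fun p => p ∈ P S i k ∧ Cp S p true = ∅




/-- `r^∨`: `1` in type A, `2` in type B. -/
def rd : Setting → ℤ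
  | .A _ => 1
  | .B _ _ => 2

/-- The subset `X' ⊆ X`: all of `X` in type A; in type B, the points `(i,k)` with
`i < N` and `2i - k ≡ 2 (mod 4)`. -/
def Xp : Setting → Set (ℕ × ℤ)
  | .A n => XA n
  | .B n _ => {ik | ik ∈ XB n ∧ ik.1 < n ∧ (2 * (ik.1 : ℤ) - ik.2) % 4 = 2}

/-- A skew diagram: a finite subset of `ℤ × ℤ_{>0}` such that (1) if nonempty it has a box
in column 1, and (2) if `(i,j)` is not a box then either nothing weakly to its lower-right
is a box, or nothing weakly to its upper-left is a box. -/
def IsSkewDiagram (D : Set (ℤ × ℤ)) : Prop :=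
  D.Finite ∧ (∀ q ∈ D, 0 < q.2) ∧
  (D.Nonempty → ∃ i : ℤ, (i, 1) ∈ D) ∧
  (∀ i j : ℤ, 0 < j → (i, j) ∉ D →
    (∀ i' j' : ℤ, i ≤ i' → j ≤ j' → (i', j') ∉ D) ∨
    (∀ i' j' : ℤ, i' ≤ i → j' ≤ j → (i', j') ∉ D))

/-- The skew diagram attached to a snake `(i_t, k_t)`, `1 ≤ t ≤ T` (here indexed by `Fin T`):
the boxes `(s,t)` with `1 ≤ t ≤ T` and
`t - k_t/(2 r^∨) - (i_t - 1)/2 ≤ s ≤ t - k_t/(2 r^∨) + (i_t - 1)/2`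
(the inequalities are stated multiplied through by `2 r^∨ > 0`). -/
def diagOf (S : Setting) {T : ℕ} (w : Fin T → ℕ × ℤ) : Set (ℤ × ℤ) :=
  {q | ∃ t : Fin T, q.2 = (t : ℤ) + 1 ∧
    2 * rd S * ((t : ℤ) + 1) - (w t).2 - rd S * (((w t).1 : ℤ) - 1) ≤ 2 * rd S * q.1 ∧
    2 * rd S * q.1 ≤ 2 * rd S * ((t : ℤ) + 1) - (w t).2 + rd S * (((w t).1 : ℤ) - 1)}

/-- The maximal number of boxes allowed in a column: `N` in type A, `N - 1` in type B. -/
def colBound : Setting → ℕ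
  | .A n => n
  | .B n _ => n - 1

/-- Type A skew tableaux of shape `D` (encoded as functions `ℤ × ℤ → ℕ` vanishing off `D`):
entries in the alphabet `{1, …, N+1}`, weakly increasing along rows, strictly increasing
down columns. -/
def TabA (n : ℕ) (D : Set (ℤ × ℤ)) : Set (ℤ × ℤ → ℕ) :=
  {f | (∀ q ∈ D, 1 ≤ f q ∧ f q ≤ n + 1) ∧ (∀ q ∉ D, f q = 0) ∧
    (∀ i j : ℤ, (i, j) ∈ D → (i, j + 1) ∈ D → f (i, j) ≤ f (i, j + 1)) ∧
    (∀ i j : ℤ, (i, j) ∈ D → (i + 1, j) ∈ D → f (i, j) < f (i + 1, j))}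

/-- The type A box monomial `⟦a⟧_k = Y_{a-1, a+k}⁻¹ Y_{a, a-1+k}`, with the conventions
`Y_{0,·} = Y_{N+1,·} = 1`. -/
def boxA (n : ℕ) (a : ℕ) (k : ℤ) : (ℕ × ℤ) → ℤ :=
  (if a = n + 1 then 0 else Y (a, (a : ℤ) - 1 + k)) -
    (if a = 1 then 0 else Y (a - 1, (a : ℤ) + k))

/-- The monomial `M(𝒯)` of a type A skew tableau. -/
noncomputable def MtabA (n : ℕ) (D : Set (ℤ × ℤ)) (f : ℤ × ℤ → ℕ) : (ℕ × ℤ) → ℤ :=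
  ∑ᶠ q ∈ D, boxA n (f q) (2 * (q.2 - q.1))

/-- The type B alphabet `{1, …, N, 0, N̄, …, 1̄}`, encoded in `ℤ` with the barred letter
`ā` encoded as `-a`. -/
def alphabetB (n : ℕ) : Set ℤ :=
  {a | (1 ≤ a ∧ a ≤ (n : ℤ)) ∨ a = 0 ∨ (-(n : ℤ) ≤ a ∧ a ≤ -1)}

/-- The position of a type B letter in the alphabetical order
`1 < 2 < ⋯ < N < 0 < N̄ < ⋯ < 2̄ < 1̄`. -/
def ordB (n : ℕ) (a : ℤ) : ℤ :=
  if 1 ≤ a then a else if a = 0 then (n : ℤ) + 1 else 2 * (n : ℤ) + 2 + a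

/-- Type B skew tableaux of shape `D` (encoded as functions `ℤ × ℤ → ℤ` vanishing off `D`). -/
def TabB (n : ℕ) (D : Set (ℤ × ℤ)) : Set (ℤ × ℤ → ℤ) :=
  {f | (∀ q ∈ D, f q ∈ alphabetB n) ∧ (∀ q ∉ D, f q = 0) ∧
    (∀ i j : ℤ, (i, j) ∈ D → (i, j + 1) ∈ D →
      ordB n (f (i, j)) ≤ ordB n (f (i, j + 1)) ∧ ¬(f (i, j) = 0 ∧ f (i, j + 1) = 0)) ∧
    (∀ i j : ℤ, (i, j) ∈ D → (i + 1, j) ∈ D →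
      ordB n (f (i, j)) < ordB n (f (i + 1, j)) ∨ (f (i, j) = 0 ∧ f (i + 1, j) = 0))}

/-- The type B box monomials `⟦a⟧_k`, with the convention `Y_{0,·} = 1`. -/
def boxB (n : ℕ) (a : ℤ) (k : ℤ) : (ℕ × ℤ) → ℤ :=
  if a = 0 then Y (n, 2 * (n : ℤ) - 3 + k) - Y (n, 2 * (n : ℤ) + 1 + k)
  else if a = (n : ℤ) then
    Y (n, 2 * (n : ℤ) - 3 + k) + Y (n, 2 * (n : ℤ) - 1 + k) - Y (n - 1, 2 * (n : ℤ) + k)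
  else if a = -(n : ℤ) then
    Y (n - 1, 2 * (n : ℤ) - 2 + k) - Y (n, 2 * (n : ℤ) - 1 + k) - Y (n, 2 * (n : ℤ) + 1 + k)
  else if 1 ≤ a then
    Y (a.toNat, 2 * a - 2 + k) - (if a = 1 then 0 else Y (a.toNat - 1, 2 * a + k))
  else
    (if a = -1 then 0 else Y ((-a).toNat - 1, 4 * (n : ℤ) - 2 - 2 * (-a) + k)) -
      Y ((-a).toNat, 4 * (n : ℤ) - 2 * (-a) + k)

/-- The monomial `M(𝒯)` of a type B skew tableau. -/
noncomputable def MtabB (n : ℕ) (D : Set (ℤ × ℤ)) (f : ℤ × ℤ → ℤ) : (ℕ × ℤ) → ℤ :=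
  ∑ᶠ q ∈ D, boxB n (f q) (4 * (q.2 - q.1))




/-- number of elements of `U` that are `≤ r` -/
def cnt (U : Finset ℕ) (r : ℕ) : ℕ := Nat.count (fun x => x ∈ U) (r + 1)

lemma cnt_succ (U : Finset ℕ) (r : ℕ) :
    cnt U (r + 1) = cnt U r + if r + 1 ∈ U then 1 else 0 := by
  unfold cnt; rw [Nat.count_succ]

lemma cnt_zero {n : ℕ} {U : Finset ℕ} (hU : U ⊆ Finset.Icc 1 n) : cnt U 0 = 0 := by
  unfold cnt
  have : 0 ∉ U := fun h => by simpa using hU h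
  simp [Nat.count_succ, this]

lemma cnt_eq_card_filter (U : Finset ℕ) (r : ℕ) : cnt U r = (U.filter (· ≤ r)).card := by
  unfold cnt
  rw [Nat.count_eq_card_filter_range]
  congr 1; ext x; simp; exact and_comm

lemma cnt_n {n : ℕ} {U : Finset ℕ} (hU : U ⊆ Finset.Icc 1 n) : cnt U n = U.card := by
  rw [cnt_eq_card_filter]
  congr 1; ext x; simp
  intro h; have := hU h; simp at this; omega

lemma cnt_mono (U : Finset ℕ) {r s : ℕ} (h : r ≤ s) : cnt U r ≤ cnt U s :=
  Nat.count_monotone _ (by omega)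

lemma cnt_le_card (U : Finset ℕ) (r : ℕ) : cnt U r ≤ U.card := by
  rw [cnt_eq_card_filter]; exact Finset.card_filter_le _ _

lemma cnt_compl {n : ℕ} {U : Finset ℕ} (hU : U ⊆ Finset.Icc 1 n) (r : ℕ) (hr : r ≤ n) :
    cnt (Finset.Icc 1 n \ U) r + cnt U r = r := by
  induction r with
  | zero => rw [cnt_zero hU, cnt_zero Finset.sdiff_subset]
  | succ r ih =>
    rw [cnt_succ, cnt_succ]
    have := ih (by omega)
    by_cases h : r + 1 ∈ U
    · simp [h]; omega
    · simp [h, hr]; omega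

lemma cnt_ext {n : ℕ} {U V : Finset ℕ} (hU : U ⊆ Finset.Icc 1 n) (hV : V ⊆ Finset.Icc 1 n)
    (h : ∀ r ≤ n, cnt U r = cnt V r) : U = V := by
  ext x
  rcases x with _ | x
  · constructor <;> intro h'
    · simpa using hU h'
    · simpa using hV h'
  · by_cases hx : x + 1 ≤ n
    · have h1 := h x (by omega)
      have h2 := h (x+1) hx
      rw [cnt_succ, cnt_succ] at h2
      by_cases a : x + 1 ∈ U <;> by_cases b : x + 1 ∈ V <;> simp [a, b] at h2 ⊢ <;> omega
    · constructor <;> intro h'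
      · have := hU h'; simp at this; omega
      · have := hV h'; simp at this; omega

/-- the `j`-th smallest element of `U` -/
noncomputable def enum (U : Finset ℕ) (j : ℕ) : ℕ := Nat.nth (fun x => x ∈ U) j

lemma fin_card (U : Finset ℕ) (hf : (Set.ofPred (fun x => x ∈ U)).Finite) : hf.toFinset.card = U.card := by
  congr 1; ext x; simp

lemma enum_mem {U : Finset ℕ} {j : ℕ} (h : j < U.card) : enum U j ∈ U :=
  Nat.nth_mem j (fun hf => by rw [fin_card]; exact h)

lemma count_enum {U : Finset ℕ} {j : ℕ} (h : j < U.card) :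
    Nat.count (fun x => x ∈ U) (enum U j) = j :=
  Nat.count_nth (fun hf => by rw [fin_card]; exact h)

lemma enum_count {U : Finset ℕ} {x : ℕ} (h : x ∈ U) :
    enum U (Nat.count (fun x => x ∈ U) x) = x := Nat.nth_count (p := fun x => x ∈ U) h

lemma count_lt_card {U : Finset ℕ} {x : ℕ} (h : x ∈ U) :
    Nat.count (fun x => x ∈ U) x < U.card := by
  have h1 := cnt_le_card U x
  unfold cnt at h1
  rw [Nat.count_succ] at h1
  simp [h] at h1; omega

lemma enum_le_iff {U : Finset ℕ} {j r : ℕ} (h : j < U.card) : enum U j ≤ r ↔ j < cnt U r := by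
  have h1 : cnt U (enum U j) = j + 1 := by
    unfold cnt; rw [Nat.count_succ, count_enum h]; simp [enum_mem h]
  constructor
  · intro h2
    have := cnt_mono U h2; omega
  · intro h2
    by_contra h3
    have : cnt U r ≤ Nat.count (fun x => x ∈ U) (enum U j) := Nat.count_monotone _ (by omega)
    rw [count_enum h] at this; omega

lemma enum_strict {U : Finset ℕ} {j j' : ℕ} (h : j < j') (h' : j' < U.card) :
    enum U j < enum U j' :=
  Nat.nth_lt_nth' h (fun hf => by rw [fin_card]; exact h')

lemma sum_enum {M : Type*} [AddCommMonoid M] (U : Finset ℕ) (F : ℕ → ℕ → M) :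
    ∑ j ∈ Finset.range U.card, F (enum U j) j
      = ∑ r ∈ U, F r (Nat.count (fun x => x ∈ U) r) := by
  refine Finset.sum_nbij' (fun j => enum U j) (fun r => Nat.count (fun x => x ∈ U) r) ?_ ?_ ?_ ?_ ?_
  · intro j hj; exact enum_mem (by simpa using hj)
  · intro r hr; simpa using count_lt_card hr
  · intro j hj; exact count_enum (by simpa using hj)
  · intro r hr; exact enum_count hr
  · intro j hj; rw [count_enum (by simpa using hj)]

/-- the entry in position `j` of the column attached to `(U, V)` -/
noncomputable def letter (i : ℕ) (U V : Finset ℕ) (j : ℤ) : ℤ :=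
  if j < 0 ∨ (i : ℤ) ≤ j then 0
  else if j < U.card then (enum U j.toNat : ℤ)
  else if j < (i : ℤ) - V.card then 0
  else -(enum V ((i : ℤ) - 1 - j).toNat : ℤ)

lemma letter_neg (n i : ℕ) {U V : Finset ℕ} (hU : U ⊆ Finset.Icc 1 n) (hV : V ⊆ Finset.Icc 1 n)
    (hc : U.card + V.card ≤ i) (j : ℤ) :
    -letter i U V ((i : ℤ) - 1 - j) = letter i V U j := by
  unfold letter
  have e : (i : ℤ) - 1 - ((i : ℤ) - 1 - j) = j := by ring
  rw [e]
  split_ifs <;> first | omega | rfl | simp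

lemma letter_pos (n i : ℕ) {U V : Finset ℕ} (hU : U ⊆ Finset.Icc 1 n) (hV : V ⊆ Finset.Icc 1 n)
    (hc : U.card + V.card ≤ i) {j : ℤ} (h0 : 0 ≤ j) (r : ℕ) :
    (1 ≤ letter i U V j ∧ letter i U V j ≤ r) ↔ j < cnt U r := by
  have hcr := cnt_le_card U r
  unfold letter
  split_ifs with h1 h2 h3
  · simp; omega
  · have hj : j.toNat < U.card := by omega
    have := enum_le_iff (r := r) hj
    have := hU (enum_mem hj)
    simp at this
    omega
  · simp; omega
  · omega

lemma letter_negv (n i : ℕ) {U V : Finset ℕ} (hU : U ⊆ Finset.Icc 1 n) (hV : V ⊆ Finset.Icc 1 n)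
    (hc : U.card + V.card ≤ i) {j : ℤ} (h0 : j < i) (r : ℕ) :
    (letter i U V j ≤ -1 ∧ -(r:ℤ) ≤ letter i U V j) ↔ (i : ℤ) - 1 - j < cnt V r := by
  have h := letter_pos n i hV hU (by omega) (j := (i:ℤ) - 1 - j) (by omega) r
  have h2 := letter_neg n i hU hV hc ((i:ℤ) - 1 - j)
  have e : (i : ℤ) - 1 - ((i : ℤ) - 1 - j) = j := by ring
  rw [e] at h2
  rw [← h2] at h
  rw [← h]; omega

lemma letter_range (n i : ℕ) {U V : Finset ℕ} (hU : U ⊆ Finset.Icc 1 n) (hV : V ⊆ Finset.Icc 1 n)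
    (hc : U.card + V.card ≤ i) (j : ℤ) : -(n:ℤ) ≤ letter i U V j ∧ letter i U V j ≤ n := by
  unfold letter
  split_ifs with h1 h2 h3
  · omega
  · have hj : j.toNat < U.card := by omega
    have := hU (enum_mem hj)
    simp at this
    omega
  · omega
  · have hj : ((i : ℤ) - 1 - j).toNat < V.card := by omega
    have := hV (enum_mem hj)
    simp at this
    omega

lemma letter_col (n i : ℕ) {U V : Finset ℕ} (hU : U ⊆ Finset.Icc 1 n) (hV : V ⊆ Finset.Icc 1 n)
    (hc : U.card + V.card ≤ i) {j : ℤ} (h0 : 0 ≤ j) (h1 : j + 1 < i) :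
    ordB n (letter i U V j) < ordB n (letter i U V (j + 1)) ∨
      (letter i U V j = 0 ∧ letter i U V (j + 1) = 0) := by
  have a1 := letter_range n i hU hV hc j
  have a2 := letter_range n i hU hV hc (j+1)
  have b1 := letter_pos n i hU hV hc h0 n
  have b2 := letter_pos n i hU hV hc (j := j+1) (by omega) n
  have c1 := letter_negv n i hU hV hc (j := j) (by omega) n
  have c2 := letter_negv n i hU hV hc (j := j+1) (by omega) n
  by_cases h : 1 ≤ letter i U V (j + 1)
  · have e := letter_pos n i hU hV hc (j := j+1) (by omega) (letter i U V (j+1) - 1).toNat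
    have e' := letter_pos n i hU hV hc (j := j) (by omega) (letter i U V (j+1) - 1).toNat
    have d := letter_pos n i hU hV hc (j := j+1) (by omega) (letter i U V (j+1)).toNat
    have f := cnt_succ U (letter i U V (j+1) - 1).toNat
    have g : (letter i U V (j+1) - 1).toNat + 1 = (letter i U V (j+1)).toNat := by omega
    rw [g] at f
    have hl : cnt U (letter i U V (j + 1)).toNat ≤ cnt U (letter i U V (j+1) - 1).toNat + 1 := by
      split_ifs at f <;> omega
    unfold ordB; split_ifs <;> omega
  · by_cases h' : letter i U V j ≤ -1
    · have e := letter_negv n i hU hV hc (j := j+1) (by omega) (-letter i U V (j) - 1).toNat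
      have e' := letter_negv n i hU hV hc (j := j) (by omega) (-letter i U V (j) - 1).toNat
      have d := letter_negv n i hU hV hc (j := j) (by omega) (-letter i U V (j)).toNat
      have f := cnt_succ V (-letter i U V (j) - 1).toNat
      have g : (-letter i U V (j) - 1).toNat + 1 = (-letter i U V (j)).toNat := by omega
      rw [g] at f
      have hl : cnt V (-letter i U V (j)).toNat ≤ cnt V (-letter i U V (j) - 1).toNat + 1 := by
        split_ifs at f <;> omega
      unfold ordB; split_ifs <;> omega
    · unfold ordB; split_ifs <;> omega


lemma col_half (i : ℕ) (c : ℤ → ℤ)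
    (h : ∀ j : ℕ, j + 1 < i → 1 ≤ c ((j : ℤ) + 1) → 1 ≤ c j ∧ c j < c ((j:ℤ) + 1)) (n : ℕ)
    (hn : ∀ j : ℕ, j < i → c j ≤ n) :
    ∃ U : Finset ℕ, U ⊆ Finset.Icc 1 n ∧ U.card ≤ i ∧
      (∀ j : ℕ, j < i → (1 ≤ c j ↔ j < U.card)) ∧
      (∀ j : ℕ, j < i → 1 ≤ c j → c j = enum U j) ∧
      (∀ x, x ∈ U ↔ ∃ j : ℕ, j < i ∧ c j = x ∧ 1 ≤ x) := by
  have hp : ∀ d j : ℕ, j + d + 1 < i → 1 ≤ c ((j:ℤ) + d + 1) → 1 ≤ c j ∧ c j < c ((j:ℤ) + d + 1) := by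
    intro d
    induction d with
    | zero => intro j hj h1; simpa using h j (by omega) (by simpa using h1)
    | succ d ih =>
      intro j hj h1
      have h2 := h (j + d + 1) (by omega) (by push_cast at h1 ⊢; ring_nf at h1 ⊢; exact h1)
      have h3 := ih j (by omega) (by push_cast at h2; exact h2.1)
      push_cast at h2 ⊢
      have e : (j:ℤ) + (d + 1) + 1 = j + d + 1 + 1 := by ring
      rw [e]
      exact ⟨h3.1, h3.2.trans h2.2⟩
  have hq : ∀ j j' : ℕ, j < j' → j' < i → 1 ≤ c j' → 1 ≤ c j ∧ c j < c j' := by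
    intro j j' h1 h2 h3
    obtain ⟨d, rfl⟩ := Nat.exists_eq_add_of_lt h1
    simpa using hp d j h2 (by simpa using h3)
  let U : Finset ℕ := ((Finset.range i).filter (fun j : ℕ => 1 ≤ c j)).image (fun j : ℕ => (c j).toNat)
  have hmem : ∀ x, x ∈ U ↔ ∃ j : ℕ, j < i ∧ c j = x ∧ 1 ≤ x := by
    intro x
    simp only [U, Finset.mem_image, Finset.mem_filter, Finset.mem_range]
    constructor
    · rintro ⟨j, ⟨a, b⟩, rfl⟩; exact ⟨j, a, by omega, by omega⟩
    · rintro ⟨j, a, b, e⟩; exact ⟨j, ⟨a, by omega⟩, by omega⟩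
  have hcount : ∀ j : ℕ, j < i → 1 ≤ c j → Nat.count (fun x => x ∈ U) (c j).toNat = j := by
    intro j hj h1
    rw [Nat.count_eq_card_filter_range]
    have : (Finset.range (c j).toNat).filter (fun x => x ∈ U)
        = (Finset.range j).image (fun j : ℕ => (c j).toNat) := by
      ext x
      simp only [Finset.mem_filter, Finset.mem_range, Finset.mem_image, hmem]
      constructor
      · rintro ⟨a, j', b, e, f⟩
        refine ⟨j', ?_, by omega⟩
        by_contra hh
        rcases Nat.lt_or_ge j j' with g | g
        · have := hq j j' g b (by omega); omega
        · have : j = j' := by omega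
          subst this; omega
      · rintro ⟨j', a, rfl⟩
        have := hq j' j a hj h1
        exact ⟨by omega, j', by omega, by omega, by omega⟩
    rw [this, Finset.card_image_of_injOn, Finset.card_range]
    intro a ha b hb hab
    simp only [Finset.coe_range, Set.mem_Iio] at ha hb
    simp only at hab
    have ha' := hq a j ha hj h1
    have hb' := hq b j hb hj h1
    rcases Nat.lt_trichotomy a b with g | g | g
    · have := hq a b g (by omega) (by omega); omega
    · exact g
    · have := hq b a g (by omega) (by omega); omega
  have hUm : ∀ j : ℕ, j < i → 1 ≤ c j → (c j).toNat ∈ U := fun j hj h1 =>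
    (hmem _).2 ⟨j, hj, by omega, by omega⟩
  refine ⟨U, ?_, ?_, ?_, ?_, hmem⟩
  · intro x hx
    obtain ⟨j, a, b, e⟩ := (hmem x).1 hx
    have := hn j a
    simp; omega
  · exact Finset.card_image_le.trans ((Finset.card_filter_le _ _).trans (by simp))
  · intro j hj
    constructor
    · intro h1
      have := count_lt_card (hUm j hj h1)
      rwa [hcount j hj h1] at this
    · intro h1
      by_contra h2
      have : U ⊆ (Finset.range j).image (fun j : ℕ => (c j).toNat) := by
        intro x hx
        obtain ⟨j', a, b, e⟩ := (hmem x).1 hx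
        simp only [Finset.mem_image, Finset.mem_range]
        refine ⟨j', ?_, by omega⟩
        by_contra hh
        rcases Nat.lt_or_ge j j' with g | g
        · have := hq j j' g a (by omega); omega
        · have : j = j' := by omega
          subst this; omega
      have h3 := Finset.card_le_card this
      have h4 := Finset.card_image_le (s := Finset.range j) (f := fun j : ℕ => (c j).toNat)
      simp at h4
      omega
  · intro j hj h1
    have := enum_count (hUm j hj h1)
    rw [hcount j hj h1] at this
    rw [this]; omega

lemma col_surj (n i : ℕ) (c : ℤ → ℤ) (hr : ∀ j : ℤ, 0 ≤ j → j < i → -(n:ℤ) ≤ c j ∧ c j ≤ n)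
    (h : ∀ j : ℤ, 0 ≤ j → j + 1 < i →
      ordB n (c j) < ordB n (c (j + 1)) ∨ (c j = 0 ∧ c (j + 1) = 0)) :
    ∃ U V : Finset ℕ, U ⊆ Finset.Icc 1 n ∧ V ⊆ Finset.Icc 1 n ∧ U.card + V.card ≤ i ∧
      ∀ j : ℤ, 0 ≤ j → j < i → c j = letter i U V j := by
  obtain ⟨U, hU, hUi, hU1, hU2, -⟩ := col_half i c (by
    intro j hj h1
    have a := hr j (by omega) (by omega)
    have b := hr (j+1) (by omega) (by omega)
    have d := h j (by omega) (by omega)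
    unfold ordB at d
    split_ifs at d <;> omega) n (fun j hj => (hr j (by omega) (by omega)).2)
  obtain ⟨V, hV, hVi, hV1, hV2, -⟩ := col_half i (fun j => -c ((i:ℤ) - 1 - j)) (by
    intro j hj h1
    have e : (i:ℤ) - 1 - j = (i:ℤ) - 1 - (j + 1) + 1 := by ring
    rw [e]
    have a := hr ((i:ℤ) - 1 - (j + 1)) (by omega) (by omega)
    have b := hr ((i:ℤ) - 1 - (j + 1) + 1) (by omega) (by omega)
    have d := h ((i:ℤ) - 1 - (j + 1)) (by omega) (by omega)
    unfold ordB at d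
    split_ifs at d <;> omega) n (fun j hj => by
      have := (hr ((i:ℤ) - 1 - j) (by omega) (by omega)).1
      omega)
  have hcard : U.card + V.card ≤ i := by
    by_contra hh
    have a := (hU1 (U.card - 1) (by omega)).2 (by omega)
    have b := (hV1 (i - U.card) (by omega)).2 (by omega)
    have e : (i:ℤ) - 1 - ((i - U.card : ℕ) : ℤ) = ((U.card - 1 : ℕ) : ℤ) := by omega
    rw [e] at b; omega
  refine ⟨U, V, hU, hV, hcard, ?_⟩
  intro j h0 h1
  have a := hU1 j.toNat (by omega)
  have b := hV1 ((i:ℤ) - 1 - j).toNat (by omega)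
  have a2 := hU2 j.toNat (by omega)
  have b2 := hV2 ((i:ℤ) - 1 - j).toNat (by omega)
  have e1 : ((j.toNat : ℕ) : ℤ) = j := by omega
  have e2 : (i:ℤ) - 1 - ((((i:ℤ) - 1 - j).toNat : ℕ) : ℤ) = j := by omega
  rw [e1] at a a2
  rw [e2] at b b2
  unfold letter
  split_ifs with q1 q2 q3
  · omega
  · exact a2 (by omega)
  · omega
  · have := b2 (by omega)
    omega

lemma letter_inj (n i : ℕ) {U V U' V' : Finset ℕ} (hU : U ⊆ Finset.Icc 1 n) (hV : V ⊆ Finset.Icc 1 n)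
    (hc : U.card + V.card ≤ i) (hU' : U' ⊆ Finset.Icc 1 n) (hV' : V' ⊆ Finset.Icc 1 n)
    (hc' : U'.card + V'.card ≤ i)
    (h : ∀ j : ℤ, 0 ≤ j → j < i → letter i U V j = letter i U' V' j) : U = U' ∧ V = V' := by
  constructor
  · refine cnt_ext hU hU' fun r _ => ?_
    have key : ∀ j : ℕ, j < i → (j < cnt U r ↔ j < cnt U' r) := by
      intro j hj
      have a := letter_pos n i hU hV hc (j := j) (by omega) r
      have b := letter_pos n i hU' hV' hc' (j := j) (by omega) r
      rw [h j (by omega) (by omega)] at a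
      omega
    have := cnt_le_card U r
    have := cnt_le_card U' r
    by_contra hh
    have k1 := key (cnt U r)
    have k2 := key (cnt U' r)
    omega
  · refine cnt_ext hV hV' fun r _ => ?_
    have key : ∀ j : ℕ, j < i → (j < cnt V r ↔ j < cnt V' r) := by
      intro j hj
      have a := letter_negv n i hU hV hc (j := (i:ℤ) - 1 - j) (by omega) r
      have b := letter_negv n i hU' hV' hc' (j := (i:ℤ) - 1 - j) (by omega) r
      rw [h _ (by omega) (by omega)] at a
      omega
    have := cnt_le_card V r
    have := cnt_le_card V' r
    by_contra hh
    have k1 := key (cnt V r)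
    have k2 := key (cnt V' r)
    omega


/-- valid column data -/
def Valid (n i : ℕ) (c : Finset ℕ × Finset ℕ) : Prop :=
  c.1 ⊆ Finset.Icc 1 n ∧ c.2 ⊆ Finset.Icc 1 n ∧ c.1.card + c.2.card ≤ i

/-- `y`-coordinates of the first half of a path -/
def yA (x : ℕ × ℤ) (U : Finset ℕ) (r : ℕ) : ℤ := x.2 + 2 * x.1 + 2 * r - 4 * cnt U r

/-- `y`-coordinates of the second half of a path -/
def yB (n : ℕ) (x : ℕ × ℤ) (V : Finset ℕ) (r : ℕ) : ℤ :=
  x.2 + 4 * n - 2 - 2 * x.1 - 2 * r + 4 * cnt V r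

/-- compatibility of consecutive columns -/
def Adj (n : ℕ) (x : ℕ × ℤ) (c : Finset ℕ × Finset ℕ) (x' : ℕ × ℤ) (c' : Finset ℕ × Finset ℕ) :
    Prop :=
  (∀ r < n, yA x c.1 r < yA x' c'.1 r) ∧ (∀ r < n, yB n x c.2 r < yB n x' c'.2 r) ∧
  x.2 + 2 * x.1 - 4 * c.1.card < x'.2 - 2 * x'.1 + 4 * c'.2.card

/-- configurations -/
def Q (n : ℕ) {T : ℕ} (w : Fin T → ℕ × ℤ) : Set (Fin T → Finset ℕ × Finset ℕ) :=
  {c | (∀ t, Valid n (w t).1 (c t)) ∧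
    ∀ (t : Fin T) (h : (t : ℕ) + 1 < T), Adj n (w t) (c t) (w ⟨t + 1, h⟩) (c ⟨t + 1, h⟩)}

/-- the top row of column `t` -/
def tp (x : ℕ × ℤ) (t : ℕ) : ℤ := (4 * ((t : ℤ) + 1) - x.2 - 2 * x.1 + 2) / 4

/-- the tableau of a configuration -/
noncomputable def toTab {T : ℕ} (w : Fin T → ℕ × ℤ) (c : Fin T → Finset ℕ × Finset ℕ) : ℤ × ℤ → ℤ :=
  fun q => ∑ t : Fin T, if q.2 = (t : ℤ) + 1 then
    letter (w t).1 (c t).1 (c t).2 (q.1 - tp (w t) t) else 0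

lemma toTab_apply {T : ℕ} (w : Fin T → ℕ × ℤ) (c : Fin T → Finset ℕ × Finset ℕ) (t : Fin T) (s : ℤ) :
    toTab w c (s, (t : ℤ) + 1) = letter (w t).1 (c t).1 (c t).2 (s - tp (w t) t) := by
  unfold toTab
  rw [Finset.sum_eq_single t]
  · simp
  · intro b _ hb
    rw [if_neg]
    intro h
    apply hb
    simp only at h
    apply Fin.ext; omega
  · simp

lemma tp_eq {n : ℕ} {ε : ℝ} {x : ℕ × ℤ} (hx : x ∈ Xp (Setting.B n ε)) (t : ℕ) :
    4 * tp x t = 4 * ((t : ℤ) + 1) - x.2 - 2 * x.1 + 2 := by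
  have h := hx.2.2
  unfold tp; omega

lemma mem_diag {n : ℕ} {ε : ℝ} {T : ℕ} {w : Fin T → ℕ × ℤ}
    (hw' : ∀ t, w t ∈ Xp (Setting.B n ε)) (s q : ℤ) :
    (s, q) ∈ diagOf (Setting.B n ε) w ↔
      ∃ t : Fin T, q = (t : ℤ) + 1 ∧ tp (w t) t ≤ s ∧ s < tp (w t) t + (w t).1 := by
  unfold diagOf rd
  simp only [Set.mem_ofPred_eq]
  refine exists_congr fun t => and_congr_right fun _ => ?_
  have := tp_eq (hw' t) t
  omega

lemma mem_diag' {n : ℕ} {ε : ℝ} {T : ℕ} {w : Fin T → ℕ × ℤ}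
    (hw' : ∀ t, w t ∈ Xp (Setting.B n ε)) (s : ℤ) (t : Fin T) :
    (s, (t : ℤ) + 1) ∈ diagOf (Setting.B n ε) w ↔
      tp (w t) t ≤ s ∧ s < tp (w t) t + (w t).1 := by
  rw [mem_diag hw']
  constructor
  · rintro ⟨t', h, h'⟩
    have : t = t' := Fin.ext (by omega)
    subst this; exact h'
  · intro h; exact ⟨t, rfl, h⟩

lemma snake_step {n : ℕ} {ε : ℝ} {T : ℕ} {w : Fin T → ℕ × ℤ} (hw : IsSnake (Setting.B n ε) w)
    (hw' : ∀ t, w t ∈ Xp (Setting.B n ε)) (t : Fin T) (h : (t : ℕ) + 1 < T) :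
    2 * |((w ⟨t + 1, h⟩).1 : ℤ) - (w t).1| + 4 ≤ (w ⟨t + 1, h⟩).2 - (w t).2 := by
  have a := hw.2 t h
  have b := (hw' t).2.1
  have b' := (hw' ⟨t+1, h⟩).2.1
  simp only [SnakePos] at a
  rw [if_neg (by omega), if_neg (by omega)] at a
  exact a.1

/-- the row condition on two columns is the compatibility condition -/
lemma row_iff (n : ℕ) (ε : ℝ) (x x' : ℕ × ℤ) (c c' : Finset ℕ × Finset ℕ) (t : ℕ)
    (hx : x ∈ Xp (Setting.B n ε)) (hx' : x' ∈ Xp (Setting.B n ε))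
    (hs : 2 * |(x'.1 : ℤ) - x.1| + 4 ≤ x'.2 - x.2) (hc : Valid n x.1 c) (hc' : Valid n x'.1 c') :
    (∀ s : ℤ, tp x t ≤ s → s < tp x t + x.1 → tp x' (t+1) ≤ s → s < tp x' (t+1) + x'.1 →
      ordB n (letter x.1 c.1 c.2 (s - tp x t)) ≤ ordB n (letter x'.1 c'.1 c'.2 (s - tp x' (t+1))) ∧
      ¬ (letter x.1 c.1 c.2 (s - tp x t) = 0 ∧ letter x'.1 c'.1 c'.2 (s - tp x' (t+1)) = 0)) ↔
    Adj n x c x' c' := by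
  obtain ⟨U, V⟩ := c
  obtain ⟨U', V'⟩ := c'
  obtain ⟨hU, hV, hcard⟩ := hc
  obtain ⟨hU', hV', hcard'⟩ := hc'
  simp only at hU hV hcard hU' hV' hcard' ⊢
  have e := tp_eq hx t
  have e' := tp_eq hx' (t + 1)
  push_cast at e'
  have ab1 := abs_le.1 (le_refl |(x'.1 : ℤ) - x.1|)
  have i0 : 1 ≤ x.1 := by rcases hx.1 with h | h
                          · have := hx.2.1; omega
                          · exact h.1
  have P := fun (s : ℤ) (h : tp x t ≤ s) (r : ℕ) => letter_pos n x.1 hU hV hcard (j := s - tp x t) (by omega) r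
  have P' := fun (s : ℤ) (h : tp x' (t+1) ≤ s) (r : ℕ) => letter_pos n x'.1 hU' hV' hcard' (j := s - tp x' (t+1)) (by omega) r
  have M := fun (s : ℤ) (h : s < tp x t + x.1) (r : ℕ) => letter_negv n x.1 hU hV hcard (j := s - tp x t) (by omega) r
  have M' := fun (s : ℤ) (h : s < tp x' (t+1) + x'.1) (r : ℕ) => letter_negv n x'.1 hU' hV' hcard' (j := s - tp x' (t+1)) (by omega) r
  have R := fun s : ℤ => letter_range n x.1 hU hV hcard (s - tp x t)
  have R' := fun s : ℤ => letter_range n x'.1 hU' hV' hcard' (s - tp x' (t+1))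
  have un := cnt_n hU
  have vn := cnt_n hV
  have un' := cnt_n hU'
  have vn' := cnt_n hV'
  have tt : tp x' (t+1) ≤ tp x t := by omega
  have bb : tp x' (t+1) + x'.1 ≤ tp x t + x.1 := by omega
  constructor
  · intro H
    refine ⟨fun r hr => ?_, fun r hr => ?_, ?_⟩
    · unfold yA
      by_contra hh
      dsimp only at hh
      have l1 := cnt_le_card U r
      have l2 := cnt_le_card U' r
      let s := tp x t + cnt U r
      have a := H s (by omega) (by omega) (by omega) (by omega)
      have b := P s (by omega) r
      have b' := P' s (by omega) r
      have d := P s (by omega) n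
      have d' := P' s (by omega) n
      have f := R s
      have f' := R' s
      unfold ordB at a
      split_ifs at a <;> omega
    · unfold yB
      by_contra hh
      dsimp only at hh
      have l1 := cnt_le_card V r
      have l2 := cnt_le_card V' r
      let s := tp x' (t+1) + x'.1 - cnt V' r - 1
      have a := H s (by omega) (by omega) (by omega) (by omega)
      have b := M s (by omega) r
      have b' := M' s (by omega) r
      have f := R s
      have f' := R' s
      unfold ordB at a
      split_ifs at a <;> omega
    · by_contra hh
      dsimp only at hh
      let s := tp x t + U.card
      have a := H s (by omega) (by omega) (by omega) (by omega)
      have b := P s (by omega) n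
      have b' := M' s (by omega) n
      have f := R s
      have f' := R' s
      unfold ordB at a
      split_ifs at a <;> omega
  · rintro ⟨H1, H2, H3⟩ s h1 h2 h3 h4
    simp only at H3
    unfold yA at H1
    unfold yB at H2
    have H1' : ∀ r ≤ n, tp x' (t+1) + cnt U' r ≤ tp x t + cnt U r := by
      intro r hr
      rcases Nat.lt_or_ge r n with h | h
      · have := H1 r h
        simp only at this
        omega
      · have : r = n := by omega
        subst this
        omega
    have H2' : ∀ r ≤ n, tp x' (t+1) + x'.1 - cnt V' r ≤ tp x t + x.1 - cnt V r := by
      intro r hr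
      rcases Nat.lt_or_ge r n with h | h
      · have := H2 r h
        simp only at this
        omega
      · have : r = n := by omega
        subst this
        omega
    have f := R s
    have f' := R' s
    by_cases q1 : 1 ≤ letter x'.1 U' V' (s - tp x' (t+1))
    · have g := H1' (letter x'.1 U' V' (s - tp x' (t+1))).toNat (by omega)
      have g1 := P s h1 (letter x'.1 U' V' (s - tp x' (t+1))).toNat
      have g2 := P' s h3 (letter x'.1 U' V' (s - tp x' (t+1))).toNat
      unfold ordB
      split_ifs <;> omega
    · by_cases q2 : letter x.1 U V (s - tp x t) ≤ -1
      · have g := H2' (-letter x.1 U V (s - tp x t)).toNat (by omega)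
        have g1 := M s h2 (-letter x.1 U V (s - tp x t)).toNat
        have g2 := M' s h4 (-letter x.1 U V (s - tp x t)).toNat
        unfold ordB
        split_ifs <;> omega
      · have g1 := P s h1 n
        have g2 := M' s h4 n
        unfold ordB
        split_ifs <;> omega

lemma toTab_bij (n : ℕ) (ε : ℝ) {T : ℕ} (w : Fin T → ℕ × ℤ) (hw : IsSnake (Setting.B n ε) w)
    (hw' : ∀ t, w t ∈ Xp (Setting.B n ε)) :
    Set.BijOn (toTab w) (Q n w) (TabB n (diagOf (Setting.B n ε) w)) := by
  refine ⟨?_, ?_, ?_⟩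
  · rintro c ⟨hv, ha⟩
    refine ⟨?_, ?_, ?_, ?_⟩
    · rintro ⟨s, q⟩ hq
      obtain ⟨t, rfl, -⟩ := (mem_diag hw' s q).1 hq
      rw [toTab_apply]
      have := letter_range n _ (hv t).1 (hv t).2.1 (hv t).2.2 (s - tp (w t) t)
      show _ ∨ _ ∨ _
      omega
    · rintro ⟨s, q⟩ hq
      unfold toTab
      apply Finset.sum_eq_zero
      intro t _
      split_ifs with h
      · simp only at h
        subst h
        rw [mem_diag' hw'] at hq
        unfold letter
        rw [if_pos]
        simp only
        omega
      · rfl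
    · intro s q h1 h2
      obtain ⟨t, rfl, k1⟩ := (mem_diag hw' _ _).1 h1
      obtain ⟨t', e, k2⟩ := (mem_diag hw' _ _).1 h2
      have hT : (t : ℕ) + 1 < T := by have := t'.2; omega
      have : t' = ⟨t + 1, hT⟩ := Fin.ext (by simp; omega)
      subst this
      have hr := (row_iff n ε (w t) (w ⟨t + 1, hT⟩) (c t) (c ⟨t + 1, hT⟩) t (hw' _) (hw' _)
        (snake_step hw hw' t hT) (hv _) (hv _)).2 (ha t hT) s k1.1 k1.2 k2.1 k2.2
      have e2 := toTab_apply w c ⟨t + 1, hT⟩ s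
      push_cast at e2
      rw [toTab_apply, e2]
      exact hr
    · intro s q h1 h2
      obtain ⟨t, rfl, k1⟩ := (mem_diag hw' _ _).1 h1
      rw [mem_diag' hw'] at h2
      rw [toTab_apply, toTab_apply]
      have e : s + 1 - tp (w t) t = s - tp (w t) t + 1 := by ring
      rw [e]
      exact letter_col n _ (hv t).1 (hv t).2.1 (hv t).2.2 (by omega) (by omega)
  · rintro c ⟨hv, ha⟩ c' ⟨hv', ha'⟩ h
    funext t
    have := letter_inj n _ (hv t).1 (hv t).2.1 (hv t).2.2 (hv' t).1 (hv' t).2.1 (hv' t).2.2 (by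
      intro j _ _
      have h1 := toTab_apply w c t (j + tp (w t) t)
      have h2 := toTab_apply w c' t (j + tp (w t) t)
      rw [add_sub_cancel_right] at h1 h2
      rw [← h1, ← h2, h])
    exact Prod.ext this.1 this.2
  · rintro f ⟨f1, f2, f3, f4⟩
    have hex : ∀ t : Fin T, ∃ c : Finset ℕ × Finset ℕ, Valid n (w t).1 c ∧
        ∀ j : ℤ, 0 ≤ j → j < (w t).1 → f (j + tp (w t) t, (t : ℤ) + 1) = letter (w t).1 c.1 c.2 j := by
      intro t
      obtain ⟨U, V, hU, hV, hc, h⟩ := col_surj n (w t).1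
        (fun j => f (j + tp (w t) t, (t : ℤ) + 1)) (by
          intro j h0 h1
          have := f1 (j + tp (w t) t, (t : ℤ) + 1) ((mem_diag' hw' _ t).2 (by omega))
          have : _ ∨ _ ∨ _ := this
          omega) (by
          intro j h0 h1
          have := f4 (j + tp (w t) t) ((t : ℤ) + 1) ((mem_diag' hw' _ t).2 (by omega))
            ((mem_diag' hw' _ t).2 (by omega))
          have e : j + 1 + tp (w t) t = j + tp (w t) t + 1 := by ring
          rw [e]; exact this)
      exact ⟨(U, V), ⟨hU, hV, hc⟩, h⟩
    choose c hv hc using hex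
    have hc' : ∀ (t : Fin T) (s : ℤ), tp (w t) t ≤ s → s < tp (w t) t + (w t).1 →
        f (s, (t : ℤ) + 1) = letter (w t).1 (c t).1 (c t).2 (s - tp (w t) t) := by
      intro t s h1 h2
      have := hc t (s - tp (w t) t) (by omega) (by omega)
      rwa [sub_add_cancel] at this
    refine ⟨c, ⟨hv, ?_⟩, ?_⟩
    · intro t hT
      refine (row_iff n ε (w t) (w ⟨t + 1, hT⟩) (c t) (c ⟨t + 1, hT⟩) t (hw' _) (hw' _)
        (snake_step hw hw' t hT) (hv _) (hv _)).1 ?_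
      intro s h1 h2 h3 h4
      have e1 := hc' t s h1 h2
      have e2 := hc' ⟨t + 1, hT⟩ s h3 h4
      have m1 := (mem_diag' hw' s t).2 ⟨h1, h2⟩
      have m2 := (mem_diag' hw' s ⟨t + 1, hT⟩).2 ⟨h3, h4⟩
      push_cast at e2 m2
      have := f3 s ((t : ℤ) + 1) m1 m2
      rw [e1, e2] at this
      exact this
    · funext ⟨s, q⟩
      by_cases hq : (s, q) ∈ diagOf (Setting.B n ε) w
      · obtain ⟨t, rfl, h1, h2⟩ := (mem_diag hw' s q).1 hq
        rw [toTab_apply, hc' t s h1 h2]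
      · rw [f2 _ hq]
        unfold toTab
        apply Finset.sum_eq_zero
        intro t _
        split_ifs with h
        · simp only at h
          subst h
          rw [mem_diag' hw'] at hq
          unfold letter
          rw [if_pos]
          simp only
          omega
        · rfl


noncomputable def spinX (n : ℕ) (l : ℤ) (r : ℕ) : ℝ :=
  if r < n then (if l % 4 = 3 then 2 * (r : ℝ) else 4 * (n : ℝ) - 2 - 2 * (r : ℝ))
  else 2 * (n : ℝ) - 1

noncomputable def spinY (n : ℕ) (ε : ℝ) (l : ℤ) (S : Finset ℕ) (r : ℕ) : ℝ :=
  if r < n then (l : ℝ) + 2 * (n : ℝ) - 1 + 2 * (r : ℝ) - 4 * (cnt S r : ℝ)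
  else (l : ℝ) + 4 * (n : ℝ) - 2 - 4 * (cnt S n : ℝ) + (if n ∈ S then 2 - ε else ε)

noncomputable def spinL (n : ℕ) (ε : ℝ) (l : ℤ) (S : Finset ℕ) : List (ℝ × ℝ) :=
  (List.range (n + 1)).map (fun r => (spinX n l r, spinY n ε l S r))

lemma spinL_length (n : ℕ) (ε : ℝ) (l : ℤ) (S : Finset ℕ) : (spinL n ε l S).length = n + 1 := by
  simp [spinL]

lemma pt_spinL (n : ℕ) (ε : ℝ) (l : ℤ) (S : Finset ℕ) (r : ℕ) (hr : r < n + 1) :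
    pt (spinL n ε l S) r = (spinX n l r, spinY n ε l S r) := by
  unfold pt
  rw [List.getD_eq_getElem _ _ (by rw [spinL_length]; exact hr)]
  simp [spinL]

lemma spin_step (n : ℕ) (ε : ℝ) (l : ℤ) (S : Finset ℕ) (r : ℕ) (hr : r + 2 ≤ n) :
    spinY n ε l S (r + 1) - spinY n ε l S r = if r + 1 ∈ S then -2 else 2 := by
  unfold spinY
  rw [if_pos (by omega), if_pos (by omega), cnt_succ]
  split_ifs <;> push_cast <;> ring

lemma spin_last (n : ℕ) (hn : 2 ≤ n) (ε : ℝ) (l : ℤ) (S : Finset ℕ) :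
    spinY n ε l S n - spinY n ε l S (n - 1) = if n ∈ S then -(1 + ε) else 1 + ε := by
  unfold spinY
  rw [if_neg (lt_irrefl n), if_pos (show n - 1 < n by omega)]
  obtain ⟨m, rfl⟩ : ∃ m, n = m + 1 := ⟨n - 1, by omega⟩
  rw [cnt_succ, Nat.add_sub_cancel]
  split_ifs <;> push_cast <;> ring

lemma spin_mem (n : ℕ) (hn : 2 ≤ n) (ε : ℝ) (hε : 0 < ε) (l : ℤ) (p : List (ℝ × ℝ)) :
    p ∈ pathsBspin n ε l ↔ ∃ S : Finset ℕ, S ⊆ Finset.Icc 1 n ∧ p = spinL n ε l S := by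
  constructor
  · rintro ⟨h1, h2, h3, h4, h5, h6⟩
    let S := (Finset.Icc 1 n).filter (fun r => (pt p r).2 < (pt p (r - 1)).2)
    have hS : S ⊆ Finset.Icc 1 n := Finset.filter_subset _ _
    have hy : ∀ r < n, (pt p r).2 = spinY n ε l S r := by
      intro r
      induction r with
      | zero =>
        intro h
        rw [h4]; unfold spinY; rw [if_pos h, cnt_zero hS]; simp
      | succ r ih =>
        intro h
        have a := ih (by omega)
        have b := spin_step n ε l S r (by omega)
        have e : r + 1 ∈ S ↔ (pt p (r + 1)).2 < (pt p r).2 := by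
          simp [S]; omega
        rcases h5 r (by omega) with c | c
        · rw [if_neg (by rw [e]; linarith)] at b; linarith
        · rw [if_pos (by rw [e]; linarith)] at b; linarith
    have hyn : (pt p n).2 = spinY n ε l S n := by
      have a := hy (n - 1) (by omega)
      have b := spin_last n hn ε l S
      have e : n ∈ S ↔ (pt p n).2 < (pt p (n - 1)).2 := by
        simp [S]; omega
      rcases h6 with c | c
      · rw [if_neg (by rw [e]; linarith)] at b; linarith
      · rw [if_pos (by rw [e]; linarith)] at b; linarith
    refine ⟨S, hS, ?_⟩
    apply List.ext_getElem
    · rw [spinL_length, h1]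
    · intro r hr1 hr2
      have q1 : p[r] = pt p r := by unfold pt; rw [List.getD_eq_getElem]
      have q2 : (spinL n ε l S)[r] = pt (spinL n ε l S) r := by
        unfold pt; rw [List.getD_eq_getElem]
      rw [q1, q2, pt_spinL _ _ _ _ _ (by omega)]
      rcases Nat.lt_or_ge r n with h | h
      · refine Prod.ext ?_ (hy r h)
        unfold spinX; rw [if_pos h]
        split_ifs at h2 ⊢ with hl
        · exact h2 r h
        · exact h2 r h
      · have : r = n := by omega
        subst this
        refine Prod.ext ?_ hyn
        unfold spinX; rw [if_neg (by omega)]; exact h3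
  · rintro ⟨S, hS, rfl⟩
    have P := fun r hr => pt_spinL n ε l S r hr
    refine ⟨spinL_length _ _ _ _, ?_, ?_, ?_, ?_, ?_⟩
    · split_ifs with hl
      · intro r hr; rw [P r (by omega)]; simp [spinX, hr, hl]
      · intro r hr; rw [P r (by omega)]; simp [spinX, hr, hl]
    · rw [P n (by omega)]; simp [spinX]
    · rw [P 0 (by omega)]; simp [spinY, cnt_zero hS]; omega
    · intro r hr
      rw [P r (by omega), P (r + 1) (by omega)]
      have := spin_step n ε l S r hr
      dsimp only
      split_ifs at this <;> simp [this]
    · rw [P n (by omega), P (n - 1) (by omega)]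
      have := spin_last n hn ε l S
      dsimp only
      split_ifs at this <;> simp [this]

def lA (n : ℕ) (x : ℕ × ℤ) : ℤ := x.2 - (2 * (n : ℤ) - 2 * (x.1 : ℤ) - 1)
def lB (n : ℕ) (x : ℕ × ℤ) : ℤ := x.2 + (2 * (n : ℤ) - 2 * (x.1 : ℤ) - 1)

/-- points of the first half -/
noncomputable def ptA (n : ℕ) (ε : ℝ) (x : ℕ × ℤ) (U : Finset ℕ) (r : ℕ) : ℝ × ℝ :=
  (spinX n (lA n x) r, spinY n ε (lA n x) U r)
/-- points of the second half -/
noncomputable def ptB (n : ℕ) (ε : ℝ) (x : ℕ × ℤ) (V : Finset ℕ) (r : ℕ) : ℝ × ℝ :=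
  (spinX n (lB n x) r, spinY n ε (lB n x) (Finset.Icc 1 n \ V) r)

/-- the path of a configuration -/
noncomputable def mkPath (n : ℕ) (ε : ℝ) (x : ℕ × ℤ) (c : Finset ℕ × Finset ℕ) : List (ℝ × ℝ) :=
  spinL n ε (lA n x) c.1 ++ (spinL n ε (lB n x) (Finset.Icc 1 n \ c.2)).reverse

def sg (n : ℕ) : ℤ := if n % 2 = 0 then 1 else -1

def aS (n : ℕ) (x : ℕ × ℤ) (U : Finset ℕ) : ℤ := x.2 + 2 * x.1 + 2 * n - 1 - 4 * U.card
def bS (n : ℕ) (x : ℕ × ℤ) (V : Finset ℕ) : ℤ := x.2 - 2 * x.1 + 2 * n - 1 + 4 * V.card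

lemma ptA_snd (n : ℕ) (ε : ℝ) (x : ℕ × ℤ) (U : Finset ℕ) (r : ℕ) (hr : r < n) :
    (ptA n ε x U r).2 = (yA x U r : ℤ) := by
  simp only [ptA, spinY, lA, yA, if_pos hr]; push_cast; ring

lemma ptA_snd_n (n : ℕ) (ε : ℝ) (x : ℕ × ℤ) (U : Finset ℕ) (hU : U ⊆ Finset.Icc 1 n) :
    (ptA n ε x U n).2 = (aS n x U : ℤ) + (if n ∈ U then 2 - ε else ε) := by
  simp only [ptA, spinY, lA, aS, lt_irrefl, if_false, cnt_n hU]; push_cast; ring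

lemma ptB_snd (n : ℕ) (ε : ℝ) (x : ℕ × ℤ) (V : Finset ℕ) (hV : V ⊆ Finset.Icc 1 n)
    (r : ℕ) (hr : r < n) : (ptB n ε x V r).2 = (yB n x V r : ℤ) := by
  have h := cnt_compl hV r hr.le
  have h' : (cnt (Finset.Icc 1 n \ V) r : ℝ) + cnt V r = r := by exact_mod_cast h
  simp only [ptB, spinY, lB, yB, if_pos hr]; push_cast; linarith

lemma ptB_snd_n (n : ℕ) (hn : 2 ≤ n) (ε : ℝ) (x : ℕ × ℤ) (V : Finset ℕ) (hV : V ⊆ Finset.Icc 1 n) :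
    (ptB n ε x V n).2 = (bS n x V : ℤ) + (if n ∈ V then -2 + ε else -ε) := by
  have h := cnt_compl hV n le_rfl
  rw [cnt_n hV] at h
  have h' : (cnt (Finset.Icc 1 n \ V) n : ℝ) + V.card = n := by exact_mod_cast h
  have e : n ∈ Finset.Icc 1 n \ V ↔ n ∉ V := by simp; omega
  simp only [ptB, spinY, lB, bS, lt_irrefl, if_false, e]
  by_cases g : n ∈ V
  · simp [g]; linarith
  · simp [g]; linarith

lemma ptA_fst (n : ℕ) (ε : ℝ) {x : ℕ × ℤ} (hx : x ∈ Xp (Setting.B n ε)) (U : Finset ℕ) (r : ℕ)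
    (hr : r < n) : (ptA n ε x U r).1 = ((2 * n - 1 - sg n * (2 * n - 1 - 2 * r) : ℤ) : ℝ) := by
  have h : (lA n x) % 4 = 3 ↔ n % 2 = 0 := by
    have := hx.2.2; unfold lA; omega
  simp only [ptA, spinX, if_pos hr, h, sg]
  split_ifs <;> push_cast <;> ring

lemma ptB_fst (n : ℕ) (ε : ℝ) {x : ℕ × ℤ} (hx : x ∈ Xp (Setting.B n ε)) (U : Finset ℕ) (r : ℕ)
    (hr : r < n) : (ptB n ε x U r).1 = ((2 * n - 1 + sg n * (2 * n - 1 - 2 * r) : ℤ) : ℝ) := by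
  have h : (lB n x) % 4 = 3 ↔ ¬ n % 2 = 0 := by
    have := hx.2.2; unfold lB; omega
  simp only [ptB, spinX, if_pos hr, h, sg]
  split_ifs <;> push_cast <;> ring

lemma ptA_fst_n (n : ℕ) (ε : ℝ) (x : ℕ × ℤ) (U : Finset ℕ) :
    (ptA n ε x U n).1 = ((2 * n - 1 : ℤ) : ℝ) := by
  simp [ptA, spinX]

lemma ptB_fst_n (n : ℕ) (ε : ℝ) (x : ℕ × ℤ) (U : Finset ℕ) :
    (ptB n ε x U n).1 = ((2 * n - 1 : ℤ) : ℝ) := by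
  simp [ptB, spinX]

lemma mkPath_length (n : ℕ) (ε : ℝ) (x : ℕ × ℤ) (c : Finset ℕ × Finset ℕ) :
    (mkPath n ε x c).length = 2 * n + 2 := by
  simp [mkPath, spinL_length]; ring

lemma pt_mkPath_A (n : ℕ) (ε : ℝ) (x : ℕ × ℤ) (c : Finset ℕ × Finset ℕ) (r : ℕ) (hr : r ≤ n) :
    pt (mkPath n ε x c) r = ptA n ε x c.1 r := by
  unfold mkPath ptA
  rw [← pt_spinL _ _ _ _ _ (by omega)]
  unfold pt
  rw [List.getD_append _ _ _ _ (by rw [spinL_length]; omega)]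

lemma pt_mkPath_B (n : ℕ) (ε : ℝ) (x : ℕ × ℤ) (c : Finset ℕ × Finset ℕ) (r : ℕ) (hr : r ≤ n) :
    pt (mkPath n ε x c) (2 * n + 1 - r) = ptB n ε x c.2 r := by
  unfold mkPath ptB
  rw [← pt_spinL _ _ _ _ _ (by omega)]
  unfold pt
  rw [List.getD_append_right _ _ _ _ (by rw [spinL_length]; omega)]
  rw [List.getD_eq_getElem _ _ (by simp [spinL_length]; omega),
    List.getD_eq_getElem _ _ (by simp [spinL_length]; omega), List.getElem_reverse]
  congr 1
  simp [spinL_length]; omega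

lemma mem_mkPath (n : ℕ) (ε : ℝ) (x : ℕ × ℤ) (c : Finset ℕ × Finset ℕ) (q : ℝ × ℝ) :
    q ∈ mkPath n ε x c ↔ ∃ r, r ≤ n ∧ (q = ptA n ε x c.1 r ∨ q = ptB n ε x c.2 r) := by
  simp only [mkPath, spinL, List.mem_append, List.mem_reverse, List.mem_map, List.mem_range,
    ptA, ptB]
  constructor
  · rintro (⟨r, h, rfl⟩ | ⟨r, h, rfl⟩)
    · exact ⟨r, by omega, Or.inl rfl⟩
    · exact ⟨r, by omega, Or.inr rfl⟩
  · rintro ⟨r, h, rfl | rfl⟩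
    · exact Or.inl ⟨r, by omega, rfl⟩
    · exact Or.inr ⟨r, by omega, rfl⟩

lemma mid_iff (n : ℕ) (hn : 2 ≤ n) (ε : ℝ) (hε : 0 < ε ∧ ε < 1 / 2) (x : ℕ × ℤ) (U V : Finset ℕ)
    (hU : U ⊆ Finset.Icc 1 n) (hV : V ⊆ Finset.Icc 1 n) :
    0 < (ptA n ε x U n).2 - (ptB n ε x V n).2 ↔ U.card + V.card ≤ x.1 := by
  rw [ptA_snd_n _ _ _ _ hU, ptB_snd_n _ hn _ _ _ hV]
  have e : (aS n x U : ℝ) - bS n x V = 4 * ((x.1 : ℝ) - U.card - V.card) := by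
    simp only [aS, bS]; push_cast; ring
  constructor
  · intro h
    by_contra hh
    have : (x.1 : ℝ) + 1 ≤ U.card + V.card := by exact_mod_cast (by omega : x.1 + 1 ≤ U.card + V.card)
    split_ifs at h <;> linarith
  · intro h
    have : (U.card : ℝ) + V.card ≤ x.1 := by exact_mod_cast h
    split_ifs <;> linarith

lemma path_iff (n : ℕ) (hn : 2 ≤ n) (ε : ℝ) (hε : 0 < ε ∧ ε < 1 / 2) {x : ℕ × ℤ}
    (hx : x ∈ Xp (Setting.B n ε)) (p : List (ℝ × ℝ)) :
    p ∈ P (Setting.B n ε) x.1 x.2 ↔ ∃ c, Valid n x.1 c ∧ p = mkPath n ε x c := by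
  have hxn := hx.2.1
  show p ∈ pathsB n ε x.1 x.2 ↔ _
  unfold pathsB
  rw [if_neg (by omega)]
  simp only [Set.mem_ofPred_eq]
  constructor
  · rintro ⟨a, b, ha, hb, rfl, h1, h2⟩
    obtain ⟨U, hU, rfl⟩ := (spin_mem n hn ε hε.1 _ _).1 ha
    obtain ⟨W, hW, rfl⟩ := (spin_mem n hn ε hε.1 _ _).1 hb
    have e : Finset.Icc 1 n \ (Finset.Icc 1 n \ W) = W := by
      rw [Finset.sdiff_sdiff_eq_self hW]
    rw [pt_spinL _ _ _ _ _ (by omega), pt_spinL _ _ _ _ _ (by omega)] at h2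
    refine ⟨(U, Finset.Icc 1 n \ W), ⟨hU, Finset.sdiff_subset, ?_⟩, ?_⟩
    · apply (mid_iff n hn ε hε x U (Finset.Icc 1 n \ W) hU Finset.sdiff_subset).1
      unfold ptA ptB
      rw [e]; exact h2
    · unfold mkPath; simp only [e]; rfl
  · rintro ⟨⟨U, V⟩, ⟨hU, hV, hc⟩, rfl⟩
    refine ⟨_, _, (spin_mem n hn ε hε.1 _ _).2 ⟨U, hU, rfl⟩,
      (spin_mem n hn ε hε.1 _ _).2 ⟨Finset.Icc 1 n \ V, Finset.sdiff_subset, rfl⟩, rfl, ?_, ?_⟩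
    · rw [pt_spinL _ _ _ _ _ (by omega), pt_spinL _ _ _ _ _ (by omega)]; simp [spinX]
    · rw [pt_spinL _ _ _ _ _ (by omega), pt_spinL _ _ _ _ _ (by omega)]
      exact (mid_iff n hn ε hε x U V hU hV).2 hc

lemma mkPath_inj (n : ℕ) (hn : 2 ≤ n) (ε : ℝ) (hε : 0 < ε ∧ ε < 1 / 2) {x : ℕ × ℤ}
    {c c' : Finset ℕ × Finset ℕ} (hc : Valid n x.1 c) (hc' : Valid n x.1 c')
    (h : mkPath n ε x c = mkPath n ε x c') : c = c' := by
  obtain ⟨m, rfl⟩ : ∃ m, n = m + 1 := ⟨n - 1, by omega⟩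
  refine Prod.ext (cnt_ext hc.1 hc'.1 ?_) (cnt_ext hc.2.1 hc'.2.1 ?_)
  · have key : ∀ r < m + 1, cnt c.1 r = cnt c'.1 r := by
      intro r hr
      have := pt_mkPath_A (m+1) ε x c r hr.le
      rw [h, pt_mkPath_A _ _ _ _ _ hr.le] at this
      have := congrArg Prod.snd this
      rw [ptA_snd _ _ _ _ _ hr, ptA_snd _ _ _ _ _ hr] at this
      have : yA x c'.1 r = yA x c.1 r := by exact_mod_cast this
      unfold yA at this; omega
    intro r hr
    rcases Nat.lt_or_ge r (m+1) with g | g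
    · exact key r g
    · have : r = m + 1 := by omega
      subst this
      have := pt_mkPath_A (m+1) ε x c (m+1) hr
      rw [h, pt_mkPath_A _ _ _ _ _ hr] at this
      have := congrArg Prod.snd this
      rw [ptA_snd_n _ _ _ _ hc.1, ptA_snd_n _ _ _ _ hc'.1] at this
      simp only [aS, ← cnt_n hc.1, ← cnt_n hc'.1, cnt_succ, key m (by omega)] at this ⊢
      split_ifs at this ⊢ <;> first | rfl | (push_cast at this; exfalso; linarith)
  · have key : ∀ r < m + 1, cnt c.2 r = cnt c'.2 r := by
      intro r hr
      have := pt_mkPath_B (m+1) ε x c r hr.le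
      rw [h, pt_mkPath_B _ _ _ _ _ hr.le] at this
      have := congrArg Prod.snd this
      rw [ptB_snd _ _ _ _ hc.2.1 _ hr, ptB_snd _ _ _ _ hc'.2.1 _ hr] at this
      have : yB (m+1) x c'.2 r = yB (m+1) x c.2 r := by exact_mod_cast this
      unfold yB at this; omega
    intro r hr
    rcases Nat.lt_or_ge r (m+1) with g | g
    · exact key r g
    · have : r = m + 1 := by omega
      subst this
      have := pt_mkPath_B (m+1) ε x c (m+1) hr
      rw [h, pt_mkPath_B _ _ _ _ _ hr] at this
      have := congrArg Prod.snd this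
      rw [ptB_snd_n _ hn _ _ _ hc.2.1, ptB_snd_n _ hn _ _ _ hc'.2.1] at this
      simp only [bS, ← cnt_n hc.2.1, ← cnt_n hc'.2.1, cnt_succ, key m (by omega)] at this ⊢
      split_ifs at this ⊢ <;> first | rfl | (push_cast at this; exfalso; linarith)


def dd (n r : ℕ) : ℤ := if r < n then 2 * n - 1 - 2 * r else 0

lemma ptA_fst' (n : ℕ) (ε : ℝ) {x : ℕ × ℤ} (hx : x ∈ Xp (Setting.B n ε)) (U : Finset ℕ) (r : ℕ)
    (hr : r ≤ n) : (ptA n ε x U r).1 = ((2 * n - 1 - sg n * dd n r : ℤ) : ℝ) := by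
  rcases Nat.lt_or_ge r n with h | h
  · rw [ptA_fst n ε hx U r h, dd, if_pos h]
  · have : r = n := le_antisymm hr h
    subst this
    rw [ptA_fst_n, dd, if_neg (lt_irrefl _)]; simp

lemma ptB_fst' (n : ℕ) (ε : ℝ) {x : ℕ × ℤ} (hx : x ∈ Xp (Setting.B n ε)) (U : Finset ℕ) (r : ℕ)
    (hr : r ≤ n) : (ptB n ε x U r).1 = ((2 * n - 1 + sg n * dd n r : ℤ) : ℝ) := by
  rcases Nat.lt_or_ge r n with h | h
  · rw [ptB_fst n ε hx U r h, dd, if_pos h]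
  · have : r = n := le_antisymm hr h
    subst this
    rw [ptB_fst_n, dd, if_neg (lt_irrefl _)]; simp

lemma sg_cases (n : ℕ) : sg n = 1 ∨ sg n = -1 := by
  unfold sg; split_ifs <;> simp

lemma dd_inj {n r r' : ℕ} (hr : r ≤ n) (hr' : r' ≤ n) (h : sg n * dd n r = sg n * dd n r') :
    r = r' := by
  rcases sg_cases n with e | e <;> rw [e] at h <;> unfold dd at h <;> split_ifs at h <;> omega

lemma dd_opp {n r r' : ℕ} (hr : r ≤ n) (hr' : r' ≤ n) (h : - (sg n * dd n r) = sg n * dd n r') :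
    r = n ∧ r' = n := by
  rcases sg_cases n with e | e <;> rw [e] at h <;> unfold dd at h <;> split_ifs at h <;> omega

lemma strict_iff (n : ℕ) (hn : 2 ≤ n) (ε : ℝ) (hε : 0 < ε ∧ ε < 1 / 2) {x x' : ℕ × ℤ}
    (hx : x ∈ Xp (Setting.B n ε)) (hx' : x' ∈ Xp (Setting.B n ε)) {c c' : Finset ℕ × Finset ℕ}
    (hc : Valid n x.1 c) (hc' : Valid n x'.1 c') :
    StrictlyAbove (mkPath n ε x c) (mkPath n ε x' c') ↔ Adj n x c x' c' := by
  have m1 := (mid_iff n hn ε hε x _ _ hc.1 hc.2.1).2 hc.2.2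
  have m2 := (mid_iff n hn ε hε x' _ _ hc'.1 hc'.2.1).2 hc'.2.2
  constructor
  · intro h
    refine ⟨fun r hr => ?_, fun r hr => ?_, ?_⟩
    · have := h _ ((mem_mkPath _ _ _ _ _).2 ⟨r, hr.le, Or.inl rfl⟩)
        _ ((mem_mkPath _ _ _ _ _).2 ⟨r, hr.le, Or.inl rfl⟩)
        (by rw [ptA_fst' n ε hx _ _ hr.le, ptA_fst' n ε hx' _ _ hr.le])
      rw [ptA_snd _ _ _ _ _ hr, ptA_snd _ _ _ _ _ hr] at this
      exact_mod_cast this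
    · have := h _ ((mem_mkPath _ _ _ _ _).2 ⟨r, hr.le, Or.inr rfl⟩)
        _ ((mem_mkPath _ _ _ _ _).2 ⟨r, hr.le, Or.inr rfl⟩)
        (by rw [ptB_fst' n ε hx _ _ hr.le, ptB_fst' n ε hx' _ _ hr.le])
      rw [ptB_snd _ _ _ _ hc.2.1 _ hr, ptB_snd _ _ _ _ hc'.2.1 _ hr] at this
      exact_mod_cast this
    · have := h _ ((mem_mkPath _ _ _ _ _).2 ⟨n, le_rfl, Or.inl rfl⟩)
        _ ((mem_mkPath _ _ _ _ _).2 ⟨n, le_rfl, Or.inr rfl⟩)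
        (by rw [ptA_fst_n, ptB_fst_n])
      rw [ptA_snd_n _ _ _ _ hc.1, ptB_snd_n _ hn _ _ _ hc'.2.1] at this
      have g : (aS n x c.1 : ℝ) < bS n x' c'.2 := by
        split_ifs at this <;> linarith
      have g' : aS n x c.1 < bS n x' c'.2 := by exact_mod_cast g
      unfold aS bS at g'; omega
  · rintro ⟨h1, h2, h3⟩
    have m3 : (ptA n ε x c.1 n).2 < (ptB n ε x' c'.2 n).2 := by
      have g' : aS n x c.1 + 4 ≤ bS n x' c'.2 := by
        have a1 := hx.2.2
        have a2 := hx'.2.2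
        unfold aS bS; omega
      have g : (aS n x c.1 : ℝ) + 4 ≤ bS n x' c'.2 := by exact_mod_cast g'
      rw [ptA_snd_n _ _ _ _ hc.1, ptB_snd_n _ hn _ _ _ hc'.2.1]
      split_ifs <;> linarith
    intro a ha b hb hab
    obtain ⟨r, hr, ha⟩ := (mem_mkPath _ _ _ _ _).1 ha
    obtain ⟨r', hr', hb⟩ := (mem_mkPath _ _ _ _ _).1 hb
    rcases ha with rfl | rfl <;> rcases hb with rfl | rfl
    · rw [ptA_fst' n ε hx _ _ hr, ptA_fst' n ε hx' _ _ hr'] at hab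
      have e := Int.cast_injective hab
      have : r = r' := dd_inj hr hr' (by linarith)
      subst this
      rcases Nat.lt_or_ge r n with g | g
      · rw [ptA_snd _ _ _ _ _ g, ptA_snd _ _ _ _ _ g]
        exact_mod_cast h1 r g
      · have : r = n := le_antisymm hr g
        subst this; linarith
    · rw [ptA_fst' n ε hx _ _ hr, ptB_fst' n ε hx' _ _ hr'] at hab
      have e := Int.cast_injective hab
      obtain ⟨rfl, rfl⟩ := dd_opp hr hr' (by linarith)
      linarith
    · rw [ptB_fst' n ε hx _ _ hr, ptA_fst' n ε hx' _ _ hr'] at hab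
      have e := Int.cast_injective hab
      obtain ⟨rfl, rfl⟩ := dd_opp hr hr' (by linarith)
      linarith
    · rw [ptB_fst' n ε hx _ _ hr, ptB_fst' n ε hx' _ _ hr'] at hab
      have e := Int.cast_injective hab
      have : r = r' := dd_inj hr hr' (by linarith)
      subst this
      rcases Nat.lt_or_ge r n with g | g
      · rw [ptB_snd _ _ _ _ hc.2.1 _ g, ptB_snd _ _ _ _ hc'.2.1 _ g]
        exact_mod_cast h2 r g
      · have : r = n := le_antisymm hr g
        subst this; linarith

lemma Adj.trans' {n : ℕ} {x x' x'' : ℕ × ℤ} {c c' c'' : Finset ℕ × Finset ℕ}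
    (hc' : Valid n x'.1 c') (h : Adj n x c x' c') (h' : Adj n x' c' x'' c'') :
    Adj n x c x'' c'' := by
  refine ⟨fun r hr => (h.1 r hr).trans (h'.1 r hr), fun r hr => (h.2.1 r hr).trans (h'.2.1 r hr), ?_⟩
  have a := h.2.2
  have b := h'.2.2
  have c := hc'.2.2
  omega

noncomputable def toPath (n : ℕ) (ε : ℝ) {T : ℕ} (w : Fin T → ℕ × ℤ)
    (c : Fin T → Finset ℕ × Finset ℕ) : Fin T → List (ℝ × ℝ) := fun t => mkPath n ε (w t) (c t)

lemma Q_adj {n : ℕ} {T : ℕ} {w : Fin T → ℕ × ℤ} {c : Fin T → Finset ℕ × Finset ℕ}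
    (hc : c ∈ Q n w) (s t : Fin T) (h : s < t) : Adj n (w s) (c s) (w t) (c t) := by
  obtain ⟨s, hs⟩ := s
  obtain ⟨t, ht⟩ := t
  have h' : s + 1 ≤ t := h
  clear h
  induction t, h' using Nat.le_induction with
  | base => exact hc.2 ⟨s, hs⟩ ht
  | succ t h ih =>
    exact Adj.trans' (hc.1 ⟨t, by omega⟩) (ih (by omega)) (hc.2 ⟨t, by omega⟩ ht)

lemma toPath_bij (n : ℕ) (hn : 2 ≤ n) (ε : ℝ) (hε : 0 < ε ∧ ε < 1 / 2) {T : ℕ}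
    (w : Fin T → ℕ × ℤ) (hw' : ∀ t, w t ∈ Xp (Setting.B n ε)) :
    Set.BijOn (toPath n ε w) (Q n w) (PBar (Setting.B n ε) w) := by
  refine ⟨?_, ?_, ?_⟩
  · intro c hc
    refine ⟨fun t => (path_iff n hn ε hε (hw' t) _).2 ⟨c t, hc.1 t, rfl⟩, fun s t h => ?_⟩
    exact (strict_iff n hn ε hε (hw' s) (hw' t) (hc.1 s) (hc.1 t)).2 (Q_adj hc s t h)
  · intro c hc c' hc' h
    funext t
    exact mkPath_inj n hn ε hε (hc.1 t) (hc'.1 t) (congrFun h t)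
  · rintro ps ⟨h1, h2⟩
    choose c hc hp using fun t => (path_iff n hn ε hε (hw' t) _).1 (h1 t)
    refine ⟨c, ⟨hc, fun t h => ?_⟩, ?_⟩
    · have := h2 t ⟨t + 1, h⟩ (by simp [Fin.lt_def])
      rw [hp, hp] at this
      exact (strict_iff n hn ε hε (hw' _) (hw' _) (hc _) (hc _)).1 this
    · funext t; exact (hp t).symm


def y0A (x : ℕ × ℤ) (U : Finset ℕ) (j : ℕ) : (ℕ × ℤ) → ℤ := if j = 0 then 0 else Y (j, yA x U j)
def y0B (n : ℕ) (x : ℕ × ℤ) (V : Finset ℕ) (j : ℕ) : (ℕ × ℤ) → ℤ :=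
  if j = 0 then 0 else Y (j, yB n x V j)

def ii (U : Finset ℕ) (j : ℕ) : ℤ := if j ∈ U then 1 else 0

def NA (y : ℕ → (ℕ × ℤ) → ℤ) (U : Finset ℕ) (n : ℕ) : (ℕ × ℤ) → ℤ :=
  ∑ j ∈ Finset.range n, (ii U j - ii U (j + 1)) • y j

def monF (n : ℕ) (x : ℕ × ℤ) (c : Finset ℕ × Finset ℕ) : (ℕ × ℤ) → ℤ :=
  NA (y0A x c.1) c.1 n - NA (y0B n x c.2) c.2 n
    + ii c.1 n • (Y (n, aS n x c.1) + Y (n, aS n x c.1 + 2))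
    - ii c.2 n • (Y (n, bS n x c.2) + Y (n, bS n x c.2 - 2))
    + (Y (n, bS n x c.2) - Y (n, aS n x c.1))

lemma abelS (y : ℕ → (ℕ × ℤ) → ℤ) (h0 : y 0 = 0) (U : Finset ℕ) (m : ℕ) :
    ∑ r ∈ Finset.range m, ii U (r + 1) • (y (r + 1) - y r) = NA y U m + ii U m • y m := by
  unfold NA
  induction m with
  | zero => simp [h0]
  | succ m ih =>
    rw [Finset.sum_range_succ, Finset.sum_range_succ, ih]
    module

lemma sum_sub (n : ℕ) (U : Finset ℕ) (hU : U ⊆ Finset.Icc 1 n) (G : ℕ → (ℕ × ℤ) → ℤ) :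
    ∑ r ∈ U, G r = ∑ r ∈ Finset.range n, ii U (r + 1) • G (r + 1) := by
  have : ∑ r ∈ U, G r = ∑ r ∈ Finset.Icc 1 n, ii U r • G r := by
    rw [← Finset.sum_subset hU (f := fun r => ii U r • G r)]
    · exact Finset.sum_congr rfl fun r hr => by simp [ii, hr]
    · intro r _ hr; simp [ii, hr]
  rw [this]
  have e : Finset.Icc 1 n = Finset.Ico 1 (n + 1) := by ext; simp [Nat.lt_succ_iff]
  rw [e, Finset.sum_Ico_eq_sum_range]
  simp only [Nat.add_sub_cancel, add_comm 1]

lemma half_sum (n : ℕ) (hn : 2 ≤ n) (y : ℕ → (ℕ × ℤ) → ℤ) (h0 : y 0 = 0) (U : Finset ℕ)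
    (hU : U ⊆ Finset.Icc 1 n) (Z : (ℕ × ℤ) → ℤ) :
    ∑ r ∈ U, (if r = n then Z - y (n - 1) else y r - y (r - 1)) = NA y U n + ii U n • Z := by
  obtain ⟨m, rfl⟩ : ∃ m, n = m + 1 := ⟨n - 1, by omega⟩
  rw [sum_sub _ U hU (fun r => if r = m + 1 then Z - y (m + 1 - 1) else y r - y (r - 1)), Finset.sum_range_succ]
  have : ∑ r ∈ Finset.range m, ii U (r + 1) • (if r + 1 = m + 1 then Z - y (m + 1 - 1) else
      y (r + 1) - y (r + 1 - 1)) = ∑ r ∈ Finset.range m, ii U (r + 1) • (y (r + 1) - y r) := by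
    apply Finset.sum_congr rfl
    intro r hr
    rw [if_neg (by have := Finset.mem_range.1 hr; omega)]
    simp
  rw [this, abelS y h0]
  unfold NA
  rw [Finset.sum_range_succ, if_pos rfl, Nat.add_sub_cancel]
  module

lemma cnt_of_mem {U : Finset ℕ} {r : ℕ} (h : r ∈ U) : cnt U r = Nat.count (fun x => x ∈ U) r + 1 := by
  unfold cnt; rw [Nat.count_succ, if_pos h]

lemma boxU (n : ℕ) (hn : 2 ≤ n) (x : ℕ × ℤ) (U : Finset ℕ) (hU : U ⊆ Finset.Icc 1 n) (r : ℕ)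
    (hr : r ∈ U) :
    boxB n r (x.2 + 2 * x.1 - 2 - 4 * (Nat.count (fun x => x ∈ U) r : ℕ)) =
      if r = n then (Y (n, aS n x U) + Y (n, aS n x U + 2)) - y0A x U (n - 1)
      else y0A x U r - y0A x U (r - 1) := by
  have h1 := Finset.mem_Icc.1 (hU hr)
  have h2 := cnt_of_mem hr
  have h3 : cnt U (r - 1) = Nat.count (fun x => x ∈ U) r := by
    unfold cnt; rw [Nat.sub_add_cancel h1.1]
  unfold boxB y0A
  have h5 : (((r - 1 : ℕ) : ℕ) : ℤ) = (r : ℤ) - 1 := by omega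
  rw [if_neg (show ¬ (r : ℤ) = 0 by omega)]
  by_cases e : r = n
  · subst e
    have h4 := cnt_n hU
    have e1 : 2 * (r : ℤ) - 3 + (x.2 + 2 * x.1 - 2 - 4 * (Nat.count (fun x => x ∈ U) r : ℕ)) =
      aS r x U := by unfold aS; omega
    have e2 : 2 * (r : ℤ) - 1 + (x.2 + 2 * x.1 - 2 - 4 * (Nat.count (fun x => x ∈ U) r : ℕ)) =
      aS r x U + 2 := by unfold aS; omega
    have e3 : 2 * (r : ℤ) + (x.2 + 2 * x.1 - 2 - 4 * (Nat.count (fun x => x ∈ U) r : ℕ)) =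
      yA x U (r - 1) := by unfold yA; omega
    rw [if_pos rfl, if_pos rfl, if_neg (show ¬ r - 1 = 0 by omega), e1, e2, e3]
  · have e2 : 2 * (r : ℤ) - 2 + (x.2 + 2 * x.1 - 2 - 4 * (Nat.count (fun x => x ∈ U) r : ℕ)) =
      yA x U r := by unfold yA; omega
    have e3 : 2 * (r : ℤ) + (x.2 + 2 * x.1 - 2 - 4 * (Nat.count (fun x => x ∈ U) r : ℕ)) =
      yA x U (r - 1) := by unfold yA; omega
    rw [if_neg (show ¬ (r : ℤ) = n by omega), if_neg (show ¬ (r : ℤ) = -n by omega),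
      if_pos (show 1 ≤ (r : ℤ) by omega), if_neg e, if_neg (show ¬ r = 0 by omega), e2, e3,
      Int.toNat_natCast]
    by_cases e1 : r = 1
    · rw [if_pos (by omega), if_pos (by omega)]
    · rw [if_neg (by omega), if_neg (by omega)]

lemma boxV (n : ℕ) (hn : 2 ≤ n) (x : ℕ × ℤ) (V : Finset ℕ) (hV : V ⊆ Finset.Icc 1 n) (r : ℕ)
    (hr : r ∈ V) :
    boxB n (-(r : ℤ)) (x.2 - 2 * x.1 + 2 + 4 * (Nat.count (fun x => x ∈ V) r : ℕ)) =
      - if r = n then (Y (n, bS n x V) + Y (n, bS n x V - 2)) - y0B n x V (n - 1)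
      else y0B n x V r - y0B n x V (r - 1) := by
  have h1 := Finset.mem_Icc.1 (hV hr)
  have h2 := cnt_of_mem hr
  have h3 : cnt V (r - 1) = Nat.count (fun x => x ∈ V) r := by
    unfold cnt; rw [Nat.sub_add_cancel h1.1]
  unfold boxB y0B
  have h5 : (((r - 1 : ℕ) : ℕ) : ℤ) = (r : ℤ) - 1 := by omega
  rw [if_neg (show ¬ -(r : ℤ) = 0 by omega), if_neg (show ¬ -(r : ℤ) = n by omega)]
  by_cases e : r = n
  · subst e
    have h4 := cnt_n hV
    have e1 : 2 * (r : ℤ) - 2 + (x.2 - 2 * x.1 + 2 + 4 * (Nat.count (fun x => x ∈ V) r : ℕ)) =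
      yB r x V (r - 1) := by unfold yB; omega
    have e2 : 2 * (r : ℤ) - 1 + (x.2 - 2 * x.1 + 2 + 4 * (Nat.count (fun x => x ∈ V) r : ℕ)) =
      bS r x V - 2 := by unfold bS; omega
    have e3 : 2 * (r : ℤ) + 1 + (x.2 - 2 * x.1 + 2 + 4 * (Nat.count (fun x => x ∈ V) r : ℕ)) =
      bS r x V := by unfold bS; omega
    rw [if_pos rfl, if_pos rfl, if_neg (show ¬ r - 1 = 0 by omega), e1, e2, e3]
    abel
  · have e2 : 4 * (n : ℤ) - 2 * (r : ℤ) + (x.2 - 2 * x.1 + 2 + 4 * (Nat.count (fun x => x ∈ V) r : ℕ)) =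
      yB n x V r := by unfold yB; omega
    have e3 : 4 * (n : ℤ) - 2 - 2 * (r : ℤ) + (x.2 - 2 * x.1 + 2 + 4 * (Nat.count (fun x => x ∈ V) r : ℕ)) =
      yB n x V (r - 1) := by unfold yB; omega
    rw [if_neg (show ¬ -(r : ℤ) = -n by omega),
      if_neg (show ¬ 1 ≤ -(r : ℤ) by omega), if_neg e, if_neg (show ¬ r = 0 by omega)]
    simp only [neg_neg]
    rw [e2, e3, Int.toNat_natCast]
    by_cases e1 : r = 1
    · rw [if_pos (by omega), if_pos (by omega)]; abel
    · rw [if_neg (by omega), if_neg (by omega)]; abel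

lemma col_sum (n : ℕ) (hn : 2 ≤ n) (x : ℕ × ℤ) (c : Finset ℕ × Finset ℕ) (hc : Valid n x.1 c) :
    ∑ j ∈ Finset.range x.1, boxB n (letter x.1 c.1 c.2 j) (x.2 + 2 * x.1 - 2 - 4 * j) =
      monF n x c := by
  obtain ⟨U, V⟩ := c
  obtain ⟨hU, hV, hle⟩ := hc
  dsimp only at hU hV hle ⊢
  obtain ⟨z, hz⟩ : ∃ z, x.1 = U.card + z + V.card := ⟨x.1 - U.card - V.card, by omega⟩
  have hU0 := half_sum n hn (y0A x U) rfl U hU (Y (n, aS n x U) + Y (n, aS n x U + 2))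
  have hV0 := half_sum n hn (y0B n x V) rfl V hV (Y (n, bS n x V) + Y (n, bS n x V - 2))
  have A : ∑ j ∈ Finset.range U.card, boxB n (letter x.1 U V j) (x.2 + 2 * x.1 - 2 - 4 * j) =
      NA (y0A x U) U n + ii U n • (Y (n, aS n x U) + Y (n, aS n x U + 2)) := by
    rw [← hU0, ← Finset.sum_congr rfl (fun r hr => boxU n hn x U hU r hr),
      ← sum_enum U (fun r k => boxB n (r : ℤ) (x.2 + 2 * x.1 - 2 - 4 * (k : ℕ)))]
    apply Finset.sum_congr rfl
    intro j hj
    have := Finset.mem_range.1 hj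
    have e : letter x.1 U V j = (enum U j : ℕ) := by
      unfold letter
      rw [if_neg (by omega), if_pos (by omega)]; simp
    rw [e]
  have B : ∑ j ∈ Finset.range z, boxB n (letter x.1 U V (U.card + j : ℕ))
      (x.2 + 2 * x.1 - 2 - 4 * (U.card + j : ℕ)) = Y (n, bS n x V) - Y (n, aS n x U) := by
    have : ∀ j ∈ Finset.range z, boxB n (letter x.1 U V (U.card + j : ℕ))
      (x.2 + 2 * x.1 - 2 - 4 * (U.card + j : ℕ)) =
        (fun j : ℕ => Y (n, aS n x U - 4 * j)) (j + 1) - (fun j : ℕ => Y (n, aS n x U - 4 * j)) j := by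
      intro j hj
      have := Finset.mem_range.1 hj
      have e : letter x.1 U V (U.card + j : ℕ) = 0 := by
        unfold letter
        rw [if_neg (by omega), if_neg (by omega), if_pos (by omega)]
      rw [e]
      simp only [boxB, if_true, aS]
      push_cast
      congr 3 <;> ring
    rw [Finset.sum_congr rfl this, Finset.sum_range_sub (fun j : ℕ => Y (n, aS n x U - 4 * j))]
    simp only [aS, bS, hz]
    push_cast
    congr 3 <;> ring
  have C : ∑ j ∈ Finset.range V.card, boxB n (letter x.1 U V (U.card + z + j : ℕ))
      (x.2 + 2 * x.1 - 2 - 4 * (U.card + z + j : ℕ)) =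
      - (NA (y0B n x V) V n + ii V n • (Y (n, bS n x V) + Y (n, bS n x V - 2))) := by
    rw [← hV0, ← Finset.sum_neg_distrib, ← Finset.sum_congr rfl (fun r hr => boxV n hn x V hV r hr),
      ← sum_enum V (fun r k => boxB n (-(r : ℤ)) (x.2 - 2 * x.1 + 2 + 4 * (k : ℕ))),
      ← Finset.sum_range_reflect]
    apply Finset.sum_congr rfl
    intro j hj
    have := Finset.mem_range.1 hj
    have e : letter x.1 U V (U.card + z + (V.card - 1 - j) : ℕ) = -(enum V j : ℕ) := by
      unfold letter
      rw [if_neg (by omega), if_neg (by omega), if_neg (by omega)]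
      congr 3
      omega
    rw [e]
    congr 1
    omega
  have tot : ∑ j ∈ Finset.range x.1, boxB n (letter x.1 U V j) (x.2 + 2 * x.1 - 2 - 4 * j) = 
      ∑ j ∈ Finset.range (U.card + z + V.card),
        boxB n (letter x.1 U V j) (x.2 + 2 * x.1 - 2 - 4 * j) := by rw [← hz]
  rw [tot, Finset.sum_range_add, Finset.sum_range_add, A, B, C]
  unfold monF
  dsimp only
  abel


lemma spin_sign (n : ℕ) (hn : 2 ≤ n) (ε : ℝ) (hε : 0 < ε) (l : ℤ) (S : Finset ℕ) (j : ℕ)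
    (hj : j + 1 ≤ n) :
    (spinY n ε l S (j + 1) < spinY n ε l S j ↔ j + 1 ∈ S) ∧
    (spinY n ε l S j < spinY n ε l S (j + 1) ↔ j + 1 ∉ S) := by
  rcases Nat.lt_or_ge (j + 1) n with h | h
  · have := spin_step n ε l S j (by omega)
    split_ifs at this with g <;> simp only [g] <;> constructor <;> constructor <;> intro h <;>
      first | linarith | trivial | (exfalso; linarith) | (exfalso; simp at h)
  · have e : n = j + 1 := by omega
    subst e
    have := spin_last (j + 1) hn ε l S
    rw [Nat.add_sub_cancel] at this
    split_ifs at this with g <;> simp only [g] <;> constructor <;> constructor <;> intro h <;>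
      first | linarith | trivial | (exfalso; linarith) | (exfalso; simp at h)

lemma A_sign (n : ℕ) (hn : 2 ≤ n) (ε : ℝ) (hε : 0 < ε) (x : ℕ × ℤ) (U : Finset ℕ) (j : ℕ)
    (hj : j + 1 ≤ n) :
    ((ptA n ε x U (j + 1)).2 < (ptA n ε x U j).2 ↔ j + 1 ∈ U) ∧
    ((ptA n ε x U j).2 < (ptA n ε x U (j + 1)).2 ↔ j + 1 ∉ U) :=
  spin_sign n hn ε hε _ U j hj

lemma B_sign (n : ℕ) (hn : 2 ≤ n) (ε : ℝ) (hε : 0 < ε) (x : ℕ × ℤ) (V : Finset ℕ) (j : ℕ)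
    (hj : j + 1 ≤ n) :
    ((ptB n ε x V (j + 1)).2 < (ptB n ε x V j).2 ↔ j + 1 ∉ V) ∧
    ((ptB n ε x V j).2 < (ptB n ε x V (j + 1)).2 ↔ j + 1 ∈ V) := by
  have h := spin_sign n hn ε hε (lB n x) (Finset.Icc 1 n \ V) j hj
  have e : j + 1 ∈ Finset.Icc 1 n \ V ↔ j + 1 ∉ V := by simp; omega
  rw [e, not_not] at h
  exact h

lemma corner_iff (n : ℕ) (hn : 2 ≤ n) (ε : ℝ) {x : ℕ × ℤ}
    (hx : x ∈ Xp (Setting.B n ε)) {c : Finset ℕ × Finset ℕ} (hc : Valid n x.1 c)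
    (j : ℕ) (hj : 1 ≤ j) (hjn : j < n) (l : ℤ) (R : ℝ → ℝ → ℝ → Prop) :
    (∃ r : ℕ, 1 ≤ r ∧ r + 1 < (mkPath n ε x c).length ∧
          pt (mkPath n ε x c) r = (((iotaB n (j, l)).1 : ℝ), ((iotaB n (j, l)).2 : ℝ)) ∧
          (iotaB n (j, l)).1 ≠ 0 ∧ (iotaB n (j, l)).1 ≠ 2 * (n : ℤ) - 1 ∧
          (iotaB n (j, l)).1 ≠ 4 * (n : ℤ) - 2 ∧
          R (pt (mkPath n ε x c) (r - 1)).2 (pt (mkPath n ε x c) r).2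
            (pt (mkPath n ε x c) (r + 1)).2) ↔
    (l = yA x c.1 j ∧ R (ptA n ε x c.1 (j - 1)).2 (ptA n ε x c.1 j).2 (ptA n ε x c.1 (j + 1)).2) ∨
    (l = yB n x c.2 j ∧ R (ptB n ε x c.2 (j + 1)).2 (ptB n ε x c.2 j).2 (ptB n ε x c.2 (j - 1)).2) := by
  have hx2 := hx.2.2
  have io2 : (iotaB n (j, l)).2 = l := by unfold iotaB; split_ifs <;> rfl
  have io1 : (iotaB n (j, l)).1 = if (2 * (n : ℤ) + l - 2 * (j : ℤ)) % 4 = 2 then 2 * (j : ℤ)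
      else 4 * (n : ℤ) - 2 - 2 * (j : ℤ) := by
    unfold iotaB; rw [if_neg (by simp only; omega)]; split_ifs <;> rfl
  rw [mkPath_length, io2, io1]
  constructor
  · rintro ⟨r, h1, h2, h3, h4, h5, h6, h7⟩
    rcases Nat.lt_or_ge r (n + 1) with g | g
    · have p0 := pt_mkPath_A n ε x c r (by omega)
      rw [p0] at h3
      have q1 := congrArg Prod.fst h3
      have q2 := congrArg Prod.snd h3
      rw [ptA_fst' n ε hx _ _ (by omega)] at q1
      have q1 := Int.cast_injective q1
      have : r = j := by
        unfold sg dd at q1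
        split_ifs at q1 h5 <;> omega
      subst this
      rw [ptA_snd _ _ _ _ _ hjn] at q2
      have q2 := Int.cast_injective q2
      left
      refine ⟨q2.symm, ?_⟩
      rw [p0, pt_mkPath_A n ε x c (r - 1) (by omega), pt_mkPath_A n ε x c (r + 1) (by omega)] at h7
      exact h7
    · obtain ⟨s, hs, rfl⟩ : ∃ s, 1 ≤ s ∧ r = 2 * n + 1 - s := ⟨2 * n + 1 - r, by omega, by omega⟩
      have p0 := pt_mkPath_B n ε x c s (by omega)
      rw [p0] at h3
      have q1 := congrArg Prod.fst h3
      have q2 := congrArg Prod.snd h3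
      rw [ptB_fst' n ε hx _ _ (by omega)] at q1
      have q1 := Int.cast_injective q1
      have : s = j := by
        unfold sg dd at q1
        split_ifs at q1 h5 <;> omega
      subst this
      rw [ptB_snd _ _ _ _ hc.2.1 _ hjn] at q2
      have q2 := Int.cast_injective q2
      right
      refine ⟨q2.symm, ?_⟩
      rw [p0, show 2 * n + 1 - s - 1 = 2 * n + 1 - (s + 1) by omega,
        show 2 * n + 1 - s + 1 = 2 * n + 1 - (s - 1) by omega,
        pt_mkPath_B n ε x c (s - 1) (by omega), pt_mkPath_B n ε x c (s + 1) (by omega)] at h7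
      exact h7
  · rintro (⟨h, h7⟩ | ⟨h, h7⟩)
    · have e : (2 * (n : ℤ) - 1 - sg n * dd n j) = if (2 * (n : ℤ) + l - 2 * (j : ℤ)) % 4 = 2 then 2 * (j : ℤ)
        else 4 * (n : ℤ) - 2 - 2 * (j : ℤ) := by
        unfold yA at h
        unfold sg dd; split_ifs <;> omega
      refine ⟨j, hj, by omega, ?_, by split_ifs <;> omega, by split_ifs <;> omega,
        by split_ifs <;> omega, ?_⟩
      · rw [pt_mkPath_A n ε x c j (by omega)]
        refine Prod.ext ?_ ?_
        · rw [ptA_fst' n ε hx _ _ hjn.le, e]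
        · rw [ptA_snd _ _ _ _ _ hjn, h]
      · rw [pt_mkPath_A n ε x c j (by omega), pt_mkPath_A n ε x c (j - 1) (by omega),
          pt_mkPath_A n ε x c (j + 1) (by omega)]
        exact h7
    · have e : (2 * (n : ℤ) - 1 + sg n * dd n j) = if (2 * (n : ℤ) + l - 2 * (j : ℤ)) % 4 = 2 then 2 * (j : ℤ)
        else 4 * (n : ℤ) - 2 - 2 * (j : ℤ) := by
        unfold yB at h
        unfold sg dd; split_ifs <;> omega
      refine ⟨2 * n + 1 - j, by omega, by omega, ?_, by split_ifs <;> omega, by split_ifs <;> omega,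
        by split_ifs <;> omega, ?_⟩
      · rw [pt_mkPath_B n ε x c j (by omega)]
        refine Prod.ext ?_ ?_
        · rw [ptB_fst' n ε hx _ _ hjn.le, e]
        · rw [ptB_snd _ _ _ _ hc.2.1 _ hjn, h]
      · rw [show 2 * n + 1 - j - 1 = 2 * n + 1 - (j + 1) by omega,
          show 2 * n + 1 - j + 1 = 2 * n + 1 - (j - 1) by omega,
          pt_mkPath_B n ε x c j (by omega), pt_mkPath_B n ε x c (j - 1) (by omega),
          pt_mkPath_B n ε x c (j + 1) (by omega)]
        exact h7

lemma Cp_lt_true (n : ℕ) (hn : 2 ≤ n) (ε : ℝ) (hε : 0 < ε) {x : ℕ × ℤ}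
    (hx : x ∈ Xp (Setting.B n ε)) {c : Finset ℕ × Finset ℕ} (hc : Valid n x.1 c)
    (j : ℕ) (hj : 1 ≤ j) (hjn : j < n) (l : ℤ) :
    (j, l) ∈ Cp (Setting.B n ε) (mkPath n ε x c) true ↔
    (l = yA x c.1 j ∧ j ∈ c.1 ∧ j + 1 ∉ c.1) ∨ (l = yB n x c.2 j ∧ j + 1 ∈ c.2 ∧ j ∉ c.2) := by
  have hx2 := hx.2.2
  have H := corner_iff n hn ε hx hc j hj hjn l (fun a b c => b < a ∧ b < c)
  have a1 := (A_sign n hn ε hε x c.1 (j - 1) (by omega)).1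
  have a2 := (A_sign n hn ε hε x c.1 j (by omega)).2
  have b1 := (B_sign n hn ε hε x c.2 (j - 1) (by omega)).1
  have b2 := (B_sign n hn ε hε x c.2 j (by omega)).2
  rw [Nat.sub_add_cancel hj] at a1 b1
  simp only [a1, a2, b1, b2] at H
  rw [← H]
  simp only [Cp, Set.mem_ofPred_eq, if_true]
  constructor
  · rintro ⟨_, h | h⟩
    · exact h
    · omega
  · intro h
    refine ⟨?_, Or.inl h⟩
    have h := H.1 h
    unfold yA yB at h
    right; refine ⟨hj, hjn, ?_⟩
    simp only
    omega

lemma Cp_lt_false (n : ℕ) (hn : 2 ≤ n) (ε : ℝ) (hε : 0 < ε) {x : ℕ × ℤ}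
    (hx : x ∈ Xp (Setting.B n ε)) {c : Finset ℕ × Finset ℕ} (hc : Valid n x.1 c)
    (j : ℕ) (hj : 1 ≤ j) (hjn : j < n) (l : ℤ) :
    (j, l) ∈ Cp (Setting.B n ε) (mkPath n ε x c) false ↔
    (l = yA x c.1 j ∧ j ∉ c.1 ∧ j + 1 ∈ c.1) ∨ (l = yB n x c.2 j ∧ j + 1 ∉ c.2 ∧ j ∈ c.2) := by
  have hx2 := hx.2.2
  have H := corner_iff n hn ε hx hc j hj hjn l (fun a b c => a < b ∧ c < b)
  have a1 := (A_sign n hn ε hε x c.1 (j - 1) (by omega)).2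
  have a2 := (A_sign n hn ε hε x c.1 j (by omega)).1
  have b1 := (B_sign n hn ε hε x c.2 (j - 1) (by omega)).2
  have b2 := (B_sign n hn ε hε x c.2 j (by omega)).1
  rw [Nat.sub_add_cancel hj] at a1 b1
  simp only [a1, a2, b1, b2] at H
  rw [← H]
  simp only [Cp, Set.mem_ofPred_eq, if_false, Bool.false_eq_true]
  constructor
  · rintro ⟨_, h | h⟩
    · exact h
    · omega
  · intro h
    refine ⟨?_, Or.inl h⟩
    have h := H.1 h
    unfold yA yB at h
    right; refine ⟨hj, hjn, ?_⟩
    simp only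
    omega

lemma mid_mem (n : ℕ) (hn : 2 ≤ n) (ε : ℝ) {x : ℕ × ℤ}
    (hx : x ∈ Xp (Setting.B n ε)) {c : Finset ℕ × Finset ℕ} (hc : Valid n x.1 c) (y : ℝ) :
    (2 * (n : ℝ) - 1, y) ∈ mkPath n ε x c ↔
      y = (aS n x c.1 : ℤ) + (if n ∈ c.1 then 2 - ε else ε) ∨
      y = (bS n x c.2 : ℤ) + (if n ∈ c.2 then -2 + ε else -ε) := by
  rw [mem_mkPath, ← ptA_snd_n n ε x c.1 hc.1, ← ptB_snd_n n hn ε x c.2 hc.2.1]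
  constructor
  · rintro ⟨r, hr, h | h⟩
    · have q1 := congrArg Prod.fst h
      rw [ptA_fst' n ε hx _ _ hr] at q1
      have q1 : (2 * (n : ℤ) - 1) = 2 * n - 1 - sg n * dd n r := by
        apply Int.cast_injective (α := ℝ); rw [← q1]; push_cast; ring
      have : r = n := by unfold sg dd at q1; split_ifs at q1 <;> omega
      subst this
      left; rw [← h]
    · have q1 := congrArg Prod.fst h
      rw [ptB_fst' n ε hx _ _ hr] at q1
      have q1 : (2 * (n : ℤ) - 1) = 2 * n - 1 + sg n * dd n r := by
        apply Int.cast_injective (α := ℝ); rw [← q1]; push_cast; ring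
      have : r = n := by unfold sg dd at q1; split_ifs at q1 <;> omega
      subst this
      right; rw [← h]
  · rintro (h | h)
    · refine ⟨n, le_rfl, Or.inl (Prod.ext ?_ h)⟩
      rw [ptA_fst_n]; push_cast; ring
    · refine ⟨n, le_rfl, Or.inr (Prod.ext ?_ h)⟩
      rw [ptB_fst_n]; push_cast; ring

lemma int_sep {ε : ℝ} (hε : 0 < ε ∧ ε < 1 / 2) (a b : ℤ) : ¬ (a : ℝ) = b + 2 * ε := by
  intro h
  have h1 : b < a := by have : (b : ℝ) < a := by linarith
                        exact_mod_cast this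
  have h2 : a < b + 1 := by
    have : (a : ℝ) < b + 1 := by linarith
    exact_mod_cast this
  omega

lemma mid_p (n : ℕ) (hn : 2 ≤ n) (ε : ℝ) (hε : 0 < ε ∧ ε < 1 / 2) {x : ℕ × ℤ}
    (hx : x ∈ Xp (Setting.B n ε)) {c : Finset ℕ × Finset ℕ} (hc : Valid n x.1 c) (l : ℤ) :
    (2 * (n : ℝ) - 1, (l : ℝ) - ε) ∈ mkPath n ε x c ↔
      (n ∈ c.1 ∧ l = aS n x c.1 + 2) ∨ (n ∉ c.2 ∧ l = bS n x c.2) := by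
  rw [mid_mem n hn ε hx hc]
  apply or_congr
  · split_ifs with h
    · simp only [h, true_and]
      rw [← Int.cast_inj (α := ℝ)]; push_cast
      constructor <;> intro h <;> linarith
    · simp only [h, false_and, iff_false]
      intro h
      exact int_sep hε l (aS n x c.1) (by linarith)
  · split_ifs with h
    · simp only [h, not_true, false_and, iff_false]
      intro h
      exact int_sep hε l (bS n x c.2 - 2) (by push_cast; linarith)
    · simp only [h, not_false_eq_true, true_and]
      rw [← Int.cast_inj (α := ℝ)]
      constructor <;> intro h <;> linarith

lemma mid_m (n : ℕ) (hn : 2 ≤ n) (ε : ℝ) (hε : 0 < ε ∧ ε < 1 / 2) {x : ℕ × ℤ}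
    (hx : x ∈ Xp (Setting.B n ε)) {c : Finset ℕ × Finset ℕ} (hc : Valid n x.1 c) (l : ℤ) :
    (2 * (n : ℝ) - 1, (l : ℝ) + ε) ∈ mkPath n ε x c ↔
      (n ∉ c.1 ∧ l = aS n x c.1) ∨ (n ∈ c.2 ∧ l = bS n x c.2 - 2) := by
  rw [mid_mem n hn ε hx hc]
  apply or_congr
  · split_ifs with h
    · simp only [h, not_true, false_and, iff_false]
      intro h
      exact int_sep hε (aS n x c.1 + 2) l (by push_cast; linarith)
    · simp only [h, not_false_eq_true, true_and]
      rw [← Int.cast_inj (α := ℝ)]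
      constructor <;> intro h <;> linarith
  · split_ifs with h
    · simp only [h, true_and]
      rw [← Int.cast_inj (α := ℝ)]; push_cast
      constructor <;> intro h <;> linarith
    · simp only [h, false_and, iff_false]
      intro h
      exact int_sep hε (bS n x c.2) l (by linarith)

lemma Cp_n_true (n : ℕ) (hn : 2 ≤ n) (ε : ℝ) (hε : 0 < ε ∧ ε < 1 / 2) {x : ℕ × ℤ}
    (hx : x ∈ Xp (Setting.B n ε)) {c : Finset ℕ × Finset ℕ} (hc : Valid n x.1 c) (l : ℤ) :
    (n, l) ∈ Cp (Setting.B n ε) (mkPath n ε x c) true ↔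
      ((n ∈ c.1 ∧ l = aS n x c.1 + 2) ∨ (n ∉ c.2 ∧ l = bS n x c.2)) ∧
      ¬ ((n ∉ c.1 ∧ l = aS n x c.1) ∨ (n ∈ c.2 ∧ l = bS n x c.2 - 2)) := by
  have hx2 := hx.2.2
  rw [← mid_p n hn ε hε hx hc l, ← mid_m n hn ε hε hx hc l]
  have io : (iotaB n (n, l)).1 = 2 * (n : ℤ) - 1 := by unfold iotaB; rw [if_pos rfl]
  simp only [Cp, Set.mem_ofPred_eq, if_true, io]
  constructor
  · rintro ⟨_, ⟨r, _, _, _, _, h, _⟩ | h⟩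
    · exact absurd rfl h
    · exact h.2
  · intro h
    refine ⟨Or.inl ⟨rfl, ?_⟩, Or.inr ⟨trivial, h⟩⟩
    have h := (mid_p n hn ε hε hx hc l).1 h.1
    unfold aS bS at h
    simp only
    omega

lemma Cp_n_false (n : ℕ) (hn : 2 ≤ n) (ε : ℝ) (hε : 0 < ε ∧ ε < 1 / 2) {x : ℕ × ℤ}
    (hx : x ∈ Xp (Setting.B n ε)) {c : Finset ℕ × Finset ℕ} (hc : Valid n x.1 c) (l : ℤ) :
    (n, l) ∈ Cp (Setting.B n ε) (mkPath n ε x c) false ↔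
      ((n ∉ c.1 ∧ l = aS n x c.1) ∨ (n ∈ c.2 ∧ l = bS n x c.2 - 2)) ∧
      ¬ ((n ∈ c.1 ∧ l = aS n x c.1 + 2) ∨ (n ∉ c.2 ∧ l = bS n x c.2)) := by
  have hx2 := hx.2.2
  rw [← mid_p n hn ε hε hx hc l, ← mid_m n hn ε hε hx hc l]
  have io : (iotaB n (n, l)).1 = 2 * (n : ℤ) - 1 := by unfold iotaB; rw [if_pos rfl]
  simp only [Cp, Set.mem_ofPred_eq, if_false, Bool.false_eq_true, io]
  constructor
  · rintro ⟨_, ⟨r, _, _, _, _, h, _⟩ | h⟩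
    · exact absurd rfl h
    · exact h.2
  · intro h
    refine ⟨Or.inl ⟨rfl, ?_⟩, Or.inr ⟨trivial, h⟩⟩
    have h := (mid_m n hn ε hε hx hc l).1 h.1
    unfold aS bS at h
    simp only
    omega

lemma ind_eq (s : Prop) [Decidable s] : ind s = if s then 1 else 0 := by
  unfold ind; congr

lemma Y_app (a : ℕ) (b : ℤ) (j : ℕ) (l : ℤ) : Y (a, b) (j, l) = if j = a ∧ l = b then 1 else 0 := by
  unfold Y; simp only [Prod.mk.injEq]

lemma NA_app (f : ℕ → ℤ) (U : Finset ℕ) (n j : ℕ) (l : ℤ) :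
    NA (fun j => if j = 0 then 0 else Y (j, f j)) U n (j, l) =
      if 1 ≤ j ∧ j < n ∧ l = f j then ii U j - ii U (j + 1) else 0 := by
  unfold NA
  rw [Finset.sum_apply]
  simp only [Pi.smul_apply, smul_eq_mul]
  have key : ∀ k, (if k = 0 then (0 : ℕ × ℤ → ℤ) else Y (k, f k)) (j, l) =
      if 1 ≤ j ∧ j = k ∧ l = f j then 1 else 0 := by
    intro k
    by_cases hk : k = 0
    · rw [if_pos hk, if_neg (by omega)]; rfl
    · rw [if_neg hk, Y_app]
      by_cases e : j = k
      · subst e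
        have : 1 ≤ j := by omega
        simp [this]
      · simp [e]
  simp only [key]
  by_cases h : 1 ≤ j ∧ j < n ∧ l = f j
  · rw [if_pos h, Finset.sum_eq_single j]
    · rw [if_pos ⟨h.1, rfl, h.2.2⟩, mul_one]
    · intro b _ hb; rw [if_neg (fun g => hb g.2.1.symm), mul_zero]
    · intro g; exact absurd (Finset.mem_range.2 h.2.1) g
  · rw [if_neg h]
    apply Finset.sum_eq_zero
    intro k hk
    have := Finset.mem_range.1 hk
    rw [if_neg, mul_zero]
    rintro ⟨g1, g2, g3⟩
    exact h ⟨g1, by omega, g3⟩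

lemma mon_eq (n : ℕ) (hn : 2 ≤ n) (ε : ℝ) (hε : 0 < ε ∧ ε < 1 / 2) {x : ℕ × ℤ}
    (hx : x ∈ Xp (Setting.B n ε)) {c : Finset ℕ × Finset ℕ} (hc : Valid n x.1 c) :
    mon (Setting.B n ε) (mkPath n ε x c) = monF n x c := by
  have hx2 := hx.2.2
  funext ⟨j, l⟩
  have e1 := NA_app (yA x c.1) c.1 n j l
  have e2 := NA_app (yB n x c.2) c.2 n j l
  unfold monF
  simp only [Pi.add_apply, Pi.sub_apply, Pi.smul_apply, Y_app, smul_eq_mul]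
  change mon _ _ _ = NA (fun j => if j = 0 then 0 else Y (j, yA x c.1 j)) c.1 n (j, l) -
    NA (fun j => if j = 0 then 0 else Y (j, yB n x c.2 j)) c.2 n (j, l) + _ - _ + _
  rw [e1, e2]
  unfold mon ii
  by_cases h : j = n
  · subst h
    simp only [Cp_n_true j hn ε hε hx hc l, Cp_n_false j hn ε hε hx hc l, lt_irrefl, ind_eq]
    have h4 : (aS j x c.1 - bS j x c.2) % 4 = 0 := by unfold aS bS; omega
    generalize aS j x c.1 = a at *
    generalize bS j x c.2 = b at *
    by_cases u : j ∈ c.1 <;> by_cases v : j ∈ c.2 <;> simp only [u, v] <;> 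
      simp only [true_and, false_and, and_false, and_true, not_true, not_false_eq_true, false_or, or_false,
        if_true, if_false] <;> split_ifs <;> omega
  · rcases Nat.lt_or_ge j 1 with g | g
    · have : ∀ b, (j, l) ∉ Cp (Setting.B n ε) (mkPath n ε x c) b := by
        intro b hb
        rcases hb.1 with q | q <;> simp only at q <;> omega
      simp only [this, ind_eq, if_false]
      simp [h]
      omega
    rcases Nat.lt_or_ge j n with g' | g'
    · simp only [Cp_lt_true n hn ε hε.1 hx hc j g g' l, Cp_lt_false n hn ε hε.1 hx hc j g g' l, h, g, g', ind_eq]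
      have h4 : (yA x c.1 j - yB n x c.2 j) % 4 = 2 := by unfold yA yB; omega
      generalize yA x c.1 j = a at *
      generalize yB n x c.2 j = b at *
      by_cases u : j ∈ c.1 <;> by_cases v : j ∈ c.2 <;> by_cases u' : j + 1 ∈ c.1 <;>
        by_cases v' : j + 1 ∈ c.2 <;> simp only [u, v, u', v'] <;> 
        simp only [true_and, false_and, and_false, and_true, not_true, not_false_eq_true, false_or, or_false,
          if_true, if_false] <;> split_ifs <;> omega
    · have : ∀ b, (j, l) ∉ Cp (Setting.B n ε) (mkPath n ε x c) b := by
        intro b hb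
        rcases hb.1 with q | q <;> simp only at q <;> omega
      simp only [this, ind_eq, if_false]
      have : ¬ j < n := by omega
      simp [h, this]


lemma Mtab_eq (n : ℕ) (hn : 2 ≤ n) (ε : ℝ) {T : ℕ} (w : Fin T → ℕ × ℤ)
    (hw' : ∀ t, w t ∈ Xp (Setting.B n ε)) {c : Fin T → Finset ℕ × Finset ℕ} (hc : c ∈ Q n w) :
    MtabB n (diagOf (Setting.B n ε) w) (toTab w c) = ∑ t, monF n (w t) (c t) := by
  classical
  have inj : Function.Injective
      (fun p : Σ _ : Fin T, ℕ => ((tp (w p.1) p.1 + (p.2 : ℤ), ((p.1 : ℕ) : ℤ) + 1) : ℤ × ℤ)) := by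
    rintro ⟨t, j⟩ ⟨t', j'⟩ h
    simp only [Prod.mk.injEq] at h
    have : t = t' := Fin.ext (by omega)
    subst this
    have : j = j' := by omega
    subst this; rfl
  let D : Finset (ℤ × ℤ) := (Finset.univ.sigma (fun t : Fin T => Finset.range (w t).1)).image
    (fun p : Σ _ : Fin T, ℕ => ((tp (w p.1) p.1 + (p.2 : ℤ), ((p.1 : ℕ) : ℤ) + 1) : ℤ × ℤ))
  have hD : diagOf (Setting.B n ε) w = (D : Set (ℤ × ℤ)) := by
    ext ⟨s, q⟩
    rw [mem_diag hw']
    simp only [D, Finset.coe_image, Set.mem_image, Finset.mem_coe, Finset.mem_sigma,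
      Finset.mem_univ, true_and, Finset.mem_range, Prod.mk.injEq]
    constructor
    · rintro ⟨t, rfl, h1, h2⟩
      exact ⟨⟨t, (s - tp (w t) t).toNat⟩, by simp only; omega, by simp only; omega, rfl⟩
    · rintro ⟨⟨t, j⟩, h1, h2, h3⟩
      simp only at h1 h2 h3
      exact ⟨t, h3.symm, by omega, by omega⟩
  unfold MtabB
  rw [hD, finsum_mem_coe_finset, Finset.sum_image (fun a _ b _ h => inj h), Finset.sum_sigma]
  apply Finset.sum_congr rfl
  intro t _
  rw [← col_sum n hn (w t) (c t) (hc.1 t)]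
  apply Finset.sum_congr rfl
  intro j _
  dsimp only
  rw [toTab_apply]
  have := tp_eq (hw' t) t
  congr 1
  · congr 1; ring
  · omega

/-- type B: for a snake in type `B_N` with all elements in `X'` and associated
skew diagram `D`, there is a bijection between the set `𝒫̄` of non-overlapping tuples of
paths and the set of type B skew tableaux of shape `D`, under which a tuple `(p_t)`
corresponds to a tableau `𝒯` with `∏_t m(p_t) = M(𝒯)`. -/
theorem stmt16 (n : ℕ) (hn : 2 ≤ n) (ε : ℝ) (hε : 0 < ε ∧ ε < 1 / 2) {T : ℕ} (hT : 1 ≤ T)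
    (w : Fin T → ℕ × ℤ) (hw : IsSnake (Setting.B n ε) w)
    (hw' : ∀ t, w t ∈ Xp (Setting.B n ε)) :
    ∃ Φ : (Fin T → List (ℝ × ℝ)) → (ℤ × ℤ → ℤ),
      Set.BijOn Φ (PBar (Setting.B n ε) w) (TabB n (diagOf (Setting.B n ε) w)) ∧
      ∀ ps ∈ PBar (Setting.B n ε) w,
        tmon (Setting.B n ε) ps = MtabB n (diagOf (Setting.B n ε) w) (Φ ps) := by
  have b1 := toPath_bij n hn ε hε w hw'
  have b2 := toTab_bij n ε w hw hw'
  have hinv := b1.invOn_invFunOn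
  have b3 : Set.BijOn (Function.invFunOn (toPath n ε w) (Q n w)) (PBar (Setting.B n ε) w) (Q n w) :=
    b1.symm hinv.symm
  refine ⟨toTab w ∘ Function.invFunOn (toPath n ε w) (Q n w), b2.comp b3, ?_⟩
  intro ps hps
  have hq := b3.mapsTo hps
  have he := hinv.2 hps
  rw [Function.comp_apply, Mtab_eq n hn ε w hw' hq]
  conv_lhs => rw [← he]
  unfold tmon
  apply Finset.sum_congr rfl
  intro t _
  exact mon_eq n hn ε hε (hw' t) (hq.1 t)

end Paper
end

section
/- Let the setting be type A_N or type B_N, let (i,k) ∈ X and p ∈ P_{i,k}, and let (j,ℓ) ∈ W. Then p can be raised at (j,ℓ), i.e. there exists p′ ∈ P_{i,k} with p = p′𝒜_{j,ℓ}⁻¹, if and only if (j,ℓ+r_j) ∈ C_{p,−} and (j,ℓ−r_j) ∉ C_{p,−}; moreover such p′, when it exists, is unique. -/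
namespace Paper

theorem pt_set (p : List (ℝ × ℝ)) (r s : ℕ) (q : ℝ × ℝ) (h : r < p.length) :
    pt (p.set r q) s = if s = r then q else pt p s := by
  unfold pt
  by_cases hs : s = r
  · subst hs; simp [List.getD_eq_getElem?_getD, h]
  · simp [List.getD_eq_getElem?_getD, hs, List.getElem?_set_ne (Ne.symm hs)]

theorem ext_pt (p q : List (ℝ × ℝ)) (hl : p.length = q.length)
    (h : ∀ r, r < p.length → pt p r = pt q r) : p = q := by
  apply List.ext_getElem hl
  intro r h1 h2
  have := h r h1
  simpa [pt, List.getD_eq_getElem?_getD, h1, h2] using this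

theorem rep1_uniq (p p₁ p₂ : List (ℝ × ℝ)) (q q' : ℝ × ℝ)
    (hinj : ∀ s t, s < p.length → t < p.length → pt p s = pt p t → s = t)
    (h1 : Replace1 p₁ p q q') (h2 : Replace1 p₂ p q q') : p₁ = p₂ := by
  obtain ⟨r, a1, a2, a3, a4, a5⟩ := h1
  obtain ⟨s, b1, b2, b3, b4, b5⟩ := h2
  have : r = s := hinj r s (by omega) (by omega) (by rw [a4, b4])
  subst this
  apply ext_pt _ _ (by omega)
  intro t ht
  by_cases h : t = r
  · subst h; rw [a2, b2]
  · rw [← a5 t ht h, ← b5 t (by omega) h]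

theorem rep2_uniq (p p₁ p₂ : List (ℝ × ℝ)) (q q' w w' : ℝ × ℝ)
    (hinj : ∀ s t, s < p.length → t < p.length → pt p s = pt p t → s = t)
    (h1 : Replace2 p₁ p q q' w w') (h2 : Replace2 p₂ p q q' w w') : p₁ = p₂ := by
  obtain ⟨r, r', a1, a1', a0, a2, a2', a3, a4, a4', a5⟩ := h1
  obtain ⟨s, s', b1, b1', b0, b2, b2', b3, b4, b4', b5⟩ := h2
  have : r = s := hinj r s (by omega) (by omega) (by rw [a4, b4])
  subst this
  have : r' = s' := hinj r' s' (by omega) (by omega) (by rw [a4', b4'])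
  subst this
  apply ext_pt _ _ (by omega)
  intro t ht
  by_cases h : t = r
  · subst h; rw [a2, b2]
  by_cases h' : t = r'
  · subst h'; rw [a2', b2']
  · rw [← a5 t ht h h', ← b5 t (by omega) h h']

theorem typeA (n : ℕ) (i : ℕ) (k : ℤ)
    (p : List (ℝ × ℝ)) (hp : p ∈ P (.A n) i k) (j : ℕ) (l : ℤ) (hjl : (j, l) ∈ W (.A n)) :
    ((∃ p', LoweredTo (.A n) i k j l p' p) ↔
      ((j, l + (rr (.A n) j : ℤ)) ∈ Cp (.A n) p false ∧
        (j, l - (rr (.A n) j : ℤ)) ∉ Cp (.A n) p false)) ∧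
    (∀ p₁ p₂, LoweredTo (.A n) i k j l p₁ p → LoweredTo (.A n) i k j l p₂ p → p₁ = p₂) := by
  have hinj : ∀ s t, s < p.length → t < p.length → pt p s = pt p t → s = t := by
    intro s t hs ht h
    have h1 := hp.2.1 s (by have := hp.1; omega)
    have h2 := hp.2.1 t (by have := hp.1; omega)
    rw [h, h2] at h1
    exact_mod_cast h1.symm
  obtain ⟨hj1, hj2, -⟩ := hjl
  simp only at hj1 hj2
  refine ⟨⟨?_, ?_⟩, ?_⟩
  · rintro ⟨p', hp', -, ⟨hc, -⟩, r, h1, h2, h3, h4, h5⟩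
    have hr : r = j := by
      have := hp'.2.1 r (by have := hp'.1; omega)
      rw [h2] at this
      simp only at this
      exact_mod_cast this.symm
    subst hr
    simp only [Cp, rr, Set.mem_ofPred_eq, if_true] at hc ⊢
    obtain ⟨-, -, c1, c2, c3⟩ := hc
    have e1 := h5 (r - 1) (by omega) (by omega)
    have e2 := h5 (r + 1) (by have := hp'.1; omega) (by omega)
    rw [h4, e1, e2, c2, c3]
    push_cast
    refine ⟨⟨hj1, hj2, rfl, by norm_num, by norm_num⟩, ?_⟩
    rintro ⟨-, -, h, -⟩
    have := congrArg Prod.snd h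
    simp only at this
    linarith
  · rintro ⟨hc, -⟩
    simp only [Cp, rr, Set.mem_ofPred_eq] at hc
    obtain ⟨-, -, c1, c2, c3⟩ := hc
    push_cast at c1 c2 c3
    norm_num at c2 c3
    have hlen : j < p.length := by have := hp.1; omega
    obtain ⟨m, rfl⟩ : ∃ m, j = m + 1 := ⟨j - 1, by omega⟩
    have hps := fun s => pt_set p (m+1) s (((m + 1 : ℕ) : ℝ), (l : ℝ) - 1) hlen
    simp only [Nat.add_sub_cancel] at c2
    refine ⟨p.set (m+1) (((m + 1 : ℕ) : ℝ), (l : ℝ) - 1), ?_, hp, ⟨?_, ?_⟩, ?_⟩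
    · obtain ⟨g1, g2, g3, g4, g5⟩ := hp
      refine ⟨by simpa using g1, ?_, ?_, ?_, ?_⟩
      · intro r hr
        rw [hps]
        split_ifs with h
        · rw [h]
        · exact g2 r hr
      · rw [hps, if_neg (by omega)]; exact g3
      · rw [hps, if_neg (by omega)]; exact g4
      · intro r hr
        rw [hps, hps]
        by_cases h : r = m
        · subst h
          rw [if_pos rfl, if_neg (by omega), c2]; right; simp
        · rw [if_neg (by omega)]
          by_cases h' : r = m + 1
          · subst h'
            rw [if_pos rfl, c3]; left; simp
          · rw [if_neg h']; exact g5 r hr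
    · simp only [Cp, rr, Set.mem_ofPred_eq, hps]
      refine ⟨by omega, hj2, by simp, ?_, ?_⟩
      · rw [if_neg (by omega)]; simpa using c2
      · rw [if_neg (by omega)]; simpa using c3
    · simp only [Cp, rr, Set.mem_ofPred_eq, hps]
      rintro ⟨-, -, h, -⟩
      have := congrArg Prod.snd h
      simp at this
      linarith
    · refine ⟨m+1, by simpa using hlen, by rw [hps, if_pos rfl], by simp, by simpa using c1, ?_⟩
      intro s _ hs
      rw [hps, if_neg hs]
  · rintro p₁ p₂ ⟨-, -, -, h1⟩ ⟨-, -, -, h2⟩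
    exact rep1_uniq p p₁ p₂ _ _ hinj h1 h2

/-! Type B -/

def Branch (n : ℕ) (ε : ℝ) (l : ℤ) (x : ℕ → ℝ × ℝ) : Prop :=
    (if l % 4 = 3 then ∀ r, r < n → (x r).1 = 2 * (r : ℝ)
     else ∀ r, r < n → (x r).1 = 4 * (n : ℝ) - 2 - 2 * (r : ℝ)) ∧
    (x n).1 = 2 * (n : ℝ) - 1 ∧
    (x 0).2 = (l : ℝ) + 2 * (n : ℝ) - 1 ∧
    (∀ r, r + 2 ≤ n → (x (r + 1)).2 - (x r).2 = 2 ∨ (x (r + 1)).2 - (x r).2 = -2) ∧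
    ((x n).2 - (x (n - 1)).2 = 1 + ε ∨ (x n).2 - (x (n - 1)).2 = -(1 + ε))

theorem Branch.congr {n : ℕ} {ε : ℝ} {l : ℤ} {x x' : ℕ → ℝ × ℝ} (h : Branch n ε l x)
    (hx : ∀ r, r ≤ n → x' r = x r) : Branch n ε l x' := by
  obtain ⟨h1, h2, h3, h4, h5⟩ := h
  refine ⟨?_, by rw [hx n le_rfl, h2], by rw [hx 0 (by omega), h3], ?_, ?_⟩
  · split_ifs at h1 ⊢
    · intro r hr; rw [hx r hr.le]; exact h1 r hr
    · intro r hr; rw [hx r hr.le]; exact h1 r hr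
  · intro r hr; rw [hx _ (by omega), hx _ (by omega)]; exact h4 r hr
  · rw [hx _ (by omega), hx _ (by omega)]; exact h5

def ph (n : ℕ) (b : Bool) (r : ℕ) : ℕ := if b then r else 2 * n + 1 - r
def act (n i : ℕ) (b : Bool) : Prop := b = true ∨ i ≠ n
def lb (n i : ℕ) (k : ℤ) (b : Bool) : ℤ :=
  if i = n then k else if b then k - (2 * (n : ℤ) - 2 * (i : ℤ) - 1)
    else k + (2 * (n : ℤ) - 2 * (i : ℤ) - 1)

theorem memB (n : ℕ) (ε : ℝ) (i : ℕ) (k : ℤ) (p : List (ℝ × ℝ)) :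
    p ∈ pathsB n ε i k ↔ p.length = (if i = n then n + 1 else 2 * n + 2) ∧
      (∀ b, act n i b → Branch n ε (lb n i k b) (fun r => pt p (ph n b r))) ∧
      (i ≠ n → (pt p (n + 1)).2 < (pt p n).2) := by
  unfold pathsB
  by_cases hi : i = n
  · simp only [hi, if_true, act, lb, ph]
    constructor
    · rintro ⟨h1, h2⟩
      refine ⟨h1, ?_, by simp⟩
      rintro b hb
      simp at hb
      subst hb
      exact h2
    · rintro ⟨h1, h2, -⟩
      exact ⟨h1, h2 true (by simp)⟩
  · simp only [hi, if_false, act, lb, ph, Set.mem_ofPred_eq]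
    constructor
    · rintro ⟨a, b, ⟨a1, a2⟩, ⟨b1, b2⟩, rfl, -, h⟩
      have ha : ∀ r, r ≤ n → pt (a ++ b.reverse) r = pt a r := by
        intro r hr
        simp only [pt, List.getD_eq_getElem?_getD]
        rw [List.getElem?_append_left (by omega)]
      have hb : ∀ r, r ≤ n → pt (a ++ b.reverse) (2 * n + 1 - r) = pt b r := by
        intro r hr
        simp only [pt, List.getD_eq_getElem?_getD]
        rw [List.getElem?_append_right (by omega), List.getElem?_reverse (by omega)]
        congr 2
        omega
      refine ⟨by simp; omega, ?_, ?_⟩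
      · rintro b' -
        cases b'
        · exact Branch.congr b2 (by simpa using hb)
        · exact Branch.congr a2 (by simpa using ha)
      · intro _
        have := hb n le_rfl
        rw [show 2 * n + 1 - n = n + 1 by omega] at this
        rw [this, ha n le_rfl]; linarith
    · rintro ⟨h1, h2, h3⟩
      have ha : ∀ r, r ≤ n → pt (p.take (n + 1)) r = pt p r := by
        intro r hr
        simp only [pt, List.getD_eq_getElem?_getD]
        rw [List.getElem?_take_of_lt (by omega)]
      have hb : ∀ r, r ≤ n → pt (p.drop (n + 1)).reverse r = pt p (2 * n + 1 - r) := by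
        intro r hr
        simp only [pt, List.getD_eq_getElem?_getD]
        rw [List.getElem?_reverse (by simp; omega), List.getElem?_drop]
        congr 2
        simp; omega
      have A := h2 true (by simp)
      have B := h2 false (by simp [hi])
      simp at A B
      refine ⟨p.take (n + 1), (p.drop (n + 1)).reverse, ⟨by simp; omega, A.congr ha⟩,
        ⟨by simp; omega, B.congr hb⟩, by simp, ?_, ?_⟩
      · rw [ha n le_rfl, hb n le_rfl, A.2.1, B.2.1]
      · rw [ha n le_rfl, hb n le_rfl, show 2 * n + 1 - n = n + 1 by omega]
        linarith [h3 hi]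


theorem Branch.int {n : ℕ} {ε : ℝ} {l : ℤ} {x : ℕ → ℝ × ℝ} (h : Branch n ε l x) :
    ∀ r, r < n → ∃ y : ℤ, (x r).2 = y ∧ (y - (l + 2 * n - 1 + 2 * r)) % 4 = 0 := by
  intro r
  induction r with
  | zero => intro _; exact ⟨l + 2 * n - 1, by rw [h.2.2.1]; push_cast; ring, by simp⟩
  | succ r ih =>
    intro hr
    obtain ⟨y, hy, hm⟩ := ih (by omega)
    rcases h.2.2.2.1 r (by omega) with h' | h'
    · refine ⟨y + 2, ?_, by push_cast; omega⟩
      push_cast; rw [← hy]; linarith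
    · refine ⟨y - 2, ?_, by push_cast; omega⟩
      push_cast; rw [← hy]; linarith

def colZ (n : ℕ) (l : ℤ) (r : ℕ) : ℤ := if l % 4 = 3 then 2 * r else 4 * n - 2 - 2 * r

theorem Branch.col {n : ℕ} {ε : ℝ} {l : ℤ} {x : ℕ → ℝ × ℝ} (h : Branch n ε l x)
    (r : ℕ) (hr : r < n) : (x r).1 = (colZ n l r : ℝ) := by
  have := h.1
  unfold colZ
  split_ifs at this ⊢ with h
  · rw [this r hr]; push_cast; rfl
  · rw [this r hr]; push_cast; rfl

theorem Branch.coln {n : ℕ} {ε : ℝ} {l : ℤ} {x : ℕ → ℝ × ℝ} (h : Branch n ε l x)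
     : (x n).1 = ((2 * n - 1 : ℤ) : ℝ) := by
  rw [h.2.1]; push_cast; rfl

theorem Branch.mod {n : ℕ} {ε : ℝ} {l : ℤ} {x x' : ℕ → ℝ × ℝ} (h : Branch n ε l x)
    (hx : ∀ r, r ≤ n → (x' r).1 = (x r).1) (h0 : (x' 0).2 = (x 0).2)
    (hs : ∀ r, r + 2 ≤ n → (x' (r + 1)).2 - (x' r).2 = 2 ∨ (x' (r + 1)).2 - (x' r).2 = -2)
    (he : (x' n).2 - (x' (n - 1)).2 = 1 + ε ∨ (x' n).2 - (x' (n - 1)).2 = -(1 + ε)) :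
    Branch n ε l x' := by
  obtain ⟨h1, h2, h3, h4, h5⟩ := h
  refine ⟨?_, by rw [hx n le_rfl, h2], by rw [h0, h3], hs, he⟩
  split_ifs at h1 ⊢
  · intro r hr; rw [hx r hr.le]; exact h1 r hr
  · intro r hr; rw [hx r hr.le]; exact h1 r hr

theorem lb_odd {n i : ℕ} {k : ℤ} (hik : (i, k) ∈ XB n) (b : Bool) :
    lb n i k b % 4 = 1 ∨ lb n i k b % 4 = 3 := by
  rcases hik with ⟨h1, h2⟩ | ⟨h1, h2, h3⟩
  · simp only at h1 h2
    simp only [lb, h1, if_true]; omega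
  · simp only at h1 h2 h3
    have : i ≠ n := by omega
    simp only [lb, this, if_false]
    split_ifs <;> omega

theorem lb_ne {n i : ℕ} {k : ℤ} (hik : (i, k) ∈ XB n) (hi : i ≠ n) :
    (lb n i k true - lb n i k false) % 4 = 2 := by
  rcases hik with ⟨h1, h2⟩ | ⟨h1, h2, h3⟩
  · exact absurd h1 hi
  · simp only at h1 h2 h3
    simp only [lb, hi, if_false]
    simp
    omega

theorem act_ne {n i : ℕ} {b b' : Bool} (h : act n i b) (h' : act n i b') (hb : b ≠ b') :
    i ≠ n := by
  unfold act at *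
  rintro rfl
  simp at h h'
  exact hb (h.trans h'.symm)

theorem lb_ne' {n i : ℕ} {k : ℤ} (hik : (i, k) ∈ XB n) {b b' : Bool}
    (h : act n i b) (h' : act n i b') (hb : b ≠ b') :
    (lb n i k b - lb n i k b') % 4 = 2 := by
  have := lb_ne hik (act_ne h h' hb)
  cases b <;> cases b' <;> simp at hb ⊢ <;> omega

theorem cover {n : ℕ} {ε : ℝ} {i : ℕ} {k : ℤ} {p : List (ℝ × ℝ)} (hp : p ∈ pathsB n ε i k)
    (t : ℕ) (ht : t < p.length) : ∃ b r, act n i b ∧ r ≤ n ∧ t = ph n b r := by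
  rw [memB] at hp
  rw [hp.1] at ht
  by_cases hi : i = n
  · rw [if_pos hi] at ht
    exact ⟨true, t, by simp [act], by omega, by simp [ph]⟩
  · rw [if_neg hi] at ht
    by_cases h : t ≤ n
    · exact ⟨true, t, by simp [act], by omega, by simp [ph]⟩
    · exact ⟨false, 2 * n + 1 - t, by simp [act, hi], by omega, by simp [ph]; omega⟩

theorem ph_lt {n : ℕ} {ε : ℝ} {i : ℕ} {k : ℤ} {p : List (ℝ × ℝ)} (hp : p ∈ pathsB n ε i k)
    {b : Bool} (hb : act n i b) {r : ℕ} (hr : r ≤ n) : ph n b r < p.length := by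
  rw [memB] at hp
  rw [hp.1]
  unfold ph
  cases b
  · simp [act] at hb; simp [hb]; omega
  · simp; split_ifs <;> omega

theorem ph_inj {n : ℕ} {b b' : Bool} {r r' : ℕ} (hr : r ≤ n) (hr' : r' ≤ n)
    (h : ph n b r = ph n b' r') : b = b' ∧ r = r' := by
  unfold ph at h
  cases b <;> cases b' <;> simp at h ⊢ <;> omega

theorem br {n : ℕ} {ε : ℝ} {i : ℕ} {k : ℤ} {p : List (ℝ × ℝ)} (hp : p ∈ pathsB n ε i k)
    {b : Bool} (hb : act n i b) : Branch n ε (lb n i k b) (fun r => pt p (ph n b r)) :=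
  ((memB _ _ _ _ _).1 hp).2.1 b hb

theorem injB {n : ℕ} {ε : ℝ} {i : ℕ} {k : ℤ} (hik : (i, k) ∈ XB n)
    {p : List (ℝ × ℝ)} (hp : p ∈ pathsB n ε i k) {b b' : Bool} (hb : act n i b)
    (hb' : act n i b') {r r' : ℕ} (hr : r ≤ n) (hr' : r' ≤ n)
    (h : pt p (ph n b r) = pt p (ph n b' r')) : b = b' ∧ r = r' := by
  have B := br hp hb
  have B' := br hp hb'
  have o := lb_odd hik b
  have o' := lb_odd hik b'
  by_cases h1 : r = n
  · have c := B.coln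
    try simp only at c
    have h' := h
    rw [h1] at h'
    rw [h'] at c
    by_cases h2 : r' = n
    · refine ⟨?_, h1.trans h2.symm⟩
      by_contra hbb
      have := ((memB _ _ _ _ _).1 hp).2.2 (act_ne hb hb' hbb)
      rw [h1, h2] at h
      cases b <;> cases b' <;> simp [ph, show 2 * n + 1 - n = n + 1 by omega] at h hbb <;>
        rw [h] at this <;> exact lt_irrefl _ this
    · have c' := B'.col r' (by omega)
      try simp only at c'
      rw [c] at c'
      have c' : (2 * n - 1 : ℤ) = colZ n (lb n i k b') r' := by exact_mod_cast c'
      unfold colZ at c'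
      split_ifs at c' <;> omega
  · have c := B.col r (by omega)
    try simp only at c
    rw [h] at c
    by_cases h2 : r' = n
    · have c' := B'.coln
      try simp only at c'
      rw [h2] at c
      rw [c] at c'
      have c' : colZ n (lb n i k b) r = (2 * n - 1 : ℤ) := by exact_mod_cast c'
      unfold colZ at c'
      split_ifs at c' <;> omega
    · have c' := B'.col r' (by omega)
      try simp only at c'
      rw [c] at c'
      have c' : colZ n (lb n i k b) r = colZ n (lb n i k b') r' := by exact_mod_cast c'
      unfold colZ at c'
      by_cases hbb : b = b'
      · subst hbb
        refine ⟨rfl, ?_⟩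
        split_ifs at c' <;> omega
      · have := lb_ne' hik hb hb' hbb
        split_ifs at c' <;> omega

theorem iota_pt {n : ℕ} {ε : ℝ} {i : ℕ} {k : ℤ} (hik : (i, k) ∈ XB n)
    {p : List (ℝ × ℝ)} (hp : p ∈ pathsB n ε i k) {b : Bool} (hb : act n i b)
    {j : ℕ} {m : ℤ} (hj : j < n) (h : (pt p (ph n b j)).2 = m) :
    pt p (ph n b j) = (((iotaB n (j, m)).1 : ℝ), (m : ℝ)) := by
  obtain ⟨y, hy, hm⟩ := (br hp hb).int j hj
  have c := (br hp hb).col j hj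
  try simp only at hy c
  rw [hy] at h
  have h : y = m := by exact_mod_cast h
  subst h
  have o := lb_odd hik b
  refine Prod.ext ?_ hy
  rw [c]
  simp only [Int.cast_inj]
  unfold colZ iotaB
  have hjn : j ≠ n := by omega
  simp only [hjn, if_false]
  split_ifs <;> (try simp only at *) <;> omega

theorem iota_pt' {n : ℕ} {ε : ℝ} {i : ℕ} {k : ℤ} (hik : (i, k) ∈ XB n)
    {p : List (ℝ × ℝ)} (hp : p ∈ pathsB n ε i k) {b : Bool} (hb : act n i b)
    {j r : ℕ} {m : ℤ} (hj : j < n) (hr : r ≤ n)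
    (h : (pt p (ph n b r)).1 = (((iotaB n (j, m)).1 : ℝ))) : r = j := by
  have o := lb_odd hik b
  by_cases hrn : r = n
  · have c := (br hp hb).coln
    try simp only at c
    rw [hrn] at h
    rw [h] at c
    have c : (iotaB n (j, m)).1 = (2 * n - 1 : ℤ) := by exact_mod_cast c
    unfold iotaB at c
    have hjn : j ≠ n := by omega
    simp only [hjn, if_false] at c
    split_ifs at c <;> (try simp only at *) <;> omega
  · have c := (br hp hb).col r (by omega)
    try simp only at c
    rw [h] at c
    have c : (iotaB n (j, m)).1 = colZ n (lb n i k b) r := by exact_mod_cast c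
    unfold iotaB colZ at c
    have hjn : j ≠ n := by omega
    simp only [hjn, if_false] at c
    split_ifs at c <;> (try simp only at *) <;> omega


theorem ph_adj {n : ℕ} {b : Bool} {j : ℕ} (h1 : 1 ≤ j) (h2 : j < n) :
    (ph n b j - 1 = ph n b (j - 1) ∧ ph n b j + 1 = ph n b (j + 1)) ∨
    (ph n b j - 1 = ph n b (j + 1) ∧ ph n b j + 1 = ph n b (j - 1)) := by
  unfold ph
  cases b <;> simp <;> omega

theorem ph_bd {n : ℕ} {ε : ℝ} {i : ℕ} {k : ℤ} {p : List (ℝ × ℝ)} (hp : p ∈ pathsB n ε i k)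
    {b : Bool} (hb : act n i b) {r : ℕ} (h1 : 1 ≤ r) (hr : r < n) :
    1 ≤ ph n b r ∧ ph n b r + 1 < p.length := by
  rw [memB] at hp
  rw [hp.1]
  unfold ph
  cases b
  · simp [act] at hb; simp [hb]; omega
  · simp; split_ifs <;> omega

theorem iota_fst {n j : ℕ} {m : ℤ} (h1 : 1 ≤ j) (h2 : j < n) : (iotaB n (j, m)).1 ≠ 0 ∧
    (iotaB n (j, m)).1 ≠ 2 * (n : ℤ) - 1 ∧ (iotaB n (j, m)).1 ≠ 4 * (n : ℤ) - 2 := by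
  unfold iotaB
  have hjn : j ≠ n := by omega
  simp only [hjn, if_false]
  split_ifs <;> simp only <;> omega

theorem iota_snd {n j : ℕ} {m : ℤ} : (iotaB n (j, m)).2 = m := by
  unfold iotaB
  split_ifs <;> rfl

theorem iota_four {n j : ℕ} {m : ℤ} (h2 : j < n) :
    (iotaB n (j, m - 2)).1 = (iotaB n (j, m + 2)).1 := by
  unfold iotaB
  have hjn : j ≠ n := by omega
  simp only [hjn, if_false]
  split_ifs <;> (try simp only at *) <;> omega

theorem corner {n : ℕ} {ε : ℝ} {i : ℕ} {k : ℤ} (hik : (i, k) ∈ XB n)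
    {p : List (ℝ × ℝ)} (hp : p ∈ pathsB n ε i k) {j : ℕ} {m : ℤ} (h1 : 1 ≤ j) (h2 : j < n)
    (hm : m % 2 = 0) (up : Bool) :
    (j, m) ∈ Cp (.B n ε) p up ↔ ∃ b, act n i b ∧ (pt p (ph n b j)).2 = m ∧
      (if up then (m : ℝ) < (pt p (ph n b (j - 1))).2 ∧ (m : ℝ) < (pt p (ph n b (j + 1))).2
      else (pt p (ph n b (j - 1))).2 < (m : ℝ) ∧ (pt p (ph n b (j + 1))).2 < (m : ℝ)) := by
  simp only [Cp, Set.mem_ofPred_eq]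
  constructor
  · rintro ⟨-, ⟨t, t1, t2, t3, -, -, -, t4⟩ | ⟨h, -⟩⟩
    · obtain ⟨b, r, hb, hr, rfl⟩ := cover hp t (by omega)
      have : r = j := iota_pt' hik hp hb h2 hr (congrArg Prod.fst t3)
      subst this
      rw [iota_snd] at t3
      have e : (pt p (ph n b r)).2 = m := congrArg Prod.snd t3
      rw [e] at t4
      refine ⟨b, hb, e, ?_⟩
      rcases ph_adj (b := b) h1 h2 with ⟨a1, a2⟩ | ⟨a1, a2⟩ <;> rw [a1, a2] at t4
      · exact t4
      · cases up <;> simp only [if_true, Bool.false_eq_true, if_false] at t4 ⊢ <;> exact t4.symm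
    · omega
  · rintro ⟨b, hb, e, t4⟩
    refine ⟨Or.inr ⟨h1, h2, hm⟩, Or.inl ⟨ph n b j, (ph_bd hp hb h1 h2).1, (ph_bd hp hb h1 h2).2, ?_,
      (iota_fst h1 h2).1, (iota_fst h1 h2).2.1, (iota_fst h1 h2).2.2, ?_⟩⟩
    · rw [iota_snd]; exact iota_pt hik hp hb h2 e
    · rw [e]
      rcases ph_adj (b := b) h1 h2 with ⟨a1, a2⟩ | ⟨a1, a2⟩ <;> rw [a1, a2]
      · exact t4
      · cases up <;> simp only [if_true, Bool.false_eq_true, if_false] at t4 ⊢ <;> exact t4.symm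

theorem mem_end {n : ℕ} {ε : ℝ} {i : ℕ} {k : ℤ} (hik : (i, k) ∈ XB n)
    {p : List (ℝ × ℝ)} (hp : p ∈ pathsB n ε i k) (y : ℝ) :
    (2 * (n : ℝ) - 1, y) ∈ p ↔ ∃ b, act n i b ∧ (pt p (ph n b n)).2 = y := by
  constructor
  · intro h
    obtain ⟨t, ht, e⟩ := List.getElem_of_mem h
    have e' : pt p t = (2 * (n : ℝ) - 1, y) := by
      rw [← e]; simp [pt, List.getD_eq_getElem?_getD, ht]
    obtain ⟨b, r, hb, hr, rfl⟩ := cover hp t ht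
    refine ⟨b, hb, ?_⟩
    have : r = n := by
      by_contra hrn
      have c := (br hp hb).col r (by omega)
      try simp only at c
      rw [e'] at c
      have c : (2 * n - 1 : ℤ) = colZ n (lb n i k b) r := by
        simp only at c
        exact_mod_cast c
      unfold colZ at c
      split_ifs at c <;> omega
    subst this
    rw [e']
  · rintro ⟨b, hb, e⟩
    have c := (br hp hb).2.1
    have hl := ph_lt hp hb le_rfl
    have : pt p (ph n b n) = (2 * (n : ℝ) - 1, y) := Prod.ext c e
    rw [← this]
    simp only [pt, List.getD_eq_getElem?_getD, List.getElem?_eq_getElem hl, Option.getD_some]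
    exact List.getElem_mem hl

theorem cornerN {n : ℕ} {ε : ℝ} {i : ℕ} {k : ℤ} (hik : (i, k) ∈ XB n)
    {p : List (ℝ × ℝ)} (hp : p ∈ pathsB n ε i k) {m : ℤ} (hm : m % 2 = 1) :
    ((n, m) ∈ Cp (.B n ε) p true ↔ (∃ b, act n i b ∧ (pt p (ph n b n)).2 = m - ε) ∧
       ¬ (∃ b, act n i b ∧ (pt p (ph n b n)).2 = m + ε)) ∧
    ((n, m) ∈ Cp (.B n ε) p false ↔ (∃ b, act n i b ∧ (pt p (ph n b n)).2 = m + ε) ∧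
       ¬ (∃ b, act n i b ∧ (pt p (ph n b n)).2 = m - ε)) := by
  have hX : (n, m) ∈ XB n := Or.inl ⟨rfl, hm⟩
  simp only [← mem_end hik hp]
  simp [Cp, hX, iotaB]

/-- Consequence of a replacement of one point. -/
theorem rep1_use {n : ℕ} {ε : ℝ} {i : ℕ} {k : ℤ} (hik : (i, k) ∈ XB n)
    {p p' : List (ℝ × ℝ)} (hp : p ∈ pathsB n ε i k) {q q' : ℝ × ℝ}
    (h : Replace1 p p' q q') {b : Bool} (hb : act n i b) {r : ℕ} (hr : r ≤ n)
    (hq : pt p (ph n b r) = q) :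
    pt p' (ph n b r) = q' ∧ ∀ b' r', act n i b' → r' ≤ n → (b' ≠ b ∨ r' ≠ r) →
      pt p' (ph n b' r') = pt p (ph n b' r') := by
  obtain ⟨t, h1, h2, h3, h4, h5⟩ := h
  obtain ⟨b₀, r₀, hb₀, hr₀, rfl⟩ := cover hp t h1
  obtain ⟨rfl, rfl⟩ := injB hik hp hb hb₀ hr hr₀ (hq.trans h2.symm)
  refine ⟨h4, ?_⟩
  intro b' r' hb' hr' hne
  apply h5 _ (ph_lt hp hb' hr')
  intro he
  obtain ⟨rfl, rfl⟩ := ph_inj hr' hr he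
  simp at hne

theorem rep2_use {n : ℕ} {ε : ℝ} {i : ℕ} {k : ℤ} (hik : (i, k) ∈ XB n)
    {p p' : List (ℝ × ℝ)} (hp : p ∈ pathsB n ε i k) {q q' w w' : ℝ × ℝ}
    (h : Replace2 p p' q q' w w') {b : Bool} (hb : act n i b) {r s : ℕ} (hr : r ≤ n) (hs : s ≤ n)
    (hq : pt p (ph n b r) = q) (hw : pt p (ph n b s) = w) :
    pt p' (ph n b r) = q' ∧ pt p' (ph n b s) = w' ∧
      ∀ b' r', act n i b' → r' ≤ n → (b' ≠ b ∨ (r' ≠ r ∧ r' ≠ s)) →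
      pt p' (ph n b' r') = pt p (ph n b' r') := by
  obtain ⟨t, u, h1, g1, -, h2, g2, h3, h4, g4, h5⟩ := h
  obtain ⟨b₀, r₀, hb₀, hr₀, rfl⟩ := cover hp t h1
  obtain ⟨rfl, rfl⟩ := injB hik hp hb hb₀ hr hr₀ (hq.trans h2.symm)
  obtain ⟨b₁, r₁, hb₁, hr₁, rfl⟩ := cover hp u g1
  obtain ⟨rfl, rfl⟩ := injB hik hp hb hb₁ hs hr₁ (hw.trans g2.symm)
  refine ⟨h4, g4, ?_⟩
  intro b' r' hb' hr' hne
  apply h5 _ (ph_lt hp hb' hr')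
  · intro he
    obtain ⟨rfl, rfl⟩ := ph_inj hr' hr he
    simp at hne
  · intro he
    obtain ⟨rfl, rfl⟩ := ph_inj hr' hs he
    simp at hne


theorem bool3 {b b' : Bool} (h : b' ≠ b) (b'' : Bool) : b'' = b ∨ b'' = b' := by
  cases b <;> cases b' <;> cases b'' <;> simp_all

theorem ends {n : ℕ} {ε : ℝ} {i : ℕ} {k : ℤ} {p : List (ℝ × ℝ)} (hp : p ∈ pathsB n ε i k)
    {b b' : Bool} (hb : act n i b) (hb' : act n i b') (h : b' ≠ b) :
    if b then (pt p (ph n b' n)).2 < (pt p (ph n b n)).2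
      else (pt p (ph n b n)).2 < (pt p (ph n b' n)).2 := by
  have := ((memB _ _ _ _ _).1 hp).2.2 (act_ne hb' hb h)
  cases b <;> cases b' <;> simp [ph, show 2 * n + 1 - n = n + 1 by omega] at h ⊢ <;> exact this

theorem raise_mem {n : ℕ} {ε : ℝ} {i : ℕ} {k : ℤ} {p p' : List (ℝ × ℝ)} (hp : p ∈ pathsB n ε i k)
    (hlen : p'.length = p.length) {b : Bool}
    (hoth : ∀ b' r', act n i b' → r' ≤ n → b' ≠ b → pt p' (ph n b' r') = pt p (ph n b' r'))
    (hB : Branch n ε (lb n i k b) (fun r => pt p' (ph n b r)))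
    (hend : ∀ b', act n i b' → b' ≠ b →
      if b then (pt p (ph n b' n)).2 < (pt p' (ph n b n)).2
      else (pt p' (ph n b n)).2 < (pt p (ph n b' n)).2) (hb : act n i b) : p' ∈ pathsB n ε i k := by
  rw [memB]
  refine ⟨by rw [hlen]; exact ((memB _ _ _ _ _).1 hp).1, ?_, ?_⟩
  · intro b' hb'
    by_cases h : b' = b
    · subst h; exact hB
    · exact (br hp hb').congr (fun r hr => hoth b' r hb' hr h)
  · intro hi
    have hb' : act n i (!b) := by simp [act, hi]
    have h1 := hend (!b) hb' (by simp)
    have h2 := hoth (!b) n hb' le_rfl (by simp)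
    rw [← h2] at h1
    cases b <;> simpa [ph, show 2 * n + 1 - n = n + 1 by omega] using h1

theorem same_b {n : ℕ} {ε : ℝ} {i : ℕ} {k : ℤ} (hik : (i, k) ∈ XB n)
    {p : List (ℝ × ℝ)} (hp : p ∈ pathsB n ε i k) {b b' : Bool} (hb : act n i b)
    (hb' : act n i b') {j : ℕ} (hj : j < n) {m m' : ℤ} (h : (pt p (ph n b j)).2 = m)
    (h' : (pt p (ph n b' j)).2 = m') (hm : (m - m') % 4 = 0) : b' = b := by
  by_contra hbb
  obtain ⟨y, hy, hy4⟩ := (br hp hb).int j hj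
  obtain ⟨y', hy', hy4'⟩ := (br hp hb').int j hj
  try simp only at hy hy'
  rw [hy] at h
  rw [hy'] at h'
  have e : y = m := by exact_mod_cast h
  have e' : y' = m' := by exact_mod_cast h'
  have := lb_ne' hik hb hb' (Ne.symm hbb)
  omega

theorem other_b {n : ℕ} {ε : ℝ} {i : ℕ} {k : ℤ} (hik : (i, k) ∈ XB n)
    {p : List (ℝ × ℝ)} (hp : p ∈ pathsB n ε i k) {b b' : Bool} (hb : act n i b)
    (hb' : act n i b') (hbb : b' ≠ b) {j : ℕ} (hj : j < n) {m : ℤ} (h : (pt p (ph n b j)).2 = m) :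
    ∃ c : ℤ, (pt p (ph n b' j)).2 = ((m + 2 + 4 * c : ℤ) : ℝ) := by
  obtain ⟨y, hy, hy4⟩ := (br hp hb).int j hj
  obtain ⟨y', hy', hy4'⟩ := (br hp hb').int j hj
  try simp only at hy hy'
  rw [hy] at h
  have e : y = m := by exact_mod_cast h
  have := lb_ne' hik hb hb' (Ne.symm hbb)
  refine ⟨(y' - m - 2) / 4, ?_⟩
  rw [hy']
  congr 1
  omega

theorem caseM {n : ℕ} {ε : ℝ} {i : ℕ} {k : ℤ} (hik : (i, k) ∈ XB n)
    {p : List (ℝ × ℝ)} (hp : p ∈ pathsB n ε i k) {j : ℕ} {l : ℤ} (h1 : 1 ≤ j) (h2 : j + 1 < n)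
    (hl : l % 2 = 0) :
    (∃ p', p' ∈ pathsB n ε i k ∧ p ∈ pathsB n ε i k ∧
      ((j, l - 2) ∈ Cp (.B n ε) p' true ∧ (j, l + 2) ∉ Cp (.B n ε) p' true) ∧
      Replace1 p' p
         (((iotaB n (j, l - 2)).1 : ℝ), (l : ℝ) - 2) (((iotaB n (j, l - 2)).1 : ℝ), (l : ℝ) + 2)) ↔
      ((j, l + 2) ∈ Cp (.B n ε) p false ∧ (j, l - 2) ∉ Cp (.B n ε) p false) := by
  obtain ⟨m, rfl⟩ : ∃ m, j = m + 1 := ⟨j - 1, by omega⟩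
  rw [corner hik hp h1 (by omega) (by omega), corner hik hp h1 (by omega) (by omega)]
  simp only [Nat.add_sub_cancel, Bool.false_eq_true, if_false]
  constructor
  · rintro ⟨p', hp', -, ⟨hc, -⟩, R⟩
    rw [corner hik hp' h1 (by omega) (by omega)] at hc
    simp only [Nat.add_sub_cancel, if_true] at hc
    obtain ⟨b, hb, e, c1, c2⟩ := hc
    have e1 := iota_pt hik hp' hb (by omega) e
    push_cast at e1 e c1 c2
    obtain ⟨f, g⟩ := rep1_use hik hp' R hb (by omega) e1
    have s1 := (br hp' hb).2.2.2.1 m (by omega)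
    have s2 := (br hp' hb).2.2.2.1 (m + 1) (by omega)
    try simp only at s1 s2
    have f2 : (pt p (ph n b (m + 1))).2 = ((l + 2 : ℤ) : ℝ) := by rw [f]; push_cast; rfl
    refine ⟨⟨b, hb, f2, ?_, ?_⟩, ?_⟩
    · rw [g b m hb (by omega) (by omega)]; push_cast
      rcases s1 with s | s <;> linarith
    · rw [g b (m+1+1) hb (by omega) (by omega)]; push_cast
      rcases s2 with s | s <;> linarith
    · rintro ⟨b', hb', e', -⟩
      have := same_b hik hp hb hb' (by omega) f2 e' (by omega)
      subst this
      rw [f2] at e'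
      push_cast at e'
      linarith
  · rintro ⟨⟨b, hb, e, c1, c2⟩, -⟩
    have e1 := iota_pt hik hp hb (by omega) e
    rw [← iota_four (by omega)] at e1
    push_cast at e1 e c1 c2
    set q : ℝ × ℝ := (((iotaB n (m+1, l - 2)).1 : ℝ), (l : ℝ) - 2) with hq
    have hlt := ph_lt hp hb (show m + 1 ≤ n by omega)
    have hps : ∀ b' r', r' ≤ n → pt (p.set (ph n b (m+1)) q) (ph n b' r') =
        if b' = b ∧ r' = m + 1 then q else pt p (ph n b' r') := by
      intro b' r' hr'
      rw [pt_set _ _ _ _ hlt]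
      by_cases h : b' = b ∧ r' = m + 1
      · rw [if_pos h, if_pos (by rw [h.1, h.2])]
      · rw [if_neg h, if_neg (fun h' => h (ph_inj hr' (by omega) h'))]
    have s1 := (br hp hb).2.2.2.1 m (by omega)
    have s2 := (br hp hb).2.2.2.1 (m + 1) (by omega)
    try simp only at s1 s2
    have d1 : (pt p (ph n b m)).2 = l := by rcases s1 with s | s <;> linarith
    have d2 : (pt p (ph n b (m+1+1))).2 = l := by rcases s2 with s | s <;> linarith
    have hp' : p.set (ph n b (m+1)) q ∈ pathsB n ε i k := by
      apply raise_mem hp (by simp) (b := b) _ _ _ hb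
      · intro b' r' hb' hr' hne
        rw [hps _ _ hr', if_neg (by simp [hne])]
      · apply (br hp hb).mod
        · intro r hr
          rw [hps _ _ hr]
          by_cases h : r = m + 1
          · subst h; simp only [and_self, if_true]; rw [e1]
          · simp [h]
        · rw [hps _ _ (by omega)]; simp
        · intro r hr
          rw [hps _ _ (by omega), hps _ _ (by omega)]
          by_cases h : r = m
          · subst h
            simp only [and_self, if_true]
            rw [if_neg (by simp), d1]
            right; simp [q]
          · by_cases h' : r = m + 1
            · subst h'
              simp only [and_self, if_true]
              rw [if_neg (by simp), d2]
              left; simp [q]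
            · rw [if_neg (by simp [h]), if_neg (by simp [h'])]
              exact (br hp hb).2.2.2.1 r hr
        · rw [hps _ _ (by omega), hps _ _ (by omega), if_neg (by simp; omega),
            if_neg (by simp; omega)]
          exact (br hp hb).2.2.2.2
      · intro b' hb' hne
        rw [hps _ _ le_rfl, if_neg (show ¬ (b = b ∧ n = m + 1) by simp; omega)]
        exact ends hp hb hb' hne
    have Y1 : (pt (p.set (ph n b (m+1)) q) (ph n b (m+1))).2 = ((l - 2 : ℤ) : ℝ) := by
      rw [hps _ _ (by omega)]; simp [q]
    refine ⟨_, hp', hp, ⟨?_, ?_⟩, ?_⟩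
    · rw [corner hik hp' h1 (by omega) (by omega)]
      simp only [Nat.add_sub_cancel, if_true]
      refine ⟨b, hb, Y1, ?_, ?_⟩
      · rw [hps _ _ (by omega), if_neg (by simp), d1]; push_cast; linarith
      · rw [hps _ _ (by omega), if_neg (by simp), d2]; push_cast; linarith
    · rw [corner hik hp' h1 (by omega) (by omega)]
      rintro ⟨b', hb', e', -⟩
      have := same_b hik hp' hb hb' (by omega) Y1 e' (by omega)
      subst this
      rw [Y1] at e'
      push_cast at e'
      linarith
    · refine ⟨ph n b (m+1), by simpa using hlt, ?_, by simp, e1, ?_⟩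
      · rw [pt_set _ _ _ _ hlt, if_pos rfl]
      · intro s _ hs
        rw [pt_set _ _ _ _ hlt, if_neg hs]


theorem caseE {n : ℕ} {ε : ℝ} (he0 : 0 < ε) (he1 : ε < 1 / 2)
    {i : ℕ} {k : ℤ} (hik : (i, k) ∈ XB n)
    {p : List (ℝ × ℝ)} (hp : p ∈ pathsB n ε i k) {j : ℕ} {l : ℤ} (h1 : 1 ≤ j) (h2 : j + 1 = n)
    (hl : l % 2 = 0) :
    (∃ p', p' ∈ pathsB n ε i k ∧ p ∈ pathsB n ε i k ∧
      ((j, l - 2) ∈ Cp (.B n ε) p' true ∧ (j, l + 2) ∉ Cp (.B n ε) p' true) ∧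
      Replace2 p' p
         (((iotaB n (j, l - 2)).1 : ℝ), (l : ℝ) - 2) (((iotaB n (j, l - 2)).1 : ℝ), (l : ℝ) + 2)
         (2 * (n : ℝ) - 1, (l : ℝ) - 1 + ε) (2 * (n : ℝ) - 1, (l : ℝ) + 1 - ε)) ↔
      ((j, l + 2) ∈ Cp (.B n ε) p false ∧ (j, l - 2) ∉ Cp (.B n ε) p false) := by
  obtain ⟨m, rfl⟩ : ∃ m, j = m + 1 := ⟨j - 1, by omega⟩
  have hnm : n - 1 = m + 1 := by omega
  rw [corner hik hp h1 (by omega) (by omega), corner hik hp h1 (by omega) (by omega)]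
  simp only [Nat.add_sub_cancel, Bool.false_eq_true, if_false, h2]
  constructor
  · rintro ⟨p', hp', -, ⟨hc, -⟩, R⟩
    rw [corner hik hp' h1 (by omega) (by omega)] at hc
    simp only [Nat.add_sub_cancel, if_true, h2] at hc
    obtain ⟨b, hb, e, c1, c2⟩ := hc
    have e1 := iota_pt hik hp' hb (by omega) e
    push_cast at e1 e c1 c2
    have s1 := (br hp' hb).2.2.2.1 m (by omega)
    have s2 := (br hp' hb).2.2.2.2
    try simp only at s1 s2
    rw [hnm] at s2
    have e2 : pt p' (ph n b n) = (2 * (n : ℝ) - 1, (l : ℝ) - 1 + ε) := by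
      refine Prod.ext (br hp' hb).2.1 ?_
      simp only
      rcases s2 with s | s <;> linarith
    obtain ⟨f, f', g⟩ := rep2_use hik hp' R hb (by omega) le_rfl e1 e2
    have f2 : (pt p (ph n b (m + 1))).2 = ((l + 2 : ℤ) : ℝ) := by rw [f]; push_cast; rfl
    refine ⟨⟨b, hb, f2, ?_, ?_⟩, ?_⟩
    · rw [g b m hb (by omega) (by omega)]; push_cast
      rcases s1 with s | s <;> linarith
    · rw [f']; push_cast; linarith
    · rintro ⟨b', hb', e', -⟩
      have := same_b hik hp hb hb' (by omega) f2 e' (by omega)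
      subst this
      rw [f2] at e'
      push_cast at e'
      linarith
  · rintro ⟨⟨b, hb, e, c1, c2⟩, -⟩
    have e1 := iota_pt hik hp hb (by omega) e
    have hot : ∀ b', act n i b' → b' ≠ b → _ := fun b' hb' hne =>
      other_b hik hp hb hb' hne (show m + 1 < n by omega) e
    rw [← iota_four (by omega)] at e1
    push_cast at e1 e c1 c2
    set q : ℝ × ℝ := (((iotaB n (m+1, l - 2)).1 : ℝ), (l : ℝ) - 2) with hq
    set w : ℝ × ℝ := (2 * (n : ℝ) - 1, (l : ℝ) - 1 + ε) with hw
    have hlt := ph_lt hp hb (show m + 1 ≤ n by omega)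
    have hltn := ph_lt hp hb (le_refl n)
    have hne : ph n b (m+1) ≠ ph n b n := by
      intro h
      have := (ph_inj (by omega) le_rfl h).2
      omega
    obtain ⟨p', hp'd⟩ : ∃ p', p' = (p.set (ph n b (m+1)) q).set (ph n b n) w := ⟨_, rfl⟩
    have hlen : p'.length = p.length := by rw [hp'd]; simp
    have hps0 : ∀ s, pt p' s = if s = ph n b n then w else if s = ph n b (m+1) then q else pt p s := by
      intro s
      rw [hp'd, pt_set _ _ _ _ (by simpa using hltn), pt_set _ _ _ _ hlt]
    have hps : ∀ b' r', r' ≤ n → pt p' (ph n b' r') =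
        if b' = b ∧ r' = n then w else
        if b' = b ∧ r' = m + 1 then q else pt p (ph n b' r') := by
      intro b' r' hr'
      rw [hps0]
      by_cases h : b' = b ∧ r' = n
      · rw [if_pos h, if_pos (by rw [h.1, h.2])]
      · rw [if_neg h, if_neg (fun h' => h (ph_inj hr' (by omega) h'))]
        by_cases h : b' = b ∧ r' = m + 1
        · rw [if_pos h, if_pos (by rw [h.1, h.2])]
        · rw [if_neg h, if_neg (fun h' => h (ph_inj hr' (by omega) h'))]
    have s1 := (br hp hb).2.2.2.1 m (by omega)
    have s2 := (br hp hb).2.2.2.2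
    try simp only at s1 s2
    rw [hnm] at s2
    have d1 : (pt p (ph n b m)).2 = l := by rcases s1 with s | s <;> linarith
    have d2 : (pt p (ph n b n)).2 = l + 1 - ε := by rcases s2 with s | s <;> linarith
    have e2 : pt p (ph n b n) = (2 * (n : ℝ) - 1, (l : ℝ) + 1 - ε) :=
      Prod.ext (br hp hb).2.1 d2
    have Z1 : pt p' (ph n b (m+1)) = q := by
      rw [hps _ _ (by omega), if_neg (by omega), if_pos ⟨rfl, rfl⟩]
    have Zn : pt p' (ph n b n) = w := by
      rw [hps _ _ (by omega), if_pos ⟨rfl, rfl⟩]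
    have Zm : ∀ r, r ≤ m → pt p' (ph n b r) = pt p (ph n b r) := by
      intro r hr
      rw [hps _ _ (by omega), if_neg (by omega), if_neg (by omega)]
    have hp' : p' ∈ pathsB n ε i k := by
      apply raise_mem hp hlen (b := b) _ _ _ hb
      · intro b' r' hb' hr' hne
        rw [hps _ _ hr', if_neg (by simp [hne]), if_neg (by simp [hne])]
      · apply (br hp hb).mod
        · intro r hr
          by_cases h : r = m + 1
          · subst h; rw [Z1, e1]
          · by_cases h' : r = n
            · subst h'; rw [Zn, e2]
            · rw [Zm r (by omega)]
        · rw [Zm _ (by omega)]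
        · intro r hr
          by_cases h : r = m
          · subst h
            rw [Z1, Zm _ le_rfl, d1]
            right; simp [q]
          · rw [Zm _ (by omega), Zm _ (by omega)]
            exact (br hp hb).2.2.2.1 r hr
        · rw [hnm, Zn, Z1]
          left; simp only [w, q]; ring
      · intro b' hb' hne
        rw [Zn]
        have en := ends hp hb hb' hne
        rw [d2] at en
        cases b
        · simp only [Bool.false_eq_true, if_false, w] at en ⊢
          linarith
        · simp only [if_true, w] at en ⊢
          obtain ⟨c, hc⟩ := hot b' hb' hne
          have s3 := (br hp hb').2.2.2.2
          try simp only at s3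
          rw [hnm, hc] at s3
          push_cast at s3
          rcases s3 with s | s
          · have : (c : ℝ) < -1 := by linarith
            have : c < -1 := by exact_mod_cast this
            have : c ≤ -2 := by omega
            have : (c : ℝ) ≤ -2 := by exact_mod_cast this
            linarith
          · have : (c : ℝ) < 0 := by linarith
            have : c < 0 := by exact_mod_cast this
            have : c ≤ -1 := by omega
            have : (c : ℝ) ≤ -1 := by exact_mod_cast this
            linarith
    have Y1 : (pt p' (ph n b (m+1))).2 = ((l - 2 : ℤ) : ℝ) := by
      rw [Z1]; simp [q]
    refine ⟨_, hp', hp, ⟨?_, ?_⟩, ?_⟩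
    · rw [corner hik hp' h1 (by omega) (by omega)]
      simp only [Nat.add_sub_cancel, if_true]
      refine ⟨b, hb, Y1, ?_, ?_⟩
      · rw [Zm _ le_rfl, d1]; push_cast; linarith
      · rw [h2, Zn]; simp only [w]; push_cast; linarith
    · rw [corner hik hp' h1 (by omega) (by omega)]
      rintro ⟨b', hb', e', -⟩
      have := same_b hik hp' hb hb' (by omega) Y1 e' (by omega)
      subst this
      rw [Y1] at e'
      push_cast at e'
      linarith
    · refine ⟨ph n b (m+1), ph n b n, by omega, by omega, hne, Z1, Zn, hlen.symm, e1, e2, ?_⟩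
      intro s _ hs hs'
      rw [hps0, if_neg hs', if_neg hs]

theorem caseN {n : ℕ} {ε : ℝ} (hn : 2 ≤ n) (he0 : 0 < ε) (he1 : ε < 1 / 2)
    {i : ℕ} {k : ℤ} (hik : (i, k) ∈ XB n)
    {p : List (ℝ × ℝ)} (hp : p ∈ pathsB n ε i k) {l : ℤ} (hl : l % 2 = 0) :
    (∃ p', p' ∈ pathsB n ε i k ∧ p ∈ pathsB n ε i k ∧
      ((n, l - 1) ∈ Cp (.B n ε) p' true ∧ (n, l + 1) ∉ Cp (.B n ε) p' true) ∧
      Replace1 p' p (2 * (n : ℝ) - 1, (l : ℝ) - 1 - ε) (2 * (n : ℝ) - 1, (l : ℝ) + 1 + ε)) ↔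
      ((n, l + 1) ∈ Cp (.B n ε) p false ∧ (n, l - 1) ∉ Cp (.B n ε) p false) := by
  rw [(cornerN hik hp (by omega)).2, (cornerN hik hp (by omega)).2]
  constructor
  · rintro ⟨p', hp', -, hc, R⟩
    rw [(cornerN hik hp' (by omega)).1, (cornerN hik hp' (by omega)).1] at hc
    push_cast at hc ⊢
    obtain ⟨⟨⟨b, hb, e⟩, c1⟩, c2⟩ := hc
    have e1 : pt p' (ph n b n) = (2 * (n : ℝ) - 1, (l : ℝ) - 1 - ε) :=
      Prod.ext (br hp' hb).2.1 e
    obtain ⟨f, g⟩ := rep1_use hik hp' R hb le_rfl e1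
    have o1 : ∀ b', act n i b' → b' ≠ b → (pt p (ph n b' n)).2 ≠ l + 1 - ε := by
      intro b' hb' hne h
      rw [g b' n hb' le_rfl (Or.inl hne)] at h
      apply c2
      refine ⟨⟨b', hb', h⟩, ?_⟩
      rintro ⟨b'', hb'', h''⟩
      rcases bool3 hne b'' with rfl | rfl <;> linarith
    have o2 : ∀ b', act n i b' → b' ≠ b → (pt p (ph n b' n)).2 ≠ l - 1 + ε := by
      intro b' hb' hne h
      rw [g b' n hb' le_rfl (Or.inl hne)] at h
      exact c1 ⟨b', hb', h⟩
    refine ⟨⟨⟨b, hb, by rw [f]⟩, ?_⟩, ?_⟩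
    · rintro ⟨b', hb', h⟩
      by_cases hbb : b' = b
      · subst hbb; rw [f] at h; simp only at h; linarith
      · exact o1 b' hb' hbb h
    · rintro ⟨⟨b', hb', h⟩, -⟩
      by_cases hbb : b' = b
      · subst hbb; rw [f] at h; simp only at h; linarith
      · exact o2 b' hb' hbb h
  · push_cast
    rintro ⟨⟨⟨b, hb, d2⟩, c1⟩, c2⟩
    have o1 : ∀ b', act n i b' → b' ≠ b → (pt p (ph n b' n)).2 ≠ l + 1 - ε := by
      intro b' hb' hne h
      exact c1 ⟨b', hb', h⟩
    have o2 : ∀ b', act n i b' → b' ≠ b → (pt p (ph n b' n)).2 ≠ l - 1 + ε := by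
      intro b' hb' hne h
      apply c2
      refine ⟨⟨b', hb', h⟩, ?_⟩
      rintro ⟨b'', hb'', h''⟩
      rcases bool3 hne b'' with rfl | rfl <;> linarith
    have e2 : pt p (ph n b n) = (2 * (n : ℝ) - 1, (l : ℝ) + 1 + ε) :=
      Prod.ext (br hp hb).2.1 d2
    have d1 : (pt p (ph n b (n - 1))).2 = l := by
      obtain ⟨y, hy, hy4⟩ := (br hp hb).int (n - 1) (by omega)
      have s2 := (br hp hb).2.2.2.2
      try simp only at hy s2
      rcases s2 with s | s
      · linarith
      · exfalso
        rw [hy, d2] at s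
        have a1 : (l : ℝ) + 2 < y := by linarith
        have a2 : (y : ℝ) < l + 3 := by linarith
        have a1 : l + 2 < y := by exact_mod_cast a1
        have a2 : y < l + 3 := by exact_mod_cast a2
        omega
    set w : ℝ × ℝ := (2 * (n : ℝ) - 1, (l : ℝ) - 1 - ε) with hw
    have hltn := ph_lt hp hb (le_refl n)
    obtain ⟨p', hp'd⟩ : ∃ p', p' = p.set (ph n b n) w := ⟨_, rfl⟩
    have hlen : p'.length = p.length := by rw [hp'd]; simp
    have hps0 : ∀ s, pt p' s = if s = ph n b n then w else pt p s := by
      intro s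
      rw [hp'd, pt_set _ _ _ _ hltn]
    have Zn : pt p' (ph n b n) = w := by
      rw [hps0, if_pos rfl]
    have Zo : ∀ b' r', r' ≤ n → (b' ≠ b ∨ r' ≠ n) → pt p' (ph n b' r') = pt p (ph n b' r') := by
      intro b' r' hr' h
      rw [hps0, if_neg]
      intro h'
      have := ph_inj hr' le_rfl h'
      rcases h with h | h
      · exact h this.1
      · exact h this.2
    have hp' : p' ∈ pathsB n ε i k := by
      apply raise_mem hp hlen (b := b) _ _ _ hb
      · intro b' r' hb' hr' hne
        exact Zo _ _ hr' (Or.inl hne)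
      · apply (br hp hb).mod
        · intro r hr
          by_cases h' : r = n
          · subst h'; rw [Zn, e2]
          · rw [Zo b r (by omega) (Or.inr h')]
        · rw [Zo _ _ (by omega) (Or.inr (by omega))]
        · intro r hr
          rw [Zo _ _ (by omega) (Or.inr (by omega)), Zo _ _ (by omega) (Or.inr (by omega))]
          exact (br hp hb).2.2.2.1 r hr
        · rw [Zn, Zo _ _ (by omega) (Or.inr (by omega)), d1]
          right; simp only [w]; ring
      · intro b' hb' hne
        rw [Zn]
        have en := ends hp hb hb' hne
        have q1 := o1 b' hb' hne
        have q2 := o2 b' hb' hne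
        rw [d2] at en
        obtain ⟨c, hc⟩ := other_b hik hp hb hb' hne (show n - 1 < n by omega) d1
        have s3 := (br hp hb').2.2.2.2
        try simp only at s3
        rw [hc] at s3
        push_cast at s3
        cases b
        · simp only [Bool.false_eq_true, if_false, w] at en ⊢
          linarith
        · simp only [if_true, w] at en ⊢
          rcases s3 with s | s
          · have : (c : ℝ) < 0 := by linarith
            have : c < 0 := by exact_mod_cast this
            have : c ≠ -1 := by
              rintro rfl
              push_cast at s
              exact q2 (by linarith)
            have : c ≤ -2 := by omega
            have : (c : ℝ) ≤ -2 := by exact_mod_cast this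
            linarith
          · have : (c : ℝ) < 1 := by linarith
            have : c < 1 := by exact_mod_cast this
            have : c ≠ 0 := by
              rintro rfl
              push_cast at s
              exact q1 (by linarith)
            have : c ≤ -1 := by omega
            have : (c : ℝ) ≤ -1 := by exact_mod_cast this
            linarith
    refine ⟨p', hp', hp, ?_, ?_⟩
    · rw [(cornerN hik hp' (by omega)).1, (cornerN hik hp' (by omega)).1]
      push_cast
      refine ⟨⟨⟨b, hb, by rw [Zn]⟩, ?_⟩, ?_⟩
      · rintro ⟨b', hb', h⟩
        by_cases hbb : b' = b
        · subst hbb; rw [Zn] at h; simp only [w] at h; linarith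
        · rw [Zo _ _ le_rfl (Or.inl hbb)] at h
          exact o2 b' hb' hbb h
      · rintro ⟨⟨b', hb', h⟩, -⟩
        by_cases hbb : b' = b
        · subst hbb; rw [Zn] at h; simp only [w] at h; linarith
        · rw [Zo _ _ le_rfl (Or.inl hbb)] at h
          exact o1 b' hb' hbb h
    · refine ⟨ph n b n, by omega, Zn, hlen.symm, e2, ?_⟩
      intro s _ hs
      rw [hps0, if_neg hs]

theorem typeB (n : ℕ) (ε : ℝ) (hn : 2 ≤ n) (he0 : 0 < ε) (he1 : ε < 1 / 2) (i : ℕ) (k : ℤ)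
    (hik : (i, k) ∈ XB n)
    (p : List (ℝ × ℝ)) (hp : p ∈ pathsB n ε i k) (j : ℕ) (l : ℤ) (hjl : (j, l) ∈ W (.B n ε)) :
    ((∃ p', LoweredTo (.B n ε) i k j l p' p) ↔
      ((j, l + (rr (.B n ε) j : ℤ)) ∈ Cp (.B n ε) p false ∧
        (j, l - (rr (.B n ε) j : ℤ)) ∉ Cp (.B n ε) p false)) ∧
    (∀ p₁ p₂, LoweredTo (.B n ε) i k j l p₁ p → LoweredTo (.B n ε) i k j l p₂ p → p₁ = p₂) := by
  have hinj : ∀ s t, s < p.length → t < p.length → pt p s = pt p t → s = t := by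
    intro s t hs ht h
    obtain ⟨b, r, hb, hr, rfl⟩ := cover hp s hs
    obtain ⟨b', r', hb', hr', rfl⟩ := cover hp t ht
    obtain ⟨rfl, rfl⟩ := injB hik hp hb hb' hr hr' h
    rfl
  constructor
  · by_cases hj : j = n
    · subst hj
      have hl : l % 2 = 0 := by
        rcases hjl with ⟨-, h⟩ | ⟨-, h, -⟩
        · simp [rr] at h; omega
        · simp at h
      have := caseN hn he0 he1 hik hp hl
      simpa only [LoweredTo, CanLower, rr, if_true, P, Nat.cast_one] using this
    · have hl : 1 ≤ j ∧ j < n ∧ l % 2 = 0 := by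
        rcases hjl with ⟨h, -⟩ | ⟨h, h', h''⟩
        · exact absurd h hj
        · simp [rr, hj] at h h' h''; omega
      obtain ⟨a1, a2, a3⟩ := hl
      by_cases hj' : j = n - 1
      · have := caseE he0 he1 hik hp a1 (by omega) a3
        simp only [LoweredTo, CanLower, rr, if_neg hj, if_pos hj', P, Nat.cast_ofNat]
        exact this
      · have := caseM hik hp a1 (by omega) a3
        simp only [LoweredTo, CanLower, rr, if_neg hj, if_neg hj', P, Nat.cast_ofNat]
        exact this
  · rintro p₁ p₂ ⟨-, -, -, h1⟩ ⟨-, -, -, h2⟩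
    simp only at h1 h2
    split_ifs at h1 h2
    · exact rep1_uniq p p₁ p₂ _ _ hinj h1 h2
    · exact rep2_uniq p p₁ p₂ _ _ _ _ hinj h1 h2
    · exact rep1_uniq p p₁ p₂ _ _ hinj h1 h2


/-- a path `p ∈ 𝒫_{i,k}` can be raised at `(j,ℓ) ∈ W`, i.e. `p = p'𝒜_{j,ℓ}⁻¹`
for some `p' ∈ 𝒫_{i,k}`, iff `(j, ℓ+r_j) ∈ C_{p,-}` and `(j, ℓ-r_j) ∉ C_{p,-}`; moreover
such a `p'`, when it exists, is unique. -/
theorem stmt17 (S : Setting) (hS : S.valid) (i : ℕ) (k : ℤ) (hik : (i, k) ∈ X S)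
    (p : List (ℝ × ℝ)) (hp : p ∈ P S i k) (j : ℕ) (l : ℤ) (hjl : (j, l) ∈ W S) :
    ((∃ p', LoweredTo S i k j l p' p) ↔
      ((j, l + (rr S j : ℤ)) ∈ Cp S p false ∧ (j, l - (rr S j : ℤ)) ∉ Cp S p false)) ∧
    (∀ p₁ p₂, LoweredTo S i k j l p₁ p → LoweredTo S i k j l p₂ p → p₁ = p₂) := by
  cases S with
  | A n => exact typeA n i k p hp j l hjl
  | B n ε => exact typeB n ε hS.1 hS.2.1 hS.2.2 i k hik p hp j l hjl

end Paper
end
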